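/- Let d ↦ n(d) be a function with n(d) → ∞ and d/n(d) → 0 as d → ∞. For each d, let X_1, …, X_{n(d)} be i.i.d. d-dimensional standard normal random vectors N_d(0, I). Let T_d be Tyler's M-estimator of the sample and T*_d = √(n(d)/d)(T_d − I). Then for every fixed integer m ≥ 1, (1/d)·tr((T*_d)^m) converges in probability to the m-th moment ∫ x^m dw(x) of the semicircle law as d → ∞ (which equals 0 for m odd and the Catalan number C_{m/2} for m even). -/

import Mathlib

open MeasureTheory ProbabilityTheory Filter Matrix

/-- The eigenvalues of a real symmetric `d × d` matrix, sorted in increasing order,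
so that `sortedEigs A i` is `λ_{i+1}(A)` with `λ_1(A) ≤ … ≤ λ_d(A)`
(junk value `0` if the matrix is not symmetric). -/
noncomputable def sortedEigs {d : ℕ} (A : Matrix (Fin d) (Fin d) ℝ) : Fin d → ℝ :=
  if h : A.IsHermitian then h.eigenvalues ∘ Tuple.sort h.eigenvalues else 0

/-- The spectral norm `‖A‖₂ = max (|λ_1(A)|, |λ_d(A)|)` of a symmetric matrix,
i.e. the largest absolute value of an eigenvalue. -/
noncomputable def specNorm {d : ℕ} (A : Matrix (Fin d) (Fin d) ℝ) : ℝ :=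
  ⨆ i : Fin d, |sortedEigs A i|

/-- `IsTyler X T` says that `T` is Tyler's M-estimator of the sample
`X : Fin n → (Fin d → ℝ)`: it is symmetric positive definite, normalized by
`tr T = d`, and satisfies Tyler's fixed-point equation
`T = (d/n) ∑_j (X_j X_jᵗ) / (X_jᵗ T⁻¹ X_j)`. -/
def IsTyler {d n : ℕ} (X : Fin n → Fin d → ℝ) (T : Matrix (Fin d) (Fin d) ℝ) : Prop :=
  T.PosDef ∧ T.trace = d ∧
    T = ((d : ℝ) / (n : ℝ)) •
      ∑ j : Fin n, (X j ⬝ᵥ T⁻¹ *ᵥ X j)⁻¹ • vecMulVec (X j) (X j)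

/-- Density of the semicircle law: `(1/(2π))·√(4 − x²)` on `[-2, 2]`, `0` elsewhere. -/
noncomputable def semicircleDensity (x : ℝ) : ℝ :=
  if x ∈ Set.Icc (-2 : ℝ) 2 then Real.sqrt (4 - x ^ 2) / (2 * Real.pi) else 0


/-- quadratic form bound -/
def QB {d : ℕ} (A : Matrix (Fin d) (Fin d) ℝ) (c : ℝ) : Prop :=
  ∀ v : Fin d → ℝ, |v ⬝ᵥ A *ᵥ v| ≤ c * (v ⬝ᵥ v)

lemma dp_self_nonneg {d : ℕ} (v : Fin d → ℝ) : 0 ≤ v ⬝ᵥ v := by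
  simp only [dotProduct]; exact Finset.sum_nonneg fun i _ => mul_self_nonneg _

lemma spec_decomp {d : ℕ} (A : Matrix (Fin d) (Fin d) ℝ) (hA : A.IsHermitian) :
    ∃ U : Matrix (Fin d) (Fin d) ℝ, U * Uᵀ = 1 ∧ Uᵀ * U = 1 ∧
      A = U * diagonal hA.eigenvalues * Uᵀ := by
  refine ⟨(hA.eigenvectorUnitary : Matrix _ _ ℝ), ?_, ?_, ?_⟩
  · have := Unitary.coe_mul_star_self hA.eigenvectorUnitary
    simpa [star_eq_conjTranspose] using this
  · have := Unitary.coe_star_mul_self hA.eigenvectorUnitary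
    simpa [star_eq_conjTranspose] using this
  · have := hA.spectral_theorem
    rw [Unitary.conjStarAlgAut_apply] at this
    simpa [star_eq_conjTranspose, Function.comp_def] using this

lemma dp_UtU {d : ℕ} (U : Matrix (Fin d) (Fin d) ℝ) (h : U * Uᵀ = 1) (v : Fin d → ℝ) :
    (Uᵀ *ᵥ v) ⬝ᵥ (Uᵀ *ᵥ v) = v ⬝ᵥ v := by
  rw [dotProduct_mulVec, vecMul_transpose, mulVec_mulVec, h, one_mulVec]

lemma quad_spec {d : ℕ} (U : Matrix (Fin d) (Fin d) ℝ) (e : Fin d → ℝ) (v : Fin d → ℝ) :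
    v ⬝ᵥ (U * diagonal e * Uᵀ) *ᵥ v = ∑ k, e k * (Uᵀ *ᵥ v) k ^ 2 := by
  rw [← mulVec_mulVec, ← mulVec_mulVec, dotProduct_mulVec, ← mulVec_transpose]
  simp only [dotProduct, mulVec_diagonal]
  exact Finset.sum_congr rfl fun k _ => by ring

lemma dp_spec {d : ℕ} (U : Matrix (Fin d) (Fin d) ℝ) (h : U * Uᵀ = 1) (v : Fin d → ℝ) :
    v ⬝ᵥ v = ∑ k, (Uᵀ *ᵥ v) k ^ 2 := by
  rw [← dp_UtU U h v]; simp only [dotProduct]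
  exact Finset.sum_congr rfl fun k _ => by ring

lemma inv_spec {d : ℕ} (U : Matrix (Fin d) (Fin d) ℝ) (e : Fin d → ℝ) (he : ∀ k, e k ≠ 0)
    (h : U * Uᵀ = 1) (h' : Uᵀ * U = 1) :
    (U * diagonal e * Uᵀ)⁻¹ = U * diagonal (fun k => (e k)⁻¹) * Uᵀ := by
  apply Matrix.inv_eq_right_inv
  calc U * diagonal e * Uᵀ * (U * diagonal (fun k => (e k)⁻¹) * Uᵀ)
      = U * diagonal e * (Uᵀ * U) * diagonal (fun k => (e k)⁻¹) * Uᵀ := by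
        simp only [Matrix.mul_assoc]
    _ = 1 := by
        rw [h', Matrix.mul_one, Matrix.mul_assoc U, diagonal_mul_diagonal]
        simp [he, h]

/-- eigenvector extraction -/
lemma eigvec_spec {d : ℕ} (U : Matrix (Fin d) (Fin d) ℝ) (h' : Uᵀ * U = 1) (k : Fin d) :
    Uᵀ *ᵥ (U *ᵥ Pi.single k 1) = Pi.single k 1 := by
  rw [mulVec_mulVec, h', one_mulVec]

/-- symmetric matrices: a quadratic form bound gives an operator bound -/
lemma QB_op {d : ℕ} (A : Matrix (Fin d) (Fin d) ℝ) (hA : A.IsHermitian) {c : ℝ} (hQ : QB A c)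
    (v : Fin d → ℝ) : (A *ᵥ v) ⬝ᵥ (A *ᵥ v) ≤ c ^ 2 * (v ⬝ᵥ v) := by
  obtain ⟨U, h, h', hs⟩ := spec_decomp A hA
  set e := hA.eigenvalues
  have he : ∀ k, e k ^ 2 ≤ c ^ 2 := by
    intro k
    have := hQ (U *ᵥ Pi.single k 1)
    rw [hs, quad_spec, dp_spec U h, eigvec_spec U h'] at this
    simp [Pi.single_apply] at this
    exact sq_le_sq' (by linarith [neg_abs_le (e k)]) ((le_abs_self _).trans this)
  have hAA : (A *ᵥ v) ⬝ᵥ (A *ᵥ v) = ∑ k, (e k) ^ 2 * (Uᵀ *ᵥ v) k ^ 2 := by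
    have hsq : A * A = U * diagonal (fun k => (e k)^2) * Uᵀ := by
      conv_lhs => rw [hs]
      calc U * diagonal e * Uᵀ * (U * diagonal e * Uᵀ)
          = U * diagonal e * (Uᵀ * U) * diagonal e * Uᵀ := by
            simp only [Matrix.mul_assoc]
        _ = _ := by
            rw [h', Matrix.mul_one, Matrix.mul_assoc U, diagonal_mul_diagonal]
            simp [sq]
    have hAt : Aᵀ = A := by simpa [IsHermitian] using hA
    calc (A *ᵥ v) ⬝ᵥ (A *ᵥ v) = v ⬝ᵥ (A * A) *ᵥ v := by
          rw [dotProduct_mulVec (A *ᵥ v), ← mulVec_transpose, hAt, mulVec_mulVec, dotProduct_comm]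
      _ = _ := by rw [hsq, quad_spec]
  rw [hAA, dp_spec U h, Finset.mul_sum]
  exact Finset.sum_le_sum fun k _ => mul_le_mul_of_nonneg_right (he k) (sq_nonneg _)

lemma quad_one {d : ℕ} (v : Fin d → ℝ) (T : Matrix (Fin d) (Fin d) ℝ) :
    v ⬝ᵥ (T - 1) *ᵥ v = v ⬝ᵥ T *ᵥ v - v ⬝ᵥ v := by
  rw [sub_mulVec, dotProduct_sub, one_mulVec]

set_option maxHeartbeats 1000000 in
lemma tyler_det {d n : ℕ} (u : Fin n → Fin d → ℝ) (hu : ∀ j, u j ⬝ᵥ u j = 1)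
    (T : Matrix (Fin d) (Fin d) ℝ) (hT : IsTyler u T) (z ε : ℝ)
    (hzε : z + 2 * ε ≤ 1 / 2) (hε : 0 ≤ ε) (hz0 : 0 ≤ z)
    (hZ : ∀ v : Fin d → ℝ, |(d : ℝ) / n * ∑ j, (u j ⬝ᵥ v) ^ 2 - v ⬝ᵥ v| ≤ z * (v ⬝ᵥ v))
    (hL : ∀ (E : Matrix (Fin d) (Fin d) ℝ) (δ : ℝ), E.IsHermitian → E.trace = 0 → QB E δ →
      ∀ v : Fin d → ℝ, (d : ℝ) / n * ∑ j, |u j ⬝ᵥ E *ᵥ u j| * (u j ⬝ᵥ v) ^ 2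
        ≤ ε * δ * (v ⬝ᵥ v)) :
    QB (T - 1) (2 * z) ∧
    ∀ v : Fin d → ℝ, |v ⬝ᵥ (T - 1) *ᵥ v - ((d : ℝ) / n * ∑ j, (u j ⬝ᵥ v) ^ 2 - v ⬝ᵥ v)|
      ≤ (2 * ε * z + 8 * z ^ 2) * (v ⬝ᵥ v) := by
  obtain ⟨hpos, htr, hfix⟩ := hT
  rcases Nat.eq_zero_or_pos d with hd | hd
  · subst hd
    have : ∀ v w : Fin 0 → ℝ, v ⬝ᵥ w = 0 := fun v w => by simp [dotProduct]
    refine ⟨fun v => ?_, fun v => ?_⟩ <;> simp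
  obtain ⟨U, h, h', hs⟩ := spec_decomp T hpos.1
  set e := hpos.1.eigenvalues with he_def
  have hepos : ∀ k, 0 < e k := fun k => hpos.eigenvalues_pos k
  obtain ⟨k0, -, hk0⟩ := Finset.exists_max_image Finset.univ (fun k => |e k - 1|) ⟨_, Finset.mem_univ ⟨0, hd⟩⟩
  set δ := |e k0 - 1| with hδ
  have hδ0 : 0 ≤ δ := abs_nonneg _
  have hle : ∀ k, |e k - 1| ≤ δ := fun k => hk0 k (Finset.mem_univ _)
  have hTq : ∀ v, v ⬝ᵥ T *ᵥ v = ∑ k, e k * (Uᵀ *ᵥ v) k ^ 2 := fun v => by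
    conv_lhs => rw [hs]
    exact quad_spec U e v
  have hTi : ∀ v, v ⬝ᵥ T⁻¹ *ᵥ v = ∑ k, (e k)⁻¹ * (Uᵀ *ᵥ v) k ^ 2 := fun v => by
    conv_lhs => rw [hs, inv_spec U e (fun k => (hepos k).ne') h h']
    exact quad_spec U _ v
  have hQB : QB (T - 1) δ := by
    intro v
    rw [quad_one, hTq, dp_spec U h, ← Finset.sum_sub_distrib, Finset.mul_sum]
    refine (Finset.abs_sum_le_sum_abs _ _).trans (Finset.sum_le_sum fun k _ => ?_)
    have : e k * (Uᵀ *ᵥ v) k ^ 2 - (Uᵀ *ᵥ v) k ^ 2 = (e k - 1) * (Uᵀ *ᵥ v) k ^ 2 := by ring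
    rw [this, abs_mul, abs_of_nonneg (sq_nonneg ((Uᵀ *ᵥ v) k))]
    exact mul_le_mul_of_nonneg_right (hle k) (sq_nonneg _)
  have hH : (T - 1).IsHermitian := hpos.1.sub isHermitian_one
  have htr0 : (T - 1).trace = 0 := by simp [htr]
  have hLT := hL (T - 1) δ hH htr0 hQB
  -- y_j
  set y : Fin n → ℝ := fun j => u j ⬝ᵥ (T - 1) *ᵥ u j with hy
  have hyδ : ∀ j, |y j| ≤ δ := fun j => by simpa [hu j] using hQB (u j)
  have hform : ∀ v, v ⬝ᵥ T *ᵥ v = (d : ℝ) / n * ∑ j, (u j ⬝ᵥ T⁻¹ *ᵥ u j)⁻¹ * (u j ⬝ᵥ v) ^ 2 := by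
    intro v
    conv_lhs => rw [hfix]
    rw [smul_mulVec, dotProduct_smul, sum_mulVec, dotProduct_sum, smul_eq_mul]
    congr 1
    refine Finset.sum_congr rfl fun j _ => ?_
    rw [smul_mulVec, dotProduct_smul, vecMulVec_mulVec, smul_eq_mul]
    congr 1
    rw [dotProduct_smul, op_smul_eq_mul, dotProduct_comm v]; ring
  have hipos : ∀ j, 0 < u j ⬝ᵥ T⁻¹ *ᵥ u j := by
    intro j
    have := (hpos.inv).dotProduct_mulVec_pos (x := u j) (by
      intro h0; have := hu j; rw [h0] at this; simp at this)
    simpa using this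
  have hTy : ∀ j, u j ⬝ᵥ T *ᵥ u j = 1 + y j := by
    intro j; simp only [hy]; rw [quad_one, hu j]; ring
  -- upper
  have hup : ∀ j, (u j ⬝ᵥ T⁻¹ *ᵥ u j)⁻¹ ≤ 1 + y j := by
    intro j
    have hTp : 0 < u j ⬝ᵥ T *ᵥ u j := by
      have := hpos.dotProduct_mulVec_pos (x := u j) (by
        intro h0; have := hu j; rw [h0] at this; simp at this)
      simpa using this
    rw [← hTy j]
    set c := (u j ⬝ᵥ T *ᵥ u j)⁻¹ with hc
    have hcp : 0 < c := inv_pos.mpr hTp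
    have hge : c ≤ u j ⬝ᵥ T⁻¹ *ᵥ u j := by
      have h1 : 2 * c * (u j ⬝ᵥ u j) - c ^ 2 * (u j ⬝ᵥ T *ᵥ u j) ≤ u j ⬝ᵥ T⁻¹ *ᵥ u j := by
        rw [hTi, hTq, dp_spec U h, Finset.mul_sum, Finset.mul_sum, ← Finset.sum_sub_distrib]
        refine Finset.sum_le_sum fun k _ => ?_
        have hek := hepos k
        have : (e k)⁻¹ - (2 * c - c ^ 2 * e k) = (e k)⁻¹ * (1 - c * e k) ^ 2 := by
          field_simp; ring
        have h3 : 0 ≤ (e k)⁻¹ * (1 - c * e k) ^ 2 := by positivity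
        nlinarith [sq_nonneg ((Uᵀ *ᵥ u j) k)]
      rw [hu j] at h1
      have : c ^ 2 * (u j ⬝ᵥ T *ᵥ u j) = c := by
        rw [hc]; field_simp
      linarith
    calc (u j ⬝ᵥ T⁻¹ *ᵥ u j)⁻¹ ≤ c⁻¹ := inv_anti₀ hcp hge
      _ = _ := by rw [hc, inv_inv]
  have hdn0 : (0 : ℝ) ≤ (d : ℝ) / n := by positivity
  have hLabs : ∀ v : Fin d → ℝ, |(d : ℝ) / n * ∑ j, y j * (u j ⬝ᵥ v) ^ 2| ≤ ε * δ * (v ⬝ᵥ v) := by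
    intro v
    refine le_trans ?_ (hLT v)
    rw [abs_mul, abs_of_nonneg hdn0]
    refine mul_le_mul_of_nonneg_left ?_ hdn0
    refine (Finset.abs_sum_le_sum_abs _ _).trans (Finset.sum_le_sum fun j _ => ?_)
    rw [abs_mul, abs_of_nonneg (sq_nonneg (u j ⬝ᵥ v))]
  have hsplit : ∀ v : Fin d → ℝ, (d : ℝ) / n * ∑ j, (1 + y j) * (u j ⬝ᵥ v) ^ 2
      = (d : ℝ) / n * ∑ j, (u j ⬝ᵥ v) ^ 2 + (d : ℝ) / n * ∑ j, y j * (u j ⬝ᵥ v) ^ 2 := by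
    intro v; rw [← mul_add, ← Finset.sum_add_distrib]
    congr 1; exact Finset.sum_congr rfl fun j _ => by ring
  have hUP : ∀ v : Fin d → ℝ, v ⬝ᵥ T *ᵥ v ≤
      (d : ℝ) / n * ∑ j, (u j ⬝ᵥ v) ^ 2 + (d : ℝ) / n * ∑ j, y j * (u j ⬝ᵥ v) ^ 2 := by
    intro v
    rw [hform v, ← hsplit]
    exact mul_le_mul_of_nonneg_left (Finset.sum_le_sum fun j _ =>
      mul_le_mul_of_nonneg_right (hup j) (sq_nonneg _)) hdn0
  -- lower
  have hlow : δ < 1 → ∀ j, (1 - δ ^ 2) * (1 + y j) ≤ (u j ⬝ᵥ T⁻¹ *ᵥ u j)⁻¹ := by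
    intro hδ1 j
    have hd2 : 0 < 1 - δ ^ 2 := by nlinarith
    have h1 : (1 - δ ^ 2) * (u j ⬝ᵥ T⁻¹ *ᵥ u j) ≤ 2 * (u j ⬝ᵥ u j) - u j ⬝ᵥ T *ᵥ u j := by
      rw [hTi, hTq, dp_spec U h, Finset.mul_sum, Finset.mul_sum, ← Finset.sum_sub_distrib]
      refine Finset.sum_le_sum fun k _ => ?_
      have hek := hepos k
      have h2 := abs_le.mp (hle k)
      have : (2 - e k) - (1 - δ ^ 2) * (e k)⁻¹ = (e k)⁻¹ * (δ ^ 2 - (e k - 1) ^ 2) := by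
        field_simp; ring
      have h3 : 0 ≤ (e k)⁻¹ * (δ ^ 2 - (e k - 1) ^ 2) := by
        have : 0 ≤ δ ^ 2 - (e k - 1) ^ 2 := by nlinarith
        positivity
      nlinarith [sq_nonneg ((Uᵀ *ᵥ u j) k)]
    rw [hu j, hTy j] at h1
    have hp := hipos j
    rw [le_inv_comm₀ (mul_pos hd2 (by linarith [(abs_le.mp (hyδ j)).1])) hp]
    have hyy := abs_le.mp (hyδ j)
    rw [le_inv_comm₀ hp (mul_pos hd2 (by linarith)), ← one_div, le_div_iff₀ hp]
    have h8 := mul_le_mul_of_nonneg_left h1 (show 0 ≤ 1 + y j by linarith)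
    nlinarith [sq_nonneg (y j)]
  have hLOW : δ < 1 → ∀ v : Fin d → ℝ, (1 - δ ^ 2) *
      ((d : ℝ) / n * ∑ j, (u j ⬝ᵥ v) ^ 2 + (d : ℝ) / n * ∑ j, y j * (u j ⬝ᵥ v) ^ 2)
        ≤ v ⬝ᵥ T *ᵥ v := by
    intro hδ1 v
    rw [hform v, ← hsplit, mul_left_comm]
    refine mul_le_mul_of_nonneg_left ?_ hdn0
    rw [Finset.mul_sum]
    refine Finset.sum_le_sum fun j _ => ?_
    rw [← mul_assoc]
    exact mul_le_mul_of_nonneg_right (hlow hδ1 j) (sq_nonneg _)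
  -- eigenvector
  set v0 := U *ᵥ Pi.single k0 (1 : ℝ) with hv0
  have hv0T : v0 ⬝ᵥ T *ᵥ v0 = e k0 := by
    rw [hTq, hv0, eigvec_spec U h']; simp [Pi.single_apply]
  have hv01 : v0 ⬝ᵥ v0 = 1 := by
    rw [dp_spec U h, hv0, eigvec_spec U h']; simp [Pi.single_apply]
  have hZ0 := abs_le.mp (hZ v0)
  have hL0 := abs_le.mp (hLabs v0)
  rw [hv01] at hZ0 hL0
  have hδz : δ ≤ 2 * z ∧ δ < 1 := by
    rcases le_total 0 (e k0 - 1) with hc | hc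
    · have hδe : e k0 = 1 + δ := by rw [hδ, abs_of_nonneg hc]; ring
      have := hUP v0
      rw [hv0T] at this
      constructor
      · nlinarith
      · nlinarith
    · have hδe : e k0 = 1 - δ := by rw [hδ, abs_of_nonpos hc]; ring
      have hδ1 : δ < 1 := by linarith [hepos k0]
      have := hLOW hδ1 v0
      rw [hv0T, hδe] at this
      have h4 : (1 - δ ^ 2) * (1 - z - ε * δ) ≤ 1 - δ := by
        refine le_trans (mul_le_mul_of_nonneg_left ?_ (by nlinarith)) this
        linarith
      have h5 : (1 + δ) * (1 - z - ε * δ) ≤ 1 := by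
        have : (1 - δ) * ((1 + δ) * (1 - z - ε * δ)) ≤ (1 - δ) * 1 := by nlinarith
        exact le_of_mul_le_mul_left this (by linarith)
      refine ⟨?_, hδ1⟩
      nlinarith [mul_nonneg hε hδ0, mul_nonneg hz0 hδ0]
  obtain ⟨hδz, hδ1⟩ := hδz
  refine ⟨fun v => (hQB v).trans (mul_le_mul_of_nonneg_right hδz (dp_self_nonneg v)), fun v => ?_⟩
  have h1 := hUP v
  have h2 := hLOW hδ1 v
  have h3 := abs_le.mp (hLabs v)
  have h4 := abs_le.mp (hZ v)
  have hv := dp_self_nonneg v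
  rw [quad_one]
  set a := (d : ℝ) / n * ∑ j, (u j ⬝ᵥ v) ^ 2
  set b := (d : ℝ) / n * ∑ j, y j * (u j ⬝ᵥ v) ^ 2
  set q := v ⬝ᵥ v
  have h5 : ε * δ * q ≤ 2 * ε * z * q := by
    have : ε * δ ≤ 2 * ε * z := by nlinarith
    exact mul_le_mul_of_nonneg_right this hv
  have hδ2 : δ ^ 2 ≤ 4 * z ^ 2 := by nlinarith
  have h6 : a + b ≤ 2 * q := by nlinarith [mul_nonneg hε hδ0]
  have h7 : δ ^ 2 * (a + b) ≤ 8 * z ^ 2 * q := by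
    calc δ ^ 2 * (a + b) ≤ δ ^ 2 * (2 * q) := mul_le_mul_of_nonneg_left h6 (sq_nonneg _)
      _ ≤ 4 * z ^ 2 * (2 * q) := mul_le_mul_of_nonneg_right hδ2 (by linarith)
      _ = _ := by ring
  rw [abs_le]
  constructor
  · linarith [h3.1, h3.2]
  · linarith [mul_nonneg (sq_nonneg z) hv, h3.1, h3.2]


lemma integrable_pow_g (a : ℕ) : Integrable (fun x : ℝ => x ^ a) (gaussianReal 0 1) := by
  have h := memLp_id_gaussianReal (μ := 0) (v := 1) (a : NNReal)
  have h2 : MemLp (id : ℝ → ℝ) (a : ENNReal) (gaussianReal 0 1) := by simpa using h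
  have := h2.integrable_norm_pow'
  refine this.mono' (by fun_prop) (ae_of_all _ fun x => ?_)
  simp

lemma integrable_pow_pdf (a : ℕ) :
    Integrable (fun x : ℝ => x ^ a * gaussianPDFReal 0 1 x) := by
  have h := integrable_pow_g a
  rw [gaussianReal_of_var_ne_zero 0 one_ne_zero,
    integrable_withDensity_iff (measurable_gaussianPDF 0 1)
      (ae_of_all _ fun x => gaussianPDF_lt_top)] at h
  simpa [toReal_gaussianPDF] using h

noncomputable def gmom (a : ℕ) : ℝ := ∫ x, x ^ a ∂(gaussianReal 0 1)

lemma gmom_succ (a : ℕ) : gmom (a + 1) = a * gmom (a - 1) := by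
  have hg : ∀ k, gmom k = ∫ x, x ^ k * gaussianPDFReal 0 1 x := fun k => by
    rw [gmom, integral_gaussianReal_eq_integral_smul one_ne_zero]
    simp [mul_comm]
  have hd : ∀ x : ℝ, HasDerivAt (gaussianPDFReal 0 1) (-x * gaussianPDFReal 0 1 x) x := by
    intro x
    unfold gaussianPDFReal
    have h1 : HasDerivAt (fun x : ℝ => -(x - 0) ^ 2 / (2 * ((1 : NNReal) : ℝ))) (-x) x := by
      have := (((hasDerivAt_id x).sub_const (0 : ℝ)).pow 2).neg.div_const (2 * ((1 : NNReal) : ℝ))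
      refine this.congr_deriv ?_
      simp; ring
    refine ((h1.exp).const_mul _).congr_deriv ?_
    ring
  have h0 : ∫ x : ℝ, ((a : ℝ) * x ^ (a - 1) * gaussianPDFReal 0 1 x
      + x ^ a * (-x * gaussianPDFReal 0 1 x)) = 0 := by
    have hi1 : Integrable fun x : ℝ => (a : ℝ) * x ^ (a - 1) * gaussianPDFReal 0 1 x := by
      simpa [mul_assoc] using (integrable_pow_pdf (a - 1)).const_mul (a : ℝ)
    have hi2 : Integrable fun x : ℝ => x ^ a * (-x * gaussianPDFReal 0 1 x) := by
      refine (integrable_pow_pdf (a + 1)).neg.congr (ae_of_all _ fun x => ?_)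
      simp [pow_succ]; ring
    exact integral_eq_zero_of_hasDerivAt_of_integrable
      (f := fun x : ℝ => x ^ a * gaussianPDFReal 0 1 x)
      (fun x => (hasDerivAt_pow a x).mul (hd x)) (hi1.add hi2) (integrable_pow_pdf a)
  have hi1 : Integrable fun x : ℝ => (a : ℝ) * x ^ (a - 1) * gaussianPDFReal 0 1 x := by
    simpa [mul_assoc] using (integrable_pow_pdf (a - 1)).const_mul (a : ℝ)
  have h2 : ∀ x : ℝ, x ^ a * (-x * gaussianPDFReal 0 1 x) = -(x ^ (a + 1) * gaussianPDFReal 0 1 x) :=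
    fun x => by ring
  have hi3 : Integrable fun x : ℝ => -(x ^ (a + 1) * gaussianPDFReal 0 1 x) :=
    (integrable_pow_pdf (a + 1)).neg
  simp_rw [h2] at h0
  rw [integral_add hi1 hi3, integral_neg] at h0
  rw [hg, hg]
  simp_rw [mul_assoc] at h0
  rw [integral_const_mul] at h0
  linarith

/-- standard Gaussian on `ℝ^d` -/
noncomputable abbrev gd (d : ℕ) : Measure (Fin d → ℝ) := Measure.pi fun _ : Fin d => gaussianReal 0 1
/-- law of the sample -/
noncomputable abbrev gnd (n d : ℕ) : Measure (Fin n → Fin d → ℝ) := Measure.pi fun _ : Fin n => gd d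

abbrev PolyR (n d : ℕ) := MvPolynomial (Fin n × Fin d) ℝ

noncomputable def pev {n d : ℕ} (x : Fin n → Fin d → ℝ) : PolyR n d →+* ℝ :=
  MvPolynomial.eval (fun ji => x ji.1 ji.2)

lemma pev_monomial {n d : ℕ} (x : Fin n → Fin d → ℝ) (s : Fin n × Fin d →₀ ℕ) (a : ℝ) :
    pev x (MvPolynomial.monomial s a) = a * ∏ j, ∏ i, x j i ^ s (j, i) := by
  rw [pev, MvPolynomial.eval_monomial, Finsupp.prod_fintype _ _ (by simp),
    Fintype.prod_prod_type]

lemma integrable_pev {n d : ℕ} (p : PolyR n d) : Integrable (fun x => pev x p) (gnd n d) := by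
  induction p using MvPolynomial.induction_on' with
  | monomial s a =>
    simp_rw [pev_monomial]
    refine Integrable.const_mul ?_ a
    refine Integrable.fintype_prod (f := fun j (y : Fin d → ℝ) => ∏ i, y i ^ s (j, i)) fun j => ?_
    exact Integrable.fintype_prod (f := fun i (y : ℝ) => y ^ s (j, i)) fun i => integrable_pow_g _
  | add p q hp hq => simp_rw [map_add]; exact hp.add hq

noncomputable def Ex {n d : ℕ} (p : PolyR n d) : ℝ := ∫ x, pev x p ∂(gnd n d)

lemma Ex_add {n d : ℕ} (p q : PolyR n d) : Ex (p + q) = Ex p + Ex q := by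
  simp_rw [Ex, map_add]; exact integral_add (integrable_pev p) (integrable_pev q)

lemma Ex_smul {n d : ℕ} (c : ℝ) (p : PolyR n d) : Ex (c • p) = c * Ex p := by
  simp_rw [Ex, pev, MvPolynomial.smul_eval]; exact integral_const_mul _ _

noncomputable def ExL (n d : ℕ) : PolyR n d →ₗ[ℝ] ℝ where
  toFun := Ex
  map_add' := Ex_add
  map_smul' c p := by simp [Ex_smul]

lemma ExL_one (n d : ℕ) : ExL n d 1 = 1 := by simp [ExL, Ex]

lemma ExL_monomial {n d : ℕ} (s : Fin n × Fin d →₀ ℕ) (a : ℝ) :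
    ExL n d (MvPolynomial.monomial s a) = a * ∏ k, gmom (s k) := by
  change Ex _ = _
  simp_rw [Ex, pev_monomial]
  rw [integral_const_mul,
    integral_fintype_prod_eq_prod (fun j (y : Fin d → ℝ) => ∏ i, y i ^ s (j, i)),
    Fintype.prod_prod_type]
  congr 1
  refine Finset.prod_congr rfl fun j _ => ?_
  rw [integral_fintype_prod_eq_prod (fun i (y : ℝ) => y ^ s (j, i))]
  rfl

lemma ExL_stein {n d : ℕ} (k : Fin n × Fin d) (p : PolyR n d) :
    ExL n d (MvPolynomial.X k * p) = ExL n d (MvPolynomial.pderiv k p) := by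
  induction p using MvPolynomial.induction_on' with
  | monomial s a =>
    rw [MvPolynomial.pderiv_monomial, MvPolynomial.X, MvPolynomial.monomial_mul, ExL_monomial,
      ExL_monomial, one_mul, mul_assoc]
    congr 1
    rw [← Finset.mul_prod_erase _ _ (Finset.mem_univ k),
      ← Finset.mul_prod_erase Finset.univ (fun i => gmom ((s - Finsupp.single k 1 : Fin n × Fin d →₀ ℕ) i))
        (Finset.mem_univ k), ← mul_assoc]
    congr 1
    · simp [add_comm 1, gmom_succ]
    · refine Finset.prod_congr rfl fun i hi => ?_
      have : k ≠ i := (Finset.ne_of_mem_erase hi).symm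
      simp [this]
  | add p q hp hq => rw [mul_add, map_add, hp, hq, map_add, map_add]


section SD
variable {n d : ℕ}

noncomputable def xv (n d : ℕ) (j : Fin n) : Fin d → PolyR n d := fun i => MvPolynomial.X (j, i)

noncomputable def Wp (n d : ℕ) (α β : ℝ) : Matrix (Fin d) (Fin d) (PolyR n d) :=
  α • ∑ j, vecMulVec (xv n d j) (xv n d j) - β • 1

noncomputable def qf (A : Matrix (Fin d) (Fin d) (PolyR n d)) : PolyR n d :=
  ∑ j, xv n d j ⬝ᵥ A *ᵥ xv n d j

lemma Wp_transpose (α β : ℝ) : (Wp n d α β)ᵀ = Wp n d α β := by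
  simp [Wp, transpose_sum, transpose_vecMulVec]

lemma Wp_pow_transpose (α β : ℝ) (m : ℕ) : ((Wp n d α β) ^ m)ᵀ = Wp n d α β ^ m := by
  rw [transpose_pow, Wp_transpose]

lemma trace_vmv_mul (v : Fin d → PolyR n d) (A : Matrix (Fin d) (Fin d) (PolyR n d)) :
    (vecMulVec v v * A).trace = v ⬝ᵥ A *ᵥ v := by
  rw [vecMulVec_mul, trace_vecMulVec, dotProduct_comm, dotProduct_mulVec]

lemma trace_Wp_mul (α β : ℝ) (A : Matrix (Fin d) (Fin d) (PolyR n d)) :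
    (Wp n d α β * A).trace = α • qf A - β • A.trace := by
  rw [Wp, sub_mul, trace_sub, smul_mul_assoc, smul_mul_assoc, one_mul, trace_smul, trace_smul,
    Finset.sum_mul, trace_sum]
  simp_rw [trace_vmv_mul]; rfl

lemma map_mul_der (D : Derivation ℝ (PolyR n d) (PolyR n d))
    (A B : Matrix (Fin d) (Fin d) (PolyR n d)) :
    (A * B).map D = A.map D * B + A * B.map D := by
  refine Matrix.ext fun i k => ?_
  simp only [Matrix.map_apply, Matrix.mul_apply, Matrix.add_apply, map_sum, Derivation.leibniz,
    smul_eq_mul, Finset.sum_add_distrib]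
  rw [add_comm]
  congr 1
  refine Finset.sum_congr rfl fun _ _ => ?_
  rw [mul_comm]

lemma map_pow_der (D : Derivation ℝ (PolyR n d) (PolyR n d))
    (A : Matrix (Fin d) (Fin d) (PolyR n d)) (m : ℕ) :
    (A ^ m).map D = ∑ p ∈ Finset.range m, A ^ p * A.map D * A ^ (m - 1 - p) := by
  induction m with
  | zero => ext i k : 2; by_cases h : i = k <;> simp [h]
  | succ m ih =>
    rw [pow_succ, map_mul_der, ih, Finset.sum_range_succ, Finset.sum_mul]
    refine congrArg₂ (· + ·) ?_ ?_
    · refine Finset.sum_congr rfl fun p hp => ?_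
      have hp := Finset.mem_range.1 hp
      rw [mul_assoc, ← pow_succ, show m + 1 - 1 - p = m - 1 - p + 1 by omega]
    · simp

lemma map_Wp_der (α β : ℝ) (j : Fin n) (i : Fin d) :
    (Wp n d α β).map (MvPolynomial.pderiv (R := ℝ) (j, i)) =
      α • (vecMulVec (Pi.single i 1) (xv n d j) + vecMulVec (xv n d j) (Pi.single i 1)) := by
  ext a b : 2
  simp only [Wp, Matrix.map_apply, Matrix.sub_apply, Matrix.smul_apply, map_sub, Derivation.map_smul,
    Matrix.sum_apply, map_sum, vecMulVec_apply, Derivation.leibniz, smul_eq_mul, Matrix.add_apply]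
  have h1 : (MvPolynomial.pderiv (R := ℝ) (j, i)) ((1 : Matrix (Fin d) (Fin d) (PolyR n d)) a b) = 0 := by
    by_cases h : a = b
    · subst h; rw [Matrix.one_apply_eq]; exact Derivation.map_one_eq_zero _
    · rw [Matrix.one_apply_ne h, map_zero]
  rw [h1, smul_zero, sub_zero]
  congr 1
  rw [Finset.sum_eq_single j]
  · simp only [xv, MvPolynomial.pderiv_X, Pi.single_apply, Prod.mk.injEq, true_and]
    rw [add_comm, mul_comm]
  · intro j' _ hj
    simp [xv, MvPolynomial.pderiv_X, Pi.single_apply, hj]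
  · simp

lemma der_pow_mulVec (α β : ℝ) (m : ℕ) (j : Fin n) (i : Fin d) :
    MvPolynomial.pderiv (R := ℝ) (j, i) ((Wp n d α β ^ m *ᵥ xv n d j) i) =
      (Wp n d α β ^ m) i i +
      α • ∑ p ∈ Finset.range m,
       ((Wp n d α β ^ p) i i * (xv n d j ⬝ᵥ Wp n d α β ^ (m - 1 - p) *ᵥ xv n d j) +
        (Wp n d α β ^ p *ᵥ xv n d j) i * (Wp n d α β ^ (m - 1 - p) *ᵥ xv n d j) i) := by
  have h1 : MvPolynomial.pderiv (R := ℝ) (j, i) ((Wp n d α β ^ m *ᵥ xv n d j) i) =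
      (Wp n d α β ^ m) i i + ((Wp n d α β ^ m).map (MvPolynomial.pderiv (R := ℝ) (j, i)) *ᵥ xv n d j) i := by
    simp only [mulVec, dotProduct, map_sum, Derivation.leibniz, smul_eq_mul, Finset.sum_add_distrib,
      Matrix.map_apply]
    congr 1
    · simp [xv, MvPolynomial.pderiv_X, Pi.single_apply]
    · exact Finset.sum_congr rfl fun _ _ => mul_comm _ _
  rw [h1, map_pow_der, map_Wp_der, sum_mulVec, Finset.sum_apply, Finset.smul_sum]
  congr 1
  refine Finset.sum_congr rfl fun p _ => ?_
  rw [mul_smul_comm, smul_mul_assoc, smul_mulVec, Pi.smul_apply]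
  congr 1
  rw [mul_add, add_mul, add_mulVec, Pi.add_apply, mul_vecMulVec, mul_vecMulVec, vecMulVec_mul,
    vecMulVec_mul, vecMulVec_mulVec, vecMulVec_mulVec]
  simp only [mulVec_single_one, Pi.smul_apply, single_one_vecMul, op_smul_eq_mul,
    dotProduct_mulVec, Matrix.col_apply]
  congr 2

noncomputable def Gam (α β : ℝ) (m : ℕ) (F : PolyR n d) : PolyR n d :=
  ∑ j, ∑ i, (Wp n d α β ^ m *ᵥ xv n d j) i * MvPolynomial.pderiv (R := ℝ) (j, i) F

lemma Gam_mul (α β : ℝ) (m : ℕ) (F G : PolyR n d) :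
    Gam α β m (F * G) = F * Gam α β m G + G * Gam α β m F := by
  simp only [Gam, Finset.mul_sum, ← Finset.sum_add_distrib, Derivation.leibniz, smul_eq_mul]
  exact Finset.sum_congr rfl fun _ _ => Finset.sum_congr rfl fun _ _ => by ring

lemma Gam_one (α β : ℝ) (m : ℕ) : Gam α β m (1 : PolyR n d) = 0 := by simp [Gam]

lemma Gam_smul (α β c : ℝ) (m : ℕ) (F : PolyR n d) : Gam α β m (c • F) = c • Gam α β m F := by
  simp [Gam, Finset.smul_sum]

lemma pow_dot (α β : ℝ) (p q : ℕ) (j : Fin n) :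
    (Wp n d α β ^ p *ᵥ xv n d j) ⬝ᵥ (Wp n d α β ^ q *ᵥ xv n d j) =
      xv n d j ⬝ᵥ Wp n d α β ^ (p + q) *ᵥ xv n d j := by
  rw [dotProduct_mulVec, ← Matrix.mulVec_transpose, Wp_pow_transpose, mulVec_mulVec, ← pow_add,
    dotProduct_comm, add_comm]

lemma Gam_trace (α β : ℝ) (m a : ℕ) :
    Gam α β m ((Wp n d α β ^ a).trace) = (2 * a * α : ℝ) • qf (Wp n d α β ^ (m + (a - 1))) := by
  have h : ∀ j i, MvPolynomial.pderiv (R := ℝ) (j, i) ((Wp n d α β ^ a).trace) =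
      (2 * a * α : ℝ) • (Wp n d α β ^ (a - 1) *ᵥ xv n d j) i := by
    intro j i
    have h1 : MvPolynomial.pderiv (R := ℝ) (j, i) ((Wp n d α β ^ a).trace) =
       ((Wp n d α β ^ a).map (MvPolynomial.pderiv (R := ℝ) (j, i))).trace := by
      simp [Matrix.trace]
    rw [h1, map_pow_der, trace_sum]
    have h2 : ∀ p ∈ Finset.range a, ((Wp n d α β ^ p * (Wp n d α β).map (MvPolynomial.pderiv (R := ℝ) (j, i)) * Wp n d α β ^ (a - 1 - p)).trace) = (2 * α : ℝ) • (Wp n d α β ^ (a - 1) *ᵥ xv n d j) i := by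
      intro p hp
      have hp := Finset.mem_range.1 hp
      rw [trace_mul_comm, ← mul_assoc, ← pow_add, map_Wp_der, mul_smul_comm, trace_smul, mul_add,
        trace_add, mul_vecMulVec, mul_vecMulVec, trace_vecMulVec, trace_vecMulVec,
        show a - 1 - p + p = a - 1 by omega, dotProduct_single_one, mul_comm, mul_smul]
      congr 1
      have : (Wp n d α β ^ (a - 1) *ᵥ Pi.single i 1) ⬝ᵥ xv n d j = (Wp n d α β ^ (a - 1) *ᵥ xv n d j) i := by
        rw [dotProduct_comm, dotProduct_mulVec, ← Matrix.mulVec_transpose, Wp_pow_transpose,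
          dotProduct_single_one]
      rw [this, two_smul]
    rw [Finset.sum_congr rfl h2, Finset.sum_const, Finset.card_range, ← Nat.cast_smul_eq_nsmul ℝ,
      smul_smul]
    congr 1; ring
  simp only [Gam, h, qf, mul_smul_comm, ← Finset.smul_sum]
  congr 1
  refine Finset.sum_congr rfl fun j _ => ?_
  rw [← pow_dot]; rfl

lemma SD (α β : ℝ) (m : ℕ) (F : PolyR n d) :
    ExL n d (qf (Wp n d α β ^ m) * F) =
     n * ExL n d ((Wp n d α β ^ m).trace * F) +
     α * ∑ p ∈ Finset.range m, (ExL n d (qf (Wp n d α β ^ (m - 1)) * F) +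
        ExL n d ((Wp n d α β ^ p).trace * qf (Wp n d α β ^ (m - 1 - p)) * F))
      + ExL n d (Gam α β m F) := by
  have h1 : qf (Wp n d α β ^ m) * F = ∑ j, ∑ i, MvPolynomial.X (j, i) * ((Wp n d α β ^ m *ᵥ xv n d j) i * F) := by
    simp only [qf, dotProduct, Finset.sum_mul, xv, mul_assoc]
  have h2 : ∑ j, ∑ i, MvPolynomial.pderiv (R := ℝ) (j, i) ((Wp n d α β ^ m *ᵥ xv n d j) i * F) =
     (n : ℝ) • ((Wp n d α β ^ m).trace * F) +
     α • ∑ p ∈ Finset.range m, ((qf (Wp n d α β ^ (m - 1)) * F) +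
        ((Wp n d α β ^ p).trace * qf (Wp n d α β ^ (m - 1 - p)) * F)) + Gam α β m F := by
    simp only [Derivation.leibniz, smul_eq_mul, Finset.sum_add_distrib, der_pow_mulVec]
    rw [add_comm]
    congr 1
    simp only [mul_add, Finset.sum_add_distrib]
    congr 1
    · simp only [← Finset.mul_sum, Matrix.trace, Nat.cast_smul_eq_nsmul, Finset.sum_const, Finset.card_univ, Fintype.card_fin, Matrix.diag]
      rw [mul_comm, smul_mul_assoc]
    · simp only [mul_smul_comm, ← Finset.smul_sum]
      congr 1
      simp only [mul_add, Finset.sum_add_distrib]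
      rw [add_comm]
      congr 1
      · have e1 : ∀ p ∈ Finset.range m, qf (Wp n d α β ^ (m - 1)) * F =
            ∑ j, ∑ i, F * ((Wp n d α β ^ p *ᵥ xv n d j) i * (Wp n d α β ^ (m - 1 - p) *ᵥ xv n d j) i) := by
          intro p hp
          have hp := Finset.mem_range.1 hp
          simp only [qf, Finset.sum_mul]
          refine Finset.sum_congr rfl fun j _ => ?_
          have e2 := pow_dot (d := d) α β p (m - 1 - p) j
          rw [show p + (m - 1 - p) = m - 1 by omega] at e2
          rw [← e2, dotProduct, mul_comm, Finset.mul_sum]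
        rw [Finset.sum_congr rfl e1]
        simp only [Finset.mul_sum]
        symm
        rw [Finset.sum_comm]
        refine Finset.sum_congr rfl fun j _ => ?_
        rw [Finset.sum_comm]
      · have e1 : ∀ p ∈ Finset.range m, (Wp n d α β ^ p).trace * qf (Wp n d α β ^ (m - 1 - p)) * F =
            ∑ j, ∑ i, F * ((Wp n d α β ^ p) i i * (xv n d j ⬝ᵥ Wp n d α β ^ (m - 1 - p) *ᵥ xv n d j)) := by
          intro p hp
          simp only [← Finset.mul_sum, ← Finset.sum_mul]
          rw [mul_comm]; rfl
        rw [Finset.sum_congr rfl e1]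
        simp only [Finset.mul_sum]
        symm
        rw [Finset.sum_comm]
        refine Finset.sum_congr rfl fun j _ => ?_
        rw [Finset.sum_comm]
  have h3 : ExL n d (qf (Wp n d α β ^ m) * F) = ExL n d (∑ j, ∑ i, MvPolynomial.pderiv (R := ℝ) (j, i) ((Wp n d α β ^ m *ᵥ xv n d j) i * F)) := by
    rw [h1]
    simp only [map_sum, ExL_stein]
  rw [h3, h2]
  simp [map_add, map_sum]

end SD


section SD2
variable {n d : ℕ}

noncomputable def tn (n d : ℕ) (α β : ℝ) (k : ℕ) : PolyR n d := (1 / (d : ℝ)) • (Wp n d α β ^ k).trace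

noncomputable def trl (n d : ℕ) (α β : ℝ) (l : List ℕ) : PolyR n d := (l.map (tn n d α β)).prod

lemma trl_cons (α β : ℝ) (a : ℕ) (l : List ℕ) : trl n d α β (a :: l) = tn n d α β a * trl n d α β l := by
  simp [trl]
lemma trl_append (α β : ℝ) (l r : List ℕ) : trl n d α β (l ++ r) = trl n d α β l * trl n d α β r := by
  simp [trl]

lemma tr_eq (hd : (d : ℝ) ≠ 0) (α β : ℝ) (k : ℕ) : (Wp n d α β ^ k).trace = (d : ℝ) • tn n d α β k := by
  rw [tn, smul_smul, mul_one_div_cancel hd, one_smul]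

lemma qf_eq (hd : (d : ℝ) ≠ 0) (α β : ℝ) (k : ℕ) :
    α • qf (Wp n d α β ^ k) = (d : ℝ) • tn n d α β (k + 1) + (β * d) • tn n d α β k := by
  have := trace_Wp_mul α β (Wp n d α β ^ k)
  rw [← pow_succ', tr_eq hd, tr_eq hd] at this
  rw [this, smul_smul]; abel

lemma tn_rec (hd : (d : ℝ) ≠ 0) (α β : ℝ) (h1 : α * n = β) (h2 : α * β * d = 1) (m : ℕ) (F : PolyR n d) :
    ExL n d (tn n d α β (m + 1) * F) =
      ∑ p ∈ Finset.range m, (α * ExL n d (tn n d α β m * F) + 1 / d * ExL n d (tn n d α β (m - 1) * F)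
        + α * d * ExL n d (tn n d α β p * tn n d α β (m - 1 - p + 1) * F)
        + ExL n d (tn n d α β p * tn n d α β (m - 1 - p) * F))
      + α / d * ExL n d (Gam α β m F) := by
  have e0 : (d : ℝ) * ExL n d (tn n d α β (m + 1) * F) = α * ExL n d (qf (Wp n d α β ^ m) * F) -
      β * d * ExL n d (tn n d α β m * F) := by
    have := qf_eq (n := n) hd α β m
    have h3 : ExL n d ((α • qf (Wp n d α β ^ m)) * F) =
      ExL n d (((d : ℝ) • tn n d α β (m + 1) + (β * d) • tn n d α β m) * F) := by rw [this]
    simp only [add_mul, smul_mul_assoc, map_add, map_smul, smul_eq_mul] at h3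
    linarith
  have e1 : ∀ k G, α * ExL n d (qf (Wp n d α β ^ k) * G) = d * ExL n d (tn n d α β (k + 1) * G)
      + β * d * ExL n d (tn n d α β k * G) := by
    intro k G
    have := qf_eq (n := n) hd α β k
    have h3 : ExL n d ((α • qf (Wp n d α β ^ k)) * G) =
      ExL n d (((d : ℝ) • tn n d α β (k + 1) + (β * d) • tn n d α β k) * G) := by rw [this]
    simp only [add_mul, smul_mul_assoc, map_add, map_smul, smul_eq_mul] at h3
    linarith
  rw [SD] at e0
  have e2 : ∀ p ∈ Finset.range m, (ExL n d (qf (Wp n d α β ^ (m - 1)) * F) +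
        ExL n d ((Wp n d α β ^ p).trace * qf (Wp n d α β ^ (m - 1 - p)) * F)) =
        ExL n d (qf (Wp n d α β ^ (m - 1)) * F) +
        d * ExL n d (qf (Wp n d α β ^ (m - 1 - p)) * (tn n d α β p * F)) := by
    intro p _
    rw [tr_eq hd, smul_mul_assoc, smul_mul_assoc, map_smul, smul_eq_mul, mul_assoc,
      mul_left_comm (tn n d α β p)]
  rw [Finset.sum_congr rfl e2, tr_eq hd, smul_mul_assoc, map_smul, smul_eq_mul, mul_add, mul_add,
    Finset.mul_sum] at e0
  have e3 : ∀ p ∈ Finset.range m, α * (ExL n d (qf (Wp n d α β ^ (m - 1)) * F) +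
        d * ExL n d (qf (Wp n d α β ^ (m - 1 - p)) * (tn n d α β p * F))) =
      d * (ExL n d (tn n d α β m * F)) + β * d * ExL n d (tn n d α β (m - 1) * F)
       + d * (d * ExL n d (tn n d α β p * tn n d α β (m - 1 - p + 1) * F)
        + β * d * ExL n d (tn n d α β p * tn n d α β (m - 1 - p) * F)) := by
    intro p hp
    have hp := Finset.mem_range.1 hp
    rw [mul_add, e1, mul_left_comm, e1, show m - 1 + 1 = m by omega]
    simp only [mul_assoc, mul_left_comm (tn n d α β p)]
  rw [Finset.sum_congr rfl e3] at e0
  have hdd : ∀ p ∈ Finset.range m, (α * ExL n d (tn n d α β m * F) + 1 / d * ExL n d (tn n d α β (m - 1) * F)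
        + α * d * ExL n d (tn n d α β p * tn n d α β (m - 1 - p + 1) * F)
        + ExL n d (tn n d α β p * tn n d α β (m - 1 - p) * F)) =
       (α / d) * (d * (ExL n d (tn n d α β m * F)) + β * d * ExL n d (tn n d α β (m - 1) * F)
       + d * (d * ExL n d (tn n d α β p * tn n d α β (m - 1 - p + 1) * F)
        + β * d * ExL n d (tn n d α β p * tn n d α β (m - 1 - p) * F))) := by
    intro p _
    have h3 : 1 / (d : ℝ) = α * β := by field_simp; linarith
    rw [h3]
    have h4 : α / d = α * (α * β) := by rw [← h3]; ring
    rw [h4]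
    linear_combination (- α * ExL n d (tn n d α β m * F) - α * β * ExL n d (tn n d α β (m - 1) * F) - (α * d) * ExL n d (tn n d α β p * tn n d α β (m - 1 - p + 1) * F) - (1 + α * β * d) * ExL n d (tn n d α β p * tn n d α β (m - 1 - p) * F)) * h2
  rw [Finset.sum_congr rfl hdd, ← Finset.mul_sum]
  have h5 : β = n * α := by linarith
  field_simp
  rw [mul_comm]
  rw [e0]
  rw [h5]
  ring

lemma Gam_tn (hd : (d : ℝ) ≠ 0) (α β : ℝ) (h2 : α * β * d = 1) (m a : ℕ) (F : PolyR n d) :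
    α / d * ExL n d (F * Gam α β m (tn n d α β a)) =
      (2 * a / d) * (α * ExL n d (tn n d α β (m + (a - 1) + 1) * F)
        + 1 / d * ExL n d (tn n d α β (m + (a - 1)) * F)) := by
  have h3 : F * Gam α β m (tn n d α β a) = (2 * a / d : ℝ) • ((d : ℝ) • (tn n d α β (m + (a - 1) + 1) * F)
     + (β * d) • (tn n d α β (m + (a - 1)) * F)) := by
    have := qf_eq (n := n) hd α β (m + (a - 1))
    rw [tn, Gam_smul, Gam_trace, mul_smul, this, ← smul_mul_assoc, ← smul_mul_assoc, ← add_mul,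
      mul_comm, smul_smul, smul_mul_assoc]
    congr 1; ring
  rw [h3]
  simp only [map_smul, map_add, smul_eq_mul]
  have h4 : α / d * β * d = 1 / d := by field_simp; linarith
  linear_combination (2 * a / d : ℝ) * ExL n d (tn n d α β (m + (a - 1)) * F) * h4 + (2 * a / d : ℝ) * α * ExL n d (tn n d α β (m + (a - 1) + 1) * F) * (mul_inv_cancel₀ hd)

end SD2

noncomputable def cc (k : ℕ) : ℝ := if Even k then (catalan (k / 2) : ℝ) else 0

lemma cc_succ (m : ℕ) : cc (m + 1) = ∑ p ∈ Finset.range m, cc p * cc (m - 1 - p) := by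
  unfold cc
  rcases Nat.even_or_odd m with h | h
  · rw [if_neg (by simpa [Nat.even_add_one] using h)]
    symm
    refine Finset.sum_eq_zero fun p hp => ?_
    have hp := Finset.mem_range.1 hp
    by_cases h1 : Even p
    · rw [if_neg (c := Even (m - 1 - p)), mul_zero]
      rintro ⟨a, ha⟩; obtain ⟨b, hb⟩ := h1; obtain ⟨c, hc⟩ := h; omega
    · rw [if_neg h1, zero_mul]
  · obtain ⟨k, rfl⟩ := h
    rw [if_pos (by simp [parity_simps])]
    rw [show (2 * k + 1 + 1) / 2 = k + 1 by omega, catalan_succ]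
    push_cast
    rw [← Finset.sum_range (fun i => (catalan i : ℝ) * catalan (k - i))]
    rw [← Finset.sum_filter_add_sum_filter_not (Finset.range (2 * k + 1)) Even]
    rw [Finset.sum_eq_zero (s := Finset.filter (fun x => ¬ Even x) _), add_zero]
    · symm
      refine Finset.sum_nbij' (fun p => p / 2) (fun p => 2 * p) ?_ ?_ ?_ ?_ ?_
      · intro a ha; simp at ha ⊢; omega
      · intro a ha; simp at ha ⊢; omega
      · rintro a ha; simp at ha; obtain ⟨b, hb⟩ := ha.2; omega
      · intro a ha; omega
      · intro a ha; simp at ha; obtain ⟨b, hb⟩ := ha.2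
        rw [if_pos ha.2, if_pos ⟨k - b, by omega⟩]
        congr 3; omega
    · intro p hp; simp only [Finset.mem_filter] at hp; rw [if_neg hp.2, zero_mul]

lemma cc_zero : cc 0 = 1 := by simp [cc]

section lim
variable (n : ℕ → ℕ)

noncomputable def αs (n : ℕ → ℕ) (d : ℕ) : ℝ := 1 / Real.sqrt (n d * d)
noncomputable def βs (n : ℕ → ℕ) (d : ℕ) : ℝ := Real.sqrt (n d / d)
noncomputable def Mom (d : ℕ) (l : List ℕ) : ℝ := ExL (n d) d (trl (n d) d (αs n d) (βs n d) l)

def wt (l : List ℕ) : ℕ := 2 * l.sum + l.length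

variable {n}
lemma αs_n {d : ℕ} (hd : 0 < d) (hn : 0 < n d) : αs n d * n d = βs n d := by
  have h1 : (0 : ℝ) < d := by exact_mod_cast hd
  have h2 : (0 : ℝ) < n d := by exact_mod_cast hn
  rw [αs, βs, Real.sqrt_div h2.le, Real.sqrt_mul h2.le]
  have := Real.sq_sqrt h2.le
  have := Real.sqrt_pos.2 h2
  have := Real.sqrt_pos.2 h1
  field_simp
  linarith
lemma αs_β {d : ℕ} (hd : 0 < d) (hn : 0 < n d) : αs n d * βs n d * d = 1 := by
  have h1 : (0 : ℝ) < d := by exact_mod_cast hd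
  have h2 : (0 : ℝ) < n d := by exact_mod_cast hn
  rw [αs, βs, Real.sqrt_div h2.le, Real.sqrt_mul h2.le]
  have := Real.sq_sqrt h1.le
  have := Real.sqrt_pos.2 h2
  have := Real.sqrt_pos.2 h1
  field_simp
  linarith
lemma αs_d {d : ℕ} (hd : 0 < d) (hn : 0 < n d) : αs n d * d = Real.sqrt (d / n d) := by
  have h1 : (0 : ℝ) < d := by exact_mod_cast hd
  have h2 : (0 : ℝ) < n d := by exact_mod_cast hn
  rw [αs, Real.sqrt_div h1.le, Real.sqrt_mul h2.le]
  have := Real.sq_sqrt h1.le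
  have := Real.sqrt_pos.2 h2
  have := Real.sqrt_pos.2 h1
  field_simp
  linarith

theorem Mom_tendsto (hn : Tendsto n atTop atTop)
    (hdn : Tendsto (fun d : ℕ => (d : ℝ) / (n d : ℝ)) atTop (nhds 0)) (l : List ℕ) :
    Tendsto (fun d => Mom n d l) atTop (nhds (l.map cc).prod) := by
  have hev : ∀ᶠ d in atTop, 0 < d ∧ 0 < n d := (eventually_gt_atTop 0).and (hn.eventually_gt_atTop 0)
  have hρ : Tendsto (fun d => αs n d * d) atTop (nhds 0) := by
    have := hdn.sqrt
    rw [Real.sqrt_zero] at this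
    refine this.congr' ?_
    filter_upwards [hev] with d h
    rw [αs_d h.1 h.2]
  have hinv : Tendsto (fun d : ℕ => 1 / (d : ℝ)) atTop (nhds 0) := tendsto_one_div_atTop_nhds_zero_nat
  have hα : Tendsto (fun d => αs n d) atTop (nhds 0) := by
    have := hρ.mul hinv
    rw [mul_zero] at this
    refine this.congr' ?_
    filter_upwards [hev] with d h
    have : (d : ℝ) ≠ 0 := by exact_mod_cast h.1.ne'
    field_simp
  induction hw : wt l using Nat.strong_induction_on generalizing l with
  | _ w ih =>
  subst hw
  match l with
  | [] => simp [Mom, trl, ExL_one]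
  | 0 :: l =>
    have := ih (wt l) (by simp [wt]) l rfl
    rw [List.map_cons, List.prod_cons, cc_zero, one_mul]
    refine this.congr' ?_
    filter_upwards [hev] with d h
    have : (d : ℝ) ≠ 0 := by exact_mod_cast h.1.ne'
    rw [Mom, Mom, trl_cons]
    have : tn (n d) d (αs n d) (βs n d) 0 = 1 := by
      rw [tn, pow_zero, Matrix.trace_one, Fintype.card_fin]
      have h9 : ((d : ℕ) : PolyR (n d) d) = (d : ℝ) • 1 := by
        rw [Nat.cast_smul_eq_nsmul]; simp
      rw [h9, smul_smul, one_div_mul_cancel this, one_smul]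
    rw [this, one_mul]
  | (m + 1) :: l =>
    have hGam : ∀ l' r : List ℕ, wt l' + wt r ≤ wt l →
        Tendsto (fun d => αs n d / d * ExL (n d) d (trl (n d) d (αs n d) (βs n d) r *
          Gam (αs n d) (βs n d) m (trl (n d) d (αs n d) (βs n d) l'))) atTop (nhds 0) := by
      intro l'
      induction l' with
      | nil => intro r _; simp [trl, Gam_one]
      | cons a l' ih2 =>
        intro r hr
        have h1 := ih2 (a :: r) (by simp [wt] at hr ⊢; omega)
        have h2 := ih (wt ((m + (a - 1) + 1) :: (l' ++ r))) (by simp [wt] at hr ⊢; omega) _ rfl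
        have h3 := ih (wt ((m + (a - 1)) :: (l' ++ r))) (by simp [wt] at hr ⊢; omega) _ rfl
        have h4 := ((hinv.mul_const (2 * (a : ℝ))).mul ((hα.mul h2).add (hinv.mul h3))).add h1
        simp only [zero_mul, add_zero] at h4
        refine h4.congr' ?_
        filter_upwards [hev] with d h
        have hd : (d : ℝ) ≠ 0 := by exact_mod_cast h.1.ne'
        have e1 := Gam_tn hd _ _ (αs_β (n := n) h.1 h.2) m a (trl (n d) d (αs n d) (βs n d) (l' ++ r))
        have e2 : trl (n d) d (αs n d) (βs n d) r *
          Gam (αs n d) (βs n d) m (trl (n d) d (αs n d) (βs n d) (a :: l')) =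
            trl (n d) d (αs n d) (βs n d) (l' ++ r) * Gam (αs n d) (βs n d) m (tn (n d) d (αs n d) (βs n d) a)
            + trl (n d) d (αs n d) (βs n d) (a :: r) *
              Gam (αs n d) (βs n d) m (trl (n d) d (αs n d) (βs n d) l') := by
          rw [trl_cons, Gam_mul, trl_append, trl_cons]; ring
        rw [e2, map_add, mul_add (αs n d / d), e1, ← trl_cons, ← trl_cons]
        congr 1
        simp only [Mom]
        ring
    have hF := hGam l [] (by simp [wt])
    have hm1 := ih (wt (m :: l)) (by simp [wt]) _ rfl
    have hsum : Tendsto (fun d => ∑ p ∈ Finset.range m, (αs n d * Mom n d (m :: l) + 1 / d * Mom n d ((m - 1) :: l)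
        + αs n d * d * Mom n d (p :: (m - 1 - p + 1) :: l) + Mom n d (p :: (m - 1 - p) :: l))) atTop
        (nhds (∑ p ∈ Finset.range m, cc p * (cc (m - 1 - p) * (l.map cc).prod))) := by
      refine tendsto_finsetSum _ fun p hp => ?_
      have hp := Finset.mem_range.1 hp
      have a1 := ih (wt ((m - 1) :: l)) (by simp only [wt, List.sum_cons, List.length_cons]; omega) _ rfl
      have a2 := ih (wt (p :: (m - 1 - p + 1) :: l)) (by simp only [wt, List.sum_cons, List.length_cons]; omega) _ rfl
      have a3 := ih (wt (p :: (m - 1 - p) :: l)) (by simp only [wt, List.sum_cons, List.length_cons]; omega) _ rfl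
      have := (((hα.mul hm1).add (hinv.mul a1)).add (hρ.mul a2)).add a3
      simpa using this
    have := hsum.add hF
    rw [List.map_cons, List.prod_cons, cc_succ, Finset.sum_mul]
    simp only [mul_assoc, add_zero] at this ⊢
    refine this.congr' ?_
    filter_upwards [hev] with d h
    have hd : (d : ℝ) ≠ 0 := by exact_mod_cast h.1.ne'
    simp only [Mom]
    rw [trl_cons _ _ (m + 1), tn_rec hd _ _ (αs_n h.1 h.2) (αs_β h.1 h.2)]
    simp [trl_cons, trl, mul_assoc]

end lim


noncomputable def Wr {n d : ℕ} (α β : ℝ) (x : Fin n → Fin d → ℝ) : Matrix (Fin d) (Fin d) ℝ :=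
  α • ∑ j, vecMulVec (x j) (x j) - β • 1

lemma pev_smul {n d : ℕ} (x : Fin n → Fin d → ℝ) (c : ℝ) (p : PolyR n d) : pev x (c • p) = c * pev x p := by
  simp [pev, MvPolynomial.smul_eval]

lemma Wp_map {n d : ℕ} (α β : ℝ) (x : Fin n → Fin d → ℝ) : (Wp n d α β).map (pev x) = Wr α β x := by
  ext a b
  simp only [Wp, Wr, Matrix.map_apply, Matrix.sub_apply, Matrix.smul_apply, map_sub, pev_smul,
    Matrix.sum_apply, map_sum, vecMulVec_apply, map_mul, smul_eq_mul, Matrix.one_apply]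
  congr 1
  · simp [xv, pev]
  · by_cases h : a = b <;> simp [h]

lemma pev_tn {n d : ℕ} (α β : ℝ) (x : Fin n → Fin d → ℝ) (k : ℕ) :
    pev x (tn n d α β k) = 1 / (d : ℝ) * (Wr α β x ^ k).trace := by
  rw [tn, pev_smul, ← Wp_map, ← RingHom.mapMatrix_apply, ← map_pow, RingHom.mapMatrix_apply]
  simp [Matrix.trace]

theorem G5_tendsto {n : ℕ → ℕ} (hn : Tendsto n atTop atTop)
    (hdn : Tendsto (fun d : ℕ => (d : ℝ) / (n d : ℝ)) atTop (nhds 0)) (k : ℕ) {η : ℝ} (hη : 0 < η) :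
    Tendsto (fun d => (gnd (n d) d).real {x | η ≤ |1 / (d : ℝ) * (Wr (αs n d) (βs n d) x ^ k).trace - cc k|})
      atTop (nhds 0) := by
  have h1 := Mom_tendsto hn hdn [k]
  have h2 := Mom_tendsto hn hdn [k, k]
  have h3 : Tendsto (fun d => (Mom n d [k, k] - 2 * cc k * Mom n d [k] + cc k ^ 2) / η ^ 2) atTop (nhds 0) := by
    have := (((h2.sub (h1.const_mul (2 * cc k))).add_const (cc k ^ 2)).div_const (η ^ 2))
    convert this using 2
    simp; ring_nf
  refine squeeze_zero (fun d => measureReal_nonneg) (fun d => ?_) h3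
  set p : PolyR (n d) d := (tn (n d) d (αs n d) (βs n d) k - MvPolynomial.C (cc k)) ^ 2
  have hp : ∀ x, pev x p = (1 / (d : ℝ) * (Wr (αs n d) (βs n d) x ^ k).trace - cc k) ^ 2 := fun x => by
    rw [map_pow, map_sub, pev_tn]; simp [pev]
  have h4 := mul_meas_ge_le_integral_of_nonneg (μ := gnd (n d) d) (f := fun x => pev x p)
    (ae_of_all _ fun x => by simp only [hp]; positivity) (integrable_pev p) (η ^ 2)
  have h5 : ∫ x, pev x p ∂(gnd (n d) d) = Mom n d [k, k] - 2 * cc k * Mom n d [k] + cc k ^ 2 := by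
    have : p = tn (n d) d (αs n d) (βs n d) k * tn (n d) d (αs n d) (βs n d) k - (2 * cc k) • tn (n d) d (αs n d) (βs n d) k + (cc k ^ 2) • 1 := by
      simp only [p, MvPolynomial.smul_eq_C_mul, map_mul, map_pow]
      have : (MvPolynomial.C 2 : PolyR (n d) d) = 2 := map_ofNat MvPolynomial.C 2
      rw [this]; ring
    have h6 : ∫ x, pev x p ∂(gnd (n d) d) = ExL (n d) d p := rfl
    rw [h6, this, map_add, map_sub, map_smul, map_smul, ExL_one]
    simp [Mom, trl]
  rw [h5] at h4
  rw [le_div_iff₀ (by positivity), mul_comm]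
  refine le_trans (le_of_eq ?_) h4
  congr 2
  ext x
  simp only [Set.mem_ofPred_eq, hp]
  rw [← sq_abs (_ - _), sq_le_sq₀ hη.le (abs_nonneg _)]


lemma exp_sq_pdf (a : ℝ) (x : ℝ) : gaussianPDFReal 0 1 x * Real.exp (a * x ^ 2) =
    (Real.sqrt (2 * Real.pi))⁻¹ * Real.exp (-(1 / 2 - a) * x ^ 2) := by
  rw [gaussianPDFReal, mul_assoc, ← Real.exp_add]
  simp only [NNReal.coe_one, mul_one, sub_zero]
  congr 2
  ring

lemma integrable_exp_sq {a : ℝ} (ha : a < 1 / 2) :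
    Integrable (fun x : ℝ => Real.exp (a * x ^ 2)) (gaussianReal 0 1) := by
  rw [gaussianReal_of_var_ne_zero 0 one_ne_zero,
    integrable_withDensity_iff (measurable_gaussianPDF 0 1)
      (ae_of_all _ fun x => gaussianPDF_lt_top)]
  simp only [toReal_gaussianPDF, mul_comm (Real.exp _), exp_sq_pdf]
  exact (integrable_exp_neg_mul_sq (by linarith)).const_mul _

lemma integral_exp_sq {a : ℝ} (ha : a < 1 / 2) :
    ∫ x : ℝ, Real.exp (a * x ^ 2) ∂(gaussianReal 0 1) = 1 / Real.sqrt (1 - 2 * a) := by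
  rw [integral_gaussianReal_eq_integral_smul one_ne_zero]
  simp only [smul_eq_mul, exp_sq_pdf]
  rw [integral_const_mul, integral_gaussian, ← Real.sqrt_inv, ← Real.sqrt_mul (by positivity)]
  rw [one_div (Real.sqrt _), ← Real.sqrt_inv]
  congr 1
  have : 1 - 2 * a ≠ 0 := by linarith
  have : 1 / 2 - a ≠ 0 := by linarith
  have := Real.pi_pos
  field_simp

lemma gauss_scale {c : ℝ} (hc : 0 < c) : (gaussianReal 0 1).map (c * ·) =
    (gaussianReal 0 1).withDensity (fun x => ENNReal.ofReal (c⁻¹ * Real.exp (-((c ^ 2)⁻¹ - 1) / 2 * x ^ 2))) := by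
  have hv : (NNReal.mk (c ^ 2) (sq_nonneg _) * 1) ≠ 0 := by
    rw [mul_one]; intro h; have := congrArg NNReal.toReal h; simp at this; exact hc.ne' this
  rw [gaussianReal_map_const_mul, gaussianReal_of_var_ne_zero _ hv, gaussianReal_of_var_ne_zero 0 one_ne_zero,
    ← withDensity_mul _ (measurable_gaussianPDF 0 1) (by fun_prop)]
  congr 1
  ext x
  simp only [Pi.mul_apply, gaussianPDF, mul_zero, mul_one]
  rw [← ENNReal.ofReal_mul (gaussianPDFReal_nonneg _ _ _)]
  congr 1
  rw [mul_left_comm, exp_sq_pdf, gaussianPDFReal]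
  simp only [NNReal.coe_mk, sub_zero]
  rw [← mul_assoc, Real.sqrt_mul (by positivity), Real.sqrt_sq hc.le, mul_inv, mul_comm c⁻¹]
  congr 2
  field_simp
  ring

lemma pi_withDensity_aux {ι : Type*} [Fintype ι] (μ : Measure ℝ) [IsProbabilityMeasure μ] (g : ℝ → ENNReal) (hg : Measurable g)
    (h1 : IsProbabilityMeasure (μ.withDensity g)) :
    Measure.pi (fun _ : ι => μ.withDensity g) = (Measure.pi fun _ : ι => μ).withDensity (fun x => ∏ i, g (x i)) := by
  refine Measure.pi_eq fun s hs => ?_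
  rw [withDensity_apply _ (MeasurableSet.univ_pi hs), ← lintegral_indicator (MeasurableSet.univ_pi hs)]
  have h2 : (Set.univ.pi s).indicator (fun x : ι → ℝ => ∏ i, g (x i)) = fun x => ∏ i, (s i).indicator g (x i) := by
    ext x
    by_cases hx : x ∈ Set.univ.pi s
    · rw [Set.indicator_of_mem hx]
      exact Finset.prod_congr rfl fun i _ => (Set.indicator_of_mem (hx i trivial) _).symm
    · rw [Set.indicator_of_notMem hx]
      have : ∃ i, x i ∉ s i := by simpa using hx
      obtain ⟨i, hi⟩ := this
      exact (Finset.prod_eq_zero (Finset.mem_univ i) (Set.indicator_of_notMem hi _)).symm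
  rw [h2, lintegral_prod_eq_prod_lintegral_of_indepFun Finset.univ (fun i (x : ι → ℝ) => (s i).indicator g (x i))
    (iIndepFun_pi (X := fun i => (s i).indicator g) fun i => (hg.indicator (hs i)).aemeasurable)
    (fun i => (hg.indicator (hs i)).comp (measurable_pi_apply i))]
  refine Finset.prod_congr rfl fun i _ => ?_
  rw [withDensity_apply _ (hs i), ← lintegral_indicator (hs i)]
  exact (measurePreserving_eval (fun _ : ι => μ) i).lintegral_comp (hg.indicator (hs i))

lemma gd_scale_integral {d : ℕ} {c : ℝ} (hc : 0 < c) (f : (Fin d → ℝ) → ℝ) (hf : Measurable f) :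
    ∫ x, f (c • x) ∂(gd d) = ∫ x, c⁻¹ ^ d * Real.exp (-((c ^ 2)⁻¹ - 1) / 2 * (x ⬝ᵥ x)) * f x ∂(gd d) := by
  have hm : (gd d).map (fun x => c • x) = Measure.pi fun _ : Fin d => (gaussianReal 0 1).map (c * ·) := by
    have hp : IsProbabilityMeasure ((gaussianReal 0 1).map (c * ·)) :=
      Measure.isProbabilityMeasure_map (by fun_prop)
    exact Measure.pi_map_pi (f := fun (_ : Fin d) (y : ℝ) => c * y) (fun _ => by fun_prop)
  have hp : IsProbabilityMeasure ((gaussianReal 0 1).map (c * ·)) :=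
      Measure.isProbabilityMeasure_map (by fun_prop)
  rw [← integral_map (φ := fun x : Fin d → ℝ => c • x) (by fun_prop) hf.aestronglyMeasurable, hm]
  rw [gauss_scale hc] at hp ⊢
  rw [pi_withDensity_aux _ _ (by fun_prop) hp, integral_withDensity_eq_integral_toReal_smul₀
    (Finset.measurable_fun_prod _ fun i _ => by fun_prop).aemeasurable
    (ae_of_all _ fun x => by exact ENNReal.prod_lt_top fun i _ => ENNReal.ofReal_lt_top)]
  refine integral_congr_ae (ae_of_all _ fun x => ?_)
  simp only [smul_eq_mul]
  congr 1
  rw [ENNReal.toReal_prod]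
  have h9 : ∀ i, (ENNReal.ofReal (c⁻¹ * Real.exp (-((c ^ 2)⁻¹ - 1) / 2 * x i ^ 2))).toReal =
      c⁻¹ * Real.exp (-((c ^ 2)⁻¹ - 1) / 2 * x i ^ 2) := fun i => ENNReal.toReal_ofReal (by positivity)
  simp_rw [h9]
  rw [Finset.prod_mul_distrib, Finset.prod_const, ← Real.exp_sum, ← Finset.mul_sum]
  simp [dotProduct, sq]

lemma integrable_exp_dot {d : ℕ} {a : ℝ} (ha : a < 1 / 2) :
    Integrable (fun x : Fin d → ℝ => Real.exp (a * (x ⬝ᵥ x))) (gd d) := by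
  have : ∀ x : Fin d → ℝ, Real.exp (a * (x ⬝ᵥ x)) = ∏ i, Real.exp (a * x i ^ 2) := fun x => by
    rw [← Real.exp_sum, ← Finset.mul_sum]; simp [dotProduct, sq]
  simp_rw [this]
  exact Integrable.fintype_prod (f := fun _ y => Real.exp (a * y ^ 2)) fun _ => integrable_exp_sq ha

lemma star {d : ℕ} (f : (Fin d → ℝ) → ℝ) (hf : Measurable f) (C : ℝ) (hC : ∀ x, |f x| ≤ C)
    (hs : ∀ (c : ℝ) x, 0 < c → f (c • x) = f x) :
    ∫ x, (x ⬝ᵥ x - d) * f x ∂(gd d) = 0 := by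
  have hC0 : 0 ≤ C := (abs_nonneg _).trans (hC 0)
  have hfi : Integrable f (gd d) := Integrable.of_bound hf.aestronglyMeasurable C (ae_of_all _ hC)
  have hb : Integrable (fun x : Fin d → ℝ => 8 * C * Real.exp (3 / 8 * (x ⬝ᵥ x))) (gd d) :=
    (integrable_exp_dot (by norm_num)).const_mul _
  have hdot : ∀ x : Fin d → ℝ, 0 ≤ x ⬝ᵥ x := fun x => by
    simp only [dotProduct]; exact Finset.sum_nonneg fun i _ => mul_self_nonneg _
  have hmd : Measurable fun x : Fin d → ℝ => x ⬝ᵥ x := by simp only [dotProduct]; fun_prop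
  have key := hasDerivAt_integral_of_dominated_loc_of_deriv_le (μ := gd d) (x₀ := (0 : ℝ))
    (s := Metric.ball 0 (1 / 4)) (F := fun t x => Real.exp (-t * (x ⬝ᵥ x)) * f x)
    (F' := fun t x => -(x ⬝ᵥ x) * Real.exp (-t * (x ⬝ᵥ x)) * f x)
    (bound := fun x => 8 * C * Real.exp (3 / 8 * (x ⬝ᵥ x)))
    (Metric.ball_mem_nhds _ (by norm_num))
    (Eventually.of_forall fun t => by fun_prop) (by simpa using hfi) (by fun_prop)
    (ae_of_all _ fun x t ht => by
      have ht : |t| < 1 / 4 := by simpa using ht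
      rw [norm_mul, norm_mul, norm_neg, Real.norm_eq_abs, Real.norm_eq_abs, Real.norm_eq_abs,
        abs_of_nonneg (hdot x), Real.abs_exp]
      have h1 : x ⬝ᵥ x ≤ 8 * Real.exp (1 / 8 * (x ⬝ᵥ x)) := by
        have := Real.add_one_le_exp (1 / 8 * (x ⬝ᵥ x)); linarith
      have h2 : Real.exp (-t * (x ⬝ᵥ x)) ≤ Real.exp (1 / 4 * (x ⬝ᵥ x)) := by
        apply Real.exp_le_exp.2
        apply mul_le_mul_of_nonneg_right _ (hdot x)
        linarith [neg_abs_le t]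
      have h3 : Real.exp (3 / 8 * (x ⬝ᵥ x)) = Real.exp (1 / 8 * (x ⬝ᵥ x)) * Real.exp (1 / 4 * (x ⬝ᵥ x)) := by
        rw [← Real.exp_add]; congr 1; ring
      rw [h3]
      calc _ ≤ (8 * Real.exp (1 / 8 * (x ⬝ᵥ x))) * Real.exp (1 / 4 * (x ⬝ᵥ x)) * C := by
            gcongr
            exact hC x
        _ = _ := by ring)
    hb
    (ae_of_all _ fun x t _ => by
      have h1 : HasDerivAt (fun t : ℝ => -t * (x ⬝ᵥ x)) (-(x ⬝ᵥ x)) t := by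
        simpa using ((hasDerivAt_id t).neg.mul_const (x ⬝ᵥ x))
      have := (h1.exp).mul_const (f x)
      refine this.congr_deriv ?_
      ring)
  have hφ : ∀ t ∈ Metric.ball (0 : ℝ) (1 / 4), ∫ x, Real.exp (-t * (x ⬝ᵥ x)) * f x ∂(gd d) =
      (Real.sqrt (1 + 2 * t))⁻¹ ^ d * ∫ x, f x ∂(gd d) := by
    intro t ht
    have ht : |t| < 1 / 4 := by simpa using ht
    have hpos : 0 < 1 + 2 * t := by linarith [neg_abs_le t]
    set c : ℝ := (Real.sqrt (1 + 2 * t))⁻¹ with hc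
    have hc0 : 0 < c := by positivity
    have := gd_scale_integral hc0 f hf
    simp_rw [hs c _ hc0] at this
    have h2 : (c ^ 2)⁻¹ = 1 + 2 * t := by
      rw [hc, inv_pow, inv_inv, Real.sq_sqrt hpos.le]
    rw [this, h2, ← integral_const_mul]
    refine integral_congr_ae (ae_of_all _ fun x => ?_)
    simp only
    rw [← mul_assoc, ← mul_assoc, ← mul_pow, mul_inv_cancel₀ hc0.ne', one_pow, one_mul]
    congr 2; ring
  have hd2 : HasDerivAt (fun t : ℝ => (Real.sqrt (1 + 2 * t))⁻¹ ^ d * ∫ x, f x ∂(gd d))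
      (-(d : ℝ) * ∫ x, f x ∂(gd d)) 0 := by
    refine HasDerivAt.mul_const ?_ _
    have h1 : HasDerivAt (fun t : ℝ => 1 + 2 * t) 2 0 := by
      simpa using ((hasDerivAt_id (0 : ℝ)).const_mul 2).const_add 1
    have h2 := ((h1.sqrt (by norm_num)).inv (by simp)).pow d
    refine h2.congr_deriv ?_
    simp
  have h3 := (key.2.congr_of_eventuallyEq (f₁ := fun t : ℝ => (Real.sqrt (1 + 2 * t))⁻¹ ^ d * ∫ x, f x ∂(gd d))
    (by
      filter_upwards [Metric.ball_mem_nhds (0 : ℝ) (show (0 : ℝ) < 1 / 4 by norm_num)] with t ht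
      exact (hφ t ht).symm)).unique hd2
  have h4 := key.1
  simp only [neg_zero, zero_mul, Real.exp_zero, mul_one] at h3 h4
  have h5 : ∀ x, (x ⬝ᵥ x - d) * f x = -(-(x ⬝ᵥ x) * f x) - d * f x := fun x => by ring
  simp_rw [h5]
  have h6 : Integrable (fun x => -(-(x ⬝ᵥ x) * f x)) (gd d) := h4.neg
  rw [integral_sub h6 (hfi.const_mul _), integral_neg, h3, integral_const_mul]
  ring


lemma one_sub_rpow_le {a : ℝ} (ha : |a| ≤ 1 / 4) : 1 / Real.sqrt (1 - 2 * a) ≤ Real.exp (a + 2 * a ^ 2) := by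
  obtain ⟨h1, h2⟩ := abs_le.1 ha
  have hp : 0 < 1 - 2 * a := by linarith
  have key : 1 ≤ (1 - 2 * a) * Real.exp (2 * a + 4 * a ^ 2) := by
    rcases le_total a 0 with h | h
    · have h3 := Real.add_one_le_exp (2 * a + 4 * a ^ 2)
      have h4 : 1 ≤ (1 - 2 * a) * (2 * a + 4 * a ^ 2 + 1) := by nlinarith [sq_nonneg a, mul_nonneg (neg_nonneg.2 h) (sq_nonneg a)]
      exact h4.trans (mul_le_mul_of_nonneg_left h3 hp.le)
    · have h3 := Real.quadratic_le_exp_of_nonneg (show 0 ≤ 2 * a + 4 * a ^ 2 by positivity)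
      have h4 : 1 ≤ (1 - 2 * a) * (1 + (2 * a + 4 * a ^ 2) + (2 * a + 4 * a ^ 2) ^ 2 / 2) := by
        have h5 : 0 ≤ a ^ 2 * (1 - 2 * a) := by positivity
        have h6 : 0 ≤ a ^ 3 * (1 - 2 * a) := by positivity
        have h7 : 0 ≤ a ^ 4 * (1 - 2 * a) := by positivity
        nlinarith
      exact h4.trans (mul_le_mul_of_nonneg_left h3 hp.le)
  rw [div_le_iff₀ (Real.sqrt_pos.2 hp)]
  have e1 : Real.exp (a + 2 * a ^ 2) * Real.sqrt (1 - 2 * a) = Real.sqrt ((1 - 2 * a) * Real.exp (2 * a + 4 * a ^ 2)) := by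
    rw [Real.sqrt_mul hp.le, mul_comm]
    congr 1
    rw [show 2 * a + 4 * a ^ 2 = (a + 2 * a ^ 2) + (a + 2 * a ^ 2) by ring, Real.exp_add (a + 2 * a ^ 2), Real.sqrt_mul_self (Real.exp_pos _).le]
  rw [e1]
  exact Real.one_le_sqrt.2 key

lemma gd_rot {d : ℕ} (U : Matrix (Fin d) (Fin d) ℝ) (h : U * Uᵀ = 1) (h' : Uᵀ * U = 1) :
    (gd d).map (fun x => Uᵀ *ᵥ x) = gd d := by
  let f : EuclideanSpace ℝ (Fin d) ≃ₗᵢ[ℝ] EuclideanSpace ℝ (Fin d) :=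
    { toFun := fun x => WithLp.toLp 2 (Uᵀ *ᵥ x.ofLp)
      invFun := fun x => WithLp.toLp 2 (U *ᵥ x.ofLp)
      map_add' := fun x y => by simp [mulVec_add]
      map_smul' := fun c x => by simp [mulVec_smul]
      left_inv := fun x => by simp [mulVec_mulVec, h]
      right_inv := fun x => by simp [mulVec_mulVec, h']
      norm_map' := fun x => by
        have := dp_UtU U h x.ofLp
        simp only [EuclideanSpace.norm_eq, Real.norm_eq_abs, sq_abs]
        simp only [dotProduct, ← sq] at this
        exact congrArg Real.sqrt this }
  have h1 := stdGaussian_map f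
  rw [← map_pi_eq_stdGaussian, Measure.map_map (by fun_prop) (by fun_prop)] at h1
  have h2 := congrArg (Measure.map (WithLp.ofLp : EuclideanSpace ℝ (Fin d) → (Fin d → ℝ))) h1
  rw [Measure.map_map (by fun_prop) (by fun_prop), Measure.map_map (by fun_prop) (by fun_prop)] at h2
  have e1 : (WithLp.ofLp ∘ f ∘ WithLp.toLp 2) = fun x : Fin d → ℝ => Uᵀ *ᵥ x := rfl
  have e2 : (WithLp.ofLp ∘ WithLp.toLp 2) = (id : (Fin d → ℝ) → _) := rfl
  rw [e1] at h2
  rw [h2, e2, Measure.map_id]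

lemma eig_abs_le {d : ℕ} (A : Matrix (Fin d) (Fin d) ℝ) {c : ℝ} (hQ : QB A c) (U : Matrix (Fin d) (Fin d) ℝ)
    (e : Fin d → ℝ) (h : U * Uᵀ = 1) (h' : Uᵀ * U = 1) (hs : A = U * diagonal e * Uᵀ) (k : Fin d) : |e k| ≤ c := by
  have := hQ (U *ᵥ Pi.single k 1)
  rw [hs, quad_spec, dp_spec U h, eigvec_spec U h'] at this
  simpa [Pi.single_apply] using this

lemma sumsq_spec {d : ℕ} (A : Matrix (Fin d) (Fin d) ℝ) (hA : A.IsHermitian) : ∑ i, ∑ k, A i k ^ 2 = (A * A).trace := by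
  simp only [Matrix.trace, Matrix.diag, Matrix.mul_apply]
  refine Finset.sum_congr rfl fun i _ => Finset.sum_congr rfl fun k _ => ?_
  have := hA.apply i k
  simp at this
  rw [this]; ring

lemma mgf_quad {d : ℕ} (A : Matrix (Fin d) (Fin d) ℝ) (hA : A.IsHermitian) (hQ : QB A (1 / 4)) :
    Integrable (fun x => Real.exp (x ⬝ᵥ A *ᵥ x)) (gd d) ∧
    ∫ x, Real.exp (x ⬝ᵥ A *ᵥ x) ∂(gd d) ≤ Real.exp (A.trace + 2 * ∑ i, ∑ k, A i k ^ 2) := by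
  obtain ⟨U, h, h', hs⟩ := spec_decomp A hA
  set e := hA.eigenvalues
  have he := eig_abs_le A hQ U e h h' hs
  have htr : A.trace = ∑ k, e k := by
    rw [hs, trace_mul_comm, ← mul_assoc, h', one_mul, trace_diagonal]
  have htr2 : ∑ i, ∑ k, A i k ^ 2 = ∑ k, e k ^ 2 := by
    rw [sumsq_spec A hA]
    have : A * A = U * diagonal (fun k => e k * e k) * Uᵀ := by
      rw [← diagonal_mul_diagonal]
      calc A * A = U * diagonal e * (Uᵀ * U) * diagonal e * Uᵀ := by
            conv_lhs => rw [hs]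
            simp only [Matrix.mul_assoc]
        _ = _ := by rw [h', mul_one]; simp only [Matrix.mul_assoc]
    rw [this, trace_mul_comm, ← mul_assoc, h', one_mul, trace_diagonal]
    exact Finset.sum_congr rfl fun k _ => by ring
  let F : (Fin d → ℝ) → ℝ := fun y => ∏ k, Real.exp (e k * y k ^ 2)
  have hF : ∀ x, Real.exp (x ⬝ᵥ A *ᵥ x) = F (Uᵀ *ᵥ x) := fun x => by
    have h3 : x ⬝ᵥ A *ᵥ x = ∑ k, e k * (Uᵀ *ᵥ x) k ^ 2 := by
      conv_lhs => rw [hs]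
      rw [quad_spec]
    rw [h3]
    exact Real.exp_sum _ _
  have hFi : Integrable F (gd d) := Integrable.fintype_prod (f := fun k y => Real.exp (e k * y ^ 2))
    fun k => integrable_exp_sq (by have := (abs_le.1 (he k)).2; linarith)
  have hm : Measurable fun x : Fin d → ℝ => Uᵀ *ᵥ x := by
    refine measurable_pi_lambda _ fun i => ?_
    show Measurable fun x : Fin d → ℝ => ∑ k, Uᵀ i k * x k
    fun_prop
  have hrot := gd_rot U h h'
  have hF' : (fun x => Real.exp (x ⬝ᵥ A *ᵥ x)) = fun x => F (Uᵀ *ᵥ x) := funext hF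
  rw [hF']
  constructor
  · have hFi' := hFi
    rw [← hrot] at hFi'
    exact hFi'.comp_measurable hm
  · rw [← integral_map (φ := fun x => Uᵀ *ᵥ x) (f := F) hm.aemeasurable (by rw [hrot]; exact hFi.aestronglyMeasurable), hrot,
      integral_fintype_prod_eq_prod (fun k (y : ℝ) => Real.exp (e k * y ^ 2)), htr, htr2, Finset.mul_sum, ← Finset.sum_add_distrib,
      Real.exp_sum]
    refine Finset.prod_le_prod (fun k _ => integral_nonneg fun _ => (Real.exp_pos _).le) fun k _ => ?_
    rw [integral_exp_sq (by have := (abs_le.1 (he k)).2; linarith)]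
    exact one_sub_rpow_le (he k)

/-- normalized quadratic form -/
noncomputable def nq {d : ℕ} (A : Matrix (Fin d) (Fin d) ℝ) (x : Fin d → ℝ) : ℝ := (x ⬝ᵥ A *ᵥ x) / (x ⬝ᵥ x)

lemma nq_measurable {d : ℕ} (A : Matrix (Fin d) (Fin d) ℝ) : Measurable (nq A) := by
  unfold nq; simp only [mulVec, dotProduct]; fun_prop

lemma nq_smul {d : ℕ} (A : Matrix (Fin d) (Fin d) ℝ) {c : ℝ} (hc : c ≠ 0) (x : Fin d → ℝ) : nq A (c • x) = nq A x := by
  unfold nq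
  simp only [mulVec_smul, dotProduct_smul, smul_dotProduct, smul_eq_mul]
  rw [mul_div_mul_left _ _ hc, mul_div_mul_left _ _ hc]

lemma nq_abs_le {d : ℕ} (A : Matrix (Fin d) (Fin d) ℝ) {c : ℝ} (hc : 0 ≤ c) (hQ : QB A c) (x : Fin d → ℝ) : |nq A x| ≤ c := by
  unfold nq
  rw [abs_div, abs_of_nonneg (dp_self_nonneg x)]
  exact div_le_of_le_mul₀ (dp_self_nonneg x) hc (hQ x)

lemma nq_mul {d : ℕ} (A : Matrix (Fin d) (Fin d) ℝ) (x : Fin d → ℝ) : (x ⬝ᵥ x) * nq A x = x ⬝ᵥ A *ᵥ x := by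
  unfold nq
  by_cases h : x ⬝ᵥ x = 0
  · have : x = 0 := dotProduct_self_eq_zero.1 h
    simp [this]
  · field_simp

lemma mgf_nq_int {d : ℕ} (A : Matrix (Fin d) (Fin d) ℝ) {c : ℝ} (hQ : QB A c) (hc : 0 ≤ c) (t : ℝ) :
    Integrable (fun x => Real.exp (t * nq A x)) (gd d) := by
  refine Integrable.of_bound (((nq_measurable A).const_mul t).exp).aestronglyMeasurable (Real.exp (|t| * c)) (ae_of_all _ fun x => ?_)
  rw [Real.norm_eq_abs, Real.abs_exp]
  apply Real.exp_le_exp.2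
  refine (le_abs_self _).trans ?_
  rw [abs_mul]
  exact mul_le_mul_of_nonneg_left (nq_abs_le A hc hQ x) (abs_nonneg _)

lemma mgf_nq {d : ℕ} (A : Matrix (Fin d) (Fin d) ℝ) (hA : A.IsHermitian) (hQ : QB A (1 / 4)) :
    ∫ x, Real.exp (d * nq A x) ∂(gd d) ≤ Real.exp (A.trace + 2 * ∑ i, ∑ k, A i k ^ 2) := by
  have hb := nq_abs_le A (by norm_num) hQ
  have hi := mgf_nq_int A hQ (by norm_num) d
  obtain ⟨hi2, h2⟩ := mgf_quad A hA hQ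
  have hst := star (d := d) (fun x => Real.exp (d * nq A x) * nq A x)
    ((((nq_measurable A).const_mul (d : ℝ)).exp).mul (nq_measurable A)) (Real.exp (d * (1 / 4)) * (1 / 4))
    (fun x => by
      rw [abs_mul, Real.abs_exp]
      refine mul_le_mul (Real.exp_le_exp.2 ?_) (hb x) (abs_nonneg _) (Real.exp_pos _).le
      exact mul_le_mul_of_nonneg_left ((le_abs_self _).trans (hb x)) (Nat.cast_nonneg _))
    (fun c x hc => by rw [nq_smul A hc.ne'])
  have hpt : ∀ x, Real.exp (d * nq A x) + (x ⬝ᵥ x - d) * (Real.exp (d * nq A x) * nq A x) ≤ Real.exp (x ⬝ᵥ A *ᵥ x) := by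
    intro x
    rw [← nq_mul A x]
    have h3 := Real.add_one_le_exp ((x ⬝ᵥ x - d) * nq A x)
    have h4 : Real.exp (x ⬝ᵥ x * nq A x) = Real.exp (d * nq A x) * Real.exp ((x ⬝ᵥ x - d) * nq A x) := by
      rw [← Real.exp_add]; congr 1; ring
    rw [h4]
    nlinarith [Real.exp_pos (d * nq A x)]
  have hi3 : Integrable (fun x => (x ⬝ᵥ x - d) * (Real.exp (d * nq A x) * nq A x)) (gd d) := by
    have hx : Integrable (fun x : Fin d → ℝ => x ⬝ᵥ x - d) (gd d) := by
      refine Integrable.sub ?_ (integrable_const _)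
      simp only [dotProduct]
      refine integrable_finsetSum _ fun i _ => ?_
      have := (integrable_pow_g 2)
      have h5 := integrable_comp_eval (μ := fun _ : Fin d => gaussianReal 0 1) (i := i) this
      simpa [sq] using h5
    refine hx.mul_bdd (c := Real.exp (d * (1 / 4)) * (1 / 4)) ((((nq_measurable A).const_mul (d : ℝ)).exp).mul (nq_measurable A)).aestronglyMeasurable (ae_of_all _ fun x => ?_)
    rw [Real.norm_eq_abs, abs_mul, Real.abs_exp]
    refine mul_le_mul (Real.exp_le_exp.2 ?_) (hb x) (abs_nonneg _) (Real.exp_pos _).le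
    exact mul_le_mul_of_nonneg_left ((le_abs_self _).trans (hb x)) (Nat.cast_nonneg _)
  calc ∫ x, Real.exp (d * nq A x) ∂(gd d)
      = ∫ x, Real.exp (d * nq A x) + (x ⬝ᵥ x - d) * (Real.exp (d * nq A x) * nq A x) ∂(gd d) := by
        rw [integral_add hi hi3, hst, add_zero]
    _ ≤ ∫ x, Real.exp (x ⬝ᵥ A *ᵥ x) ∂(gd d) := integral_mono (hi.add hi3) hi2 hpt
    _ ≤ _ := h2

/-- Chernoff bound for sums of i.i.d. -/
lemma chernoff {n d : ℕ} (h : (Fin d → ℝ) → ℝ) (B s : ℝ)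
    (hi : Integrable (fun x => Real.exp (h x)) (gd d)) (hB : ∫ x, Real.exp (h x) ∂(gd d) ≤ Real.exp B) :
    (gnd n d).real {x | n * s ≤ ∑ j, h (x j)} ≤ Real.exp (n * (B - s)) := by
  have h1 : Integrable (fun x : Fin n → Fin d → ℝ => ∏ j, Real.exp (h (x j))) (gnd n d) :=
    Integrable.fintype_prod (f := fun (_ : Fin n) y => Real.exp (h y)) fun _ => hi
  have h2 : ∫ x : Fin n → Fin d → ℝ, ∏ j, Real.exp (h (x j)) ∂(gnd n d) ≤ Real.exp (n * B) := by
    rw [integral_fintype_prod_eq_prod (fun (_ : Fin n) y => Real.exp (h y)), Finset.prod_const, Finset.card_univ,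
      Fintype.card_fin, Real.exp_nat_mul]
    exact pow_le_pow_left₀ (integral_nonneg fun _ => (Real.exp_pos _).le) hB _
  have h3 := mul_meas_ge_le_integral_of_nonneg (μ := gnd n d) (ae_of_all _ fun x => by
    exact Finset.prod_nonneg fun j _ => (Real.exp_pos _).le) h1 (Real.exp (n * s))
  have h4 : {x : Fin n → Fin d → ℝ | n * s ≤ ∑ j, h (x j)} = {x | Real.exp (n * s) ≤ ∏ j, Real.exp (h (x j))} := by
    ext x
    simp only [Set.mem_ofPred_eq]
    rw [← Real.exp_sum, Real.exp_le_exp]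
  rw [h4, mul_sub, Real.exp_sub, le_div_iff₀ (Real.exp_pos _), mul_comm]
  exact h3.trans h2


lemma net_exists (E : Type*) [NormedAddCommGroup E] [NormedSpace ℝ E] [FiniteDimensional ℝ E] :
    ∃ N : Finset E, N.card ≤ 5 ^ Module.finrank ℝ E ∧ (∀ c ∈ N, ‖c‖ ≤ 1) ∧
      ∀ x : E, ‖x‖ ≤ 1 → ∃ c ∈ N, ‖x - c‖ ≤ 1 / 2 := by
  classical
  let S : Finset E → Prop := fun s => (∀ c ∈ s, ‖c‖ ≤ 2) ∧ ∀ c ∈ s, ∀ d ∈ s, c ≠ d → 1 ≤ ‖c - d‖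
  let Q : ℕ → Prop := fun k => ∃ s : Finset E, S s ∧ s.card = k
  have hQ : ∀ k, Q k → k ≤ 5 ^ Module.finrank ℝ E := by
    rintro k ⟨s, hs, rfl⟩
    exact Besicovitch.card_le_of_separated s hs.1 hs.2
  have h0 : Q 0 := ⟨∅, by simp [S], rfl⟩
  have hmax := Nat.findGreatest_spec (P := Q) (Nat.zero_le (5 ^ Module.finrank ℝ E)) h0
  obtain ⟨s, hs, hc⟩ := hmax
  refine ⟨s.image fun c => (1 / 2 : ℝ) • c, Finset.card_image_le.trans (Besicovitch.card_le_of_separated s hs.1 hs.2), ?_, ?_⟩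
  · intro c hc'
    obtain ⟨y, hy, rfl⟩ := Finset.mem_image.1 hc'
    rw [norm_smul]
    have := hs.1 y hy
    norm_num
    linarith
  · intro x hx
    by_contra! hcon
    have hsep : ∀ c ∈ s, 1 ≤ ‖(2 : ℝ) • x - c‖ := by
      intro c hcs
      have h1 := hcon _ (Finset.mem_image_of_mem (fun c => (1 / 2 : ℝ) • c) hcs)
      have h2 : (2 : ℝ) • x - c = (2 : ℝ) • (x - (1 / 2 : ℝ) • c) := by
        rw [smul_sub, smul_smul]; norm_num
      rw [h2, norm_smul]
      norm_num at h1 ⊢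
      linarith
    have hni : (2 : ℝ) • x ∉ s := fun h => by
      have := hsep _ h
      rw [sub_self, norm_zero] at this
      linarith
    have hnew : Q (s.card + 1) := by
      refine ⟨insert ((2 : ℝ) • x) s, ⟨?_, ?_⟩, Finset.card_insert_of_notMem hni⟩
      · intro c hc'
        rcases Finset.mem_insert.1 hc' with rfl | h
        · rw [norm_smul]; norm_num; linarith
        · exact hs.1 c h
      · intro c hc' e he hce
        rcases Finset.mem_insert.1 hc' with rfl | h
        · rcases Finset.mem_insert.1 he with rfl | h2
          · exact absurd rfl hce
          · exact hsep e h2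
        · rcases Finset.mem_insert.1 he with rfl | h2
          · rw [norm_sub_rev]; exact hsep c h
          · exact hs.2 c h e h2 hce
    have := Nat.le_findGreatest (hQ _ hnew) hnew
    omega

def NetV {d : ℕ} (N : Finset (Fin d → ℝ)) : Prop :=
  (∀ v ∈ N, v ⬝ᵥ v ≤ 1) ∧ ∀ v, v ⬝ᵥ v ≤ 1 → ∃ w ∈ N, (v - w) ⬝ᵥ (v - w) ≤ 1 / 4

lemma norm_toLp_sq {d : ℕ} (v : Fin d → ℝ) : ‖WithLp.toLp 2 v‖ ^ 2 = v ⬝ᵥ v := by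
  rw [EuclideanSpace.norm_sq_eq]
  simp [dotProduct, sq]

lemma netV_exists (d : ℕ) : ∃ N : Finset (Fin d → ℝ), N.card ≤ 5 ^ d ∧ NetV N := by
  classical
  obtain ⟨N, h1, h2, h3⟩ := net_exists (EuclideanSpace ℝ (Fin d))
  rw [finrank_euclideanSpace_fin] at h1
  refine ⟨N.image WithLp.ofLp, Finset.card_image_le.trans h1, ?_, ?_⟩
  · intro v hv
    obtain ⟨y, hy, rfl⟩ := Finset.mem_image.1 hv
    rw [← norm_toLp_sq]
    exact pow_le_one₀ (norm_nonneg _) (h2 y hy)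
  · intro v hv
    obtain ⟨c, hc, h⟩ := h3 (WithLp.toLp 2 v) (by
      rw [← norm_toLp_sq] at hv
      exact (sq_le_one_iff₀ (norm_nonneg _)).1 hv)
    refine ⟨c.ofLp, Finset.mem_image_of_mem _ hc, ?_⟩
    rw [← norm_toLp_sq]
    have h5 : WithLp.toLp 2 (v - c.ofLp) = WithLp.toLp 2 v - c := rfl
    rw [h5]
    calc _ ≤ (1 / 2 : ℝ) ^ 2 := pow_le_pow_left₀ (norm_nonneg _) h 2
      _ = _ := by norm_num

def NetM {d : ℕ} (N : Finset (Matrix (Fin d) (Fin d) ℝ)) : Prop :=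
  (∀ E ∈ N, E.IsHermitian ∧ E.trace = 0 ∧ QB E 1) ∧
  ∀ E : Matrix (Fin d) (Fin d) ℝ, E.IsHermitian → E.trace = 0 → QB E 1 → ∃ F ∈ N, QB (E - F) (1 / 2)

section
open scoped Matrix.Norms.L2Operator

lemma QB_of_norm {d : ℕ} (A : Matrix (Fin d) (Fin d) ℝ) {c : ℝ} (h : ‖A‖ ≤ c) : QB A c := by
  intro v
  have h1 := Matrix.l2_opNorm_mulVec A (WithLp.toLp 2 v)
  have h2 := abs_real_inner_le_norm (WithLp.toLp 2 (A *ᵥ v)) (WithLp.toLp 2 v)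
  have h3 : inner ℝ (WithLp.toLp 2 (A *ᵥ v)) (WithLp.toLp 2 v) = v ⬝ᵥ A *ᵥ v := by
    simp [PiLp.inner_apply, dotProduct]
  rw [h3] at h2
  rw [← norm_toLp_sq]
  have h4 : ‖WithLp.toLp 2 (A *ᵥ v)‖ ≤ c * ‖WithLp.toLp 2 v‖ :=
    h1.trans (mul_le_mul_of_nonneg_right h (norm_nonneg _))
  nlinarith [norm_nonneg (WithLp.toLp 2 v)]

lemma norm_of_QB {d : ℕ} (A : Matrix (Fin d) (Fin d) ℝ) (hA : A.IsHermitian) {c : ℝ} (hc : 0 ≤ c) (h : QB A c) : ‖A‖ ≤ c := by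
  rw [Matrix.l2_opNorm_def]
  refine ContinuousLinearMap.opNorm_le_bound _ hc fun x => ?_
  have h1 := QB_op A hA h x.ofLp
  refine abs_le_of_sq_le_sq' ?_ (by positivity) |>.2
  rw [mul_pow]
  have h2 := norm_toLp_sq x.ofLp
  have h3 := norm_toLp_sq (A *ᵥ x.ofLp)
  rw [← h2, ← h3] at h1
  exact h1

lemma netM_exists (d : ℕ) : ∃ N : Finset (Matrix (Fin d) (Fin d) ℝ), N.card ≤ 5 ^ (d * d) ∧ NetM N := by
  classical
  let V : Submodule ℝ (Matrix (Fin d) (Fin d) ℝ) :=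
    { carrier := {E | E.IsHermitian ∧ E.trace = 0}
      add_mem' := fun {a b} ha hb => ⟨ha.1.add hb.1, by rw [trace_add, ha.2, hb.2, add_zero]⟩
      zero_mem' := ⟨isHermitian_zero, trace_zero _ _⟩
      smul_mem' := fun c x hx => ⟨by
        have := hx.1
        unfold IsHermitian at this ⊢
        rw [conjTranspose_smul, this]; simp, by rw [trace_smul, hx.2, smul_zero]⟩ }
  obtain ⟨N, h1, h2, h3⟩ := net_exists V
  have hr : Module.finrank ℝ V ≤ d * d := by
    refine (Submodule.finrank_le V).trans ?_
    rw [Module.finrank_matrix]; simp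
  refine ⟨N.image Subtype.val, Finset.card_image_le.trans (h1.trans (Nat.pow_le_pow_right (by norm_num) hr)), ?_, ?_⟩
  · intro E hE
    obtain ⟨y, hy, rfl⟩ := Finset.mem_image.1 hE
    exact ⟨y.2.1, y.2.2, QB_of_norm _ (h2 y hy)⟩
  · intro E h4 h5 h6
    obtain ⟨c, hc, h⟩ := h3 ⟨E, h4, h5⟩ (norm_of_QB E h4 zero_le_one h6)
    exact ⟨c.1, Finset.mem_image_of_mem _ hc, QB_of_norm _ h⟩
end

lemma net_lin {d : ℕ} {N : Finset (Fin d → ℝ)} (hN : NetV N) (a : Fin d → ℝ) {t : ℝ}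
    (h : ∀ w ∈ N, |a ⬝ᵥ w| ≤ t) (v : Fin d → ℝ) (hv : v ⬝ᵥ v ≤ 1) : |a ⬝ᵥ v| ≤ 2 * t := by
  have cs : ∀ x y : Fin d → ℝ, (x ⬝ᵥ y) ^ 2 ≤ (x ⬝ᵥ x) * (y ⬝ᵥ y) := fun x y => by
    have := Finset.sum_mul_sq_le_sq_mul_sq Finset.univ x y
    simpa [dotProduct, sq] using this
  set r := Real.sqrt (a ⬝ᵥ a)
  have hr : r ^ 2 = a ⬝ᵥ a := Real.sq_sqrt (dp_self_nonneg a)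
  have hr0 : 0 ≤ r := Real.sqrt_nonneg _
  have hr1 : r ≤ 2 * t := by
    rcases hr0.eq_or_lt with h0 | h0
    · obtain ⟨w, hw, -⟩ := hN.2 0 (by simp)
      have := (abs_nonneg _).trans (h w hw)
      linarith
    · obtain ⟨w, hw, h3⟩ := hN.2 (r⁻¹ • a) (by
        simp only [smul_dotProduct, dotProduct_smul, smul_eq_mul, ← hr]
        field_simp; rfl)
      have h4 : a ⬝ᵥ (r⁻¹ • a) = r := by
        rw [dotProduct_smul, ← hr, smul_eq_mul]; field_simp
      have h5 : r = a ⬝ᵥ w + a ⬝ᵥ (r⁻¹ • a - w) := by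
        rw [dotProduct_sub, h4]; ring
      have h6 := cs a (r⁻¹ • a - w)
      rw [← hr] at h6
      have h7 : a ⬝ᵥ (r⁻¹ • a - w) ≤ r / 2 := by
        refine (abs_le_of_sq_le_sq' ?_ (by positivity)).2
        nlinarith [sq_nonneg r]
      have := (le_abs_self _).trans (h w hw)
      linarith
  have h8 := cs a v
  rw [← hr] at h8
  have : |a ⬝ᵥ v| ≤ r := by
    refine abs_le_of_sq_le_sq ?_ hr0
    nlinarith [sq_nonneg r]
  linarith

lemma net_bil {d : ℕ} {N : Finset (Fin d → ℝ)} (hN : NetV N) (A : Matrix (Fin d) (Fin d) ℝ) {t : ℝ}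
    (h : ∀ v ∈ N, ∀ w ∈ N, |v ⬝ᵥ A *ᵥ w| ≤ t) (v : Fin d → ℝ) : |v ⬝ᵥ A *ᵥ v| ≤ 4 * t * (v ⬝ᵥ v) := by
  have h1 : ∀ v w : Fin d → ℝ, v ⬝ᵥ v ≤ 1 → w ⬝ᵥ w ≤ 1 → |v ⬝ᵥ A *ᵥ w| ≤ 4 * t := by
    intro v w hv hw
    have h2 : ∀ v ∈ N, |v ⬝ᵥ A *ᵥ w| ≤ 2 * t := fun v hv => by
      have := net_lin hN (v ᵥ* A) (t := t) (fun w hw => by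
        rw [← dotProduct_mulVec]; exact h v hv w hw) w hw
      rwa [← dotProduct_mulVec] at this
    have := net_lin hN (A *ᵥ w) (t := 2 * t) (fun v hv => by rw [dotProduct_comm]; exact h2 v hv) v hv
    rw [dotProduct_comm] at this
    linarith
  rcases (dp_self_nonneg v).eq_or_lt with h0 | h0
  · have : v = 0 := dotProduct_self_eq_zero.1 h0.symm
    simp [this]
  · set r := Real.sqrt (v ⬝ᵥ v)
    have hr : r ^ 2 = v ⬝ᵥ v := Real.sq_sqrt h0.le
    have hr0 : 0 < r := Real.sqrt_pos.2 h0
    have h3 : (r⁻¹ • v) ⬝ᵥ (r⁻¹ • v) ≤ 1 := by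
      simp only [smul_dotProduct, dotProduct_smul, smul_eq_mul, ← hr]
      field_simp; rfl
    have h4 := h1 _ _ h3 h3
    have h5 : v ⬝ᵥ A *ᵥ v = r ^ 2 * ((r⁻¹ • v) ⬝ᵥ A *ᵥ (r⁻¹ • v)) := by
      simp only [mulVec_smul, smul_dotProduct, dotProduct_smul, smul_eq_mul]
      field_simp
    rw [h5, abs_mul, abs_of_nonneg (sq_nonneg r), ← hr, mul_comm]
    exact mul_le_mul_of_nonneg_right h4 (sq_nonneg r)


def G1 {n d : ℕ} (N : Finset (Fin d → ℝ)) (t : ℝ) (u : Fin n → Fin d → ℝ) : Prop :=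
  ∀ v ∈ N, ∀ w ∈ N, |(d : ℝ) / n * ∑ j, (u j ⬝ᵥ v) * (u j ⬝ᵥ w) - v ⬝ᵥ w| ≤ t

def G2 {n d : ℕ} (N : Finset (Fin d → ℝ)) (K e : ℝ) (u : Fin n → Fin d → ℝ) : Prop :=
  ∀ w ∈ N, 1 / (n : ℝ) * ∑ j, max (d * (u j ⬝ᵥ w) ^ 2 - K) 0 ≤ e

def G3 {n d : ℕ} (M : Finset (Matrix (Fin d) (Fin d) ℝ)) (e : ℝ) (u : Fin n → Fin d → ℝ) : Prop :=
  ∀ E ∈ M, 1 / (n : ℝ) * ∑ j, |u j ⬝ᵥ E *ᵥ u j| ≤ e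

lemma bil_sum {n d : ℕ} (c : Fin n → ℝ) (u : Fin n → Fin d → ℝ) (v w : Fin d → ℝ) :
    v ⬝ᵥ (∑ j, c j • vecMulVec (u j) (u j)) *ᵥ w = ∑ j, c j * ((u j ⬝ᵥ v) * (u j ⬝ᵥ w)) := by
  rw [sum_mulVec, dotProduct_sum]
  refine Finset.sum_congr rfl fun j _ => ?_
  rw [smul_mulVec, vecMulVec_mulVec, dotProduct_smul]
  simp only [op_smul_eq_smul, dotProduct_smul, smul_eq_mul]
  rw [dotProduct_comm v]; ring

lemma hZ_of_G1 {n d : ℕ} {N : Finset (Fin d → ℝ)} (hN : NetV N) {t : ℝ} {u : Fin n → Fin d → ℝ} (h : G1 N t u) (v : Fin d → ℝ) :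
    |(d : ℝ) / n * ∑ j, (u j ⬝ᵥ v) ^ 2 - v ⬝ᵥ v| ≤ 4 * t * (v ⬝ᵥ v) := by
  have key : ∀ v w : Fin d → ℝ, v ⬝ᵥ ((∑ j, ((d : ℝ) / n) • vecMulVec (u j) (u j)) - 1) *ᵥ w =
      (d : ℝ) / n * ∑ j, (u j ⬝ᵥ v) * (u j ⬝ᵥ w) - v ⬝ᵥ w := fun v w => by
    rw [sub_mulVec, dotProduct_sub, bil_sum (fun _ => (d : ℝ) / n), one_mulVec, Finset.mul_sum]
  have := net_bil hN ((∑ j, ((d : ℝ) / n) • vecMulVec (u j) (u j)) - 1) (t := t) (fun v hv w hw => by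
    rw [key]; exact h v hv w hw) v
  rw [key] at this
  simpa [sq] using this

lemma netM_q {n d : ℕ} {M : Finset (Matrix (Fin d) (Fin d) ℝ)} (hM : NetM M) {e : ℝ} {u : Fin n → Fin d → ℝ}
    (hu : ∀ j, u j ⬝ᵥ u j = 1) (h : G3 M e u) (E : Matrix (Fin d) (Fin d) ℝ) (hE : E.IsHermitian) (hE0 : E.trace = 0)
    (hQ : QB E 1) : 1 / (n : ℝ) * ∑ j, |u j ⬝ᵥ E *ᵥ u j| ≤ 2 * e := by
  let q : Matrix (Fin d) (Fin d) ℝ → ℝ := fun E => 1 / (n : ℝ) * ∑ j, |u j ⬝ᵥ E *ᵥ u j|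
  let S : Set ℝ := q '' {E | E.IsHermitian ∧ E.trace = 0 ∧ QB E 1}
  have hq1 : ∀ E, QB E 1 → q E ≤ 1 / n * n := fun E hE => by
    refine mul_le_mul_of_nonneg_left ?_ (by positivity)
    calc ∑ j, |u j ⬝ᵥ E *ᵥ u j| ≤ ∑ j : Fin n, (1 : ℝ) := Finset.sum_le_sum fun j _ => by
          have := hE (u j)
          rwa [hu, mul_one] at this
      _ = n := by simp
  have hbd : BddAbove S := ⟨1 / n * n, by rintro _ ⟨E, hE, rfl⟩; exact hq1 E hE.2.2⟩
  have hadd : ∀ E F, q E ≤ q F + q (E - F) := fun E F => by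
    simp only [q]
    rw [← mul_add, ← Finset.sum_add_distrib]
    refine mul_le_mul_of_nonneg_left (Finset.sum_le_sum fun j _ => ?_) (by positivity)
    have : u j ⬝ᵥ E *ᵥ u j = u j ⬝ᵥ F *ᵥ u j + u j ⬝ᵥ (E - F) *ᵥ u j := by
      rw [sub_mulVec, dotProduct_sub]; ring
    rw [this]; exact abs_add_le _ _
  have hle : ∀ E : Matrix (Fin d) (Fin d) ℝ, E.IsHermitian → E.trace = 0 → QB E 1 → q E ≤ e + sSup S / 2 := by
    intro E h1 h2 h3
    obtain ⟨F, hF, hEF⟩ := hM.2 E h1 h2 h3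
    obtain ⟨hF1, hF2, hF3⟩ := hM.1 F hF
    have h4 : q ((2 : ℝ) • (E - F)) ∈ S := by
      refine ⟨_, ⟨?_, ?_, ?_⟩, rfl⟩
      · have := h1.sub hF1
        unfold IsHermitian at this ⊢
        rw [conjTranspose_smul, this]; simp
      · rw [trace_smul, trace_sub, h2, hF2]; simp
      · intro v
        rw [smul_mulVec, dotProduct_smul, smul_eq_mul, abs_mul]
        have := hEF v
        norm_num
        linarith
    have h5 := le_csSup hbd h4
    have h6 : q ((2 : ℝ) • (E - F)) = 2 * q (E - F) := by
      simp only [q, smul_mulVec, dotProduct_smul, smul_eq_mul, abs_mul]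
      rw [← Finset.mul_sum]; norm_num; ring
    have h7 : q F ≤ e := h F hF
    have h8 := hadd E F
    linarith
  have hsup : sSup S ≤ e + sSup S / 2 := by
    refine csSup_le ⟨_, ⟨E, ⟨hE, hE0, hQ⟩, rfl⟩⟩ ?_
    rintro _ ⟨E, hE, rfl⟩
    exact hle E hE.1 hE.2.1 hE.2.2
  have := hle E hE hE0 hQ
  simp only [q] at this
  linarith

lemma hL_of_G23 {n d : ℕ} {N : Finset (Fin d → ℝ)} (hN : NetV N) {M : Finset (Matrix (Fin d) (Fin d) ℝ)} (hM : NetM M)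
    {K e1 e2 : ℝ} (hK : 0 ≤ K) {u : Fin n → Fin d → ℝ} (hu : ∀ j, u j ⬝ᵥ u j = 1) (h2 : G2 N K e2 u) (h3 : G3 M e1 u)
    (E : Matrix (Fin d) (Fin d) ℝ) (δ : ℝ) (hE : E.IsHermitian) (hE0 : E.trace = 0) (hQ : QB E δ) (v : Fin d → ℝ) :
    (d : ℝ) / n * ∑ j, |u j ⬝ᵥ E *ᵥ u j| * (u j ⬝ᵥ v) ^ 2 ≤ 4 * (2 * K * e1 + e2) * δ * (v ⬝ᵥ v) := by
  rcases le_or_gt δ 0 with hδ | hδ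
  · have h4 : ∀ j, |u j ⬝ᵥ E *ᵥ u j| = 0 := fun j => by
      have := hQ (u j)
      rw [hu, mul_one] at this
      exact le_antisymm (this.trans hδ) (abs_nonneg _)
    have h5 : δ * (v ⬝ᵥ v) = 0 := by
      have := (abs_nonneg _).trans (hQ v)
      exact le_antisymm (mul_nonpos_of_nonpos_of_nonneg hδ (dp_self_nonneg v)) this
    simp only [h4, zero_mul, Finset.sum_const_zero, mul_zero]
    rw [mul_assoc, h5, mul_zero]
  · set F := δ⁻¹ • E
    have hF : F.IsHermitian := by
      unfold IsHermitian at hE ⊢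
      rw [conjTranspose_smul, hE]; simp [F]
    have hF0 : F.trace = 0 := by rw [trace_smul, hE0, smul_zero]
    have hFE : ∀ v : Fin d → ℝ, |v ⬝ᵥ F *ᵥ v| = δ⁻¹ * |v ⬝ᵥ E *ᵥ v| := fun v => by
      rw [smul_mulVec, dotProduct_smul, smul_eq_mul, abs_mul, abs_of_pos (inv_pos.2 hδ)]
    have hFQ : QB F 1 := fun v => by
      rw [hFE, one_mul, inv_mul_le_iff₀ hδ]; exact hQ v
    have hq := netM_q hM hu h3 F hF hF0 hFQ
    set c : Fin n → ℝ := fun j => |u j ⬝ᵥ F *ᵥ u j|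
    have hc0 : ∀ j, 0 ≤ c j := fun j => abs_nonneg _
    have hc1 : ∀ j, c j ≤ 1 := fun j => by
      have := hFQ (u j)
      rwa [hu, mul_one] at this
    have hdiag : ∀ w ∈ N, (d : ℝ) / n * ∑ j, c j * (u j ⬝ᵥ w) ^ 2 ≤ 2 * K * e1 + e2 := fun w hw => by
      have h5 := h2 w hw
      calc (d : ℝ) / n * ∑ j, c j * (u j ⬝ᵥ w) ^ 2
          = 1 / (n : ℝ) * ∑ j, c j * (d * (u j ⬝ᵥ w) ^ 2) := by
            rw [Finset.mul_sum, Finset.mul_sum]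
            exact Finset.sum_congr rfl fun j _ => by ring
        _ ≤ 1 / (n : ℝ) * ∑ j, (K * c j + max (d * (u j ⬝ᵥ w) ^ 2 - K) 0) := by
            refine mul_le_mul_of_nonneg_left (Finset.sum_le_sum fun j _ => ?_) (by positivity)
            have h6 : d * (u j ⬝ᵥ w) ^ 2 ≤ K + max (d * (u j ⬝ᵥ w) ^ 2 - K) 0 := by
              have := le_max_left (d * (u j ⬝ᵥ w) ^ 2 - K) 0
              linarith
            have h7 := le_max_right (d * (u j ⬝ᵥ w) ^ 2 - K) 0
            calc c j * (d * (u j ⬝ᵥ w) ^ 2) ≤ c j * (K + max (d * (u j ⬝ᵥ w) ^ 2 - K) 0) := mul_le_mul_of_nonneg_left h6 (hc0 j)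
              _ = K * c j + c j * max (d * (u j ⬝ᵥ w) ^ 2 - K) 0 := by ring
              _ ≤ _ := by
                have := mul_le_mul_of_nonneg_right (hc1 j) h7
                linarith
        _ = K * (1 / (n : ℝ) * ∑ j, c j) + 1 / (n : ℝ) * ∑ j, max (d * (u j ⬝ᵥ w) ^ 2 - K) 0 := by
            rw [Finset.sum_add_distrib, ← Finset.mul_sum]; ring
        _ ≤ _ := by
            have := mul_le_mul_of_nonneg_left hq hK
            linarith
    have key := net_bil hN (∑ j, ((d : ℝ) / n * c j) • vecMulVec (u j) (u j)) (t := 2 * K * e1 + e2) (fun v hv w hw => by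
      rw [bil_sum (fun j => (d : ℝ) / n * c j)]
      refine (Finset.abs_sum_le_sum_abs _ _).trans ?_
      have h8 := hdiag v hv
      have h9 := hdiag w hw
      have h10 : ∑ j, |(d : ℝ) / n * c j * ((u j ⬝ᵥ v) * (u j ⬝ᵥ w))| ≤
          ((d : ℝ) / n * ∑ j, c j * (u j ⬝ᵥ v) ^ 2 + (d : ℝ) / n * ∑ j, c j * (u j ⬝ᵥ w) ^ 2) / 2 := by
        rw [← mul_add, ← Finset.sum_add_distrib, Finset.mul_sum, Finset.sum_div]
        refine Finset.sum_le_sum fun j _ => ?_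
        have h11 : 0 ≤ (d : ℝ) / n * c j := mul_nonneg (by positivity) (hc0 j)
        rw [abs_mul, abs_of_nonneg h11, abs_mul]
        have h12 := two_mul_le_add_sq |u j ⬝ᵥ v| |u j ⬝ᵥ w|
        rw [sq_abs, sq_abs] at h12
        have h13 := mul_le_mul_of_nonneg_left h12 h11
        linarith
      linarith) v
    have key2 := (le_abs_self _).trans key
    rw [bil_sum (fun j => (d : ℝ) / n * c j)] at key2
    have h14 : (d : ℝ) / n * ∑ j, |u j ⬝ᵥ E *ᵥ u j| * (u j ⬝ᵥ v) ^ 2 =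
        δ * ∑ j, (d : ℝ) / n * c j * ((u j ⬝ᵥ v) * (u j ⬝ᵥ v)) := by
      rw [Finset.mul_sum, Finset.mul_sum]
      refine Finset.sum_congr rfl fun j _ => ?_
      simp only [c]
      rw [hFE]
      field_simp
    rw [h14]
    have := mul_le_mul_of_nonneg_left key2 hδ.le
    linarith


noncomputable def nrm {d : ℕ} (x : Fin d → ℝ) : Fin d → ℝ := (Real.sqrt (x ⬝ᵥ x))⁻¹ • x

lemma nrm_mul {d : ℕ} (x v w : Fin d → ℝ) : (nrm x ⬝ᵥ v) * (nrm x ⬝ᵥ w) = (x ⬝ᵥ v) * (x ⬝ᵥ w) / (x ⬝ᵥ x) := by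
  unfold nrm
  simp only [smul_dotProduct, smul_eq_mul]
  have h := Real.sq_sqrt (dp_self_nonneg x)
  calc _ = (x ⬝ᵥ v) * (x ⬝ᵥ w) * (Real.sqrt (x ⬝ᵥ x) ^ 2)⁻¹ := by ring
    _ = _ := by rw [h]; rfl

lemma nrm_quad {d : ℕ} (A : Matrix (Fin d) (Fin d) ℝ) (x : Fin d → ℝ) : nrm x ⬝ᵥ A *ᵥ nrm x = nq A x := by
  unfold nrm nq
  simp only [smul_dotProduct, mulVec_smul, dotProduct_smul, smul_eq_mul]
  have h := Real.sq_sqrt (dp_self_nonneg x)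
  calc _ = (x ⬝ᵥ A *ᵥ x) * (Real.sqrt (x ⬝ᵥ x) ^ 2)⁻¹ := by ring
    _ = _ := by rw [h]; rfl

lemma dp_cs {d : ℕ} (x y : Fin d → ℝ) : (x ⬝ᵥ y) ^ 2 ≤ (x ⬝ᵥ x) * (y ⬝ᵥ y) := by
  have := Finset.sum_mul_sq_le_sq_mul_sq Finset.univ x y
  simpa [dotProduct, sq] using this

/-- symmetrised rank-one matrix -/
noncomputable def symM {d : ℕ} (l : ℝ) (v w : Fin d → ℝ) : Matrix (Fin d) (Fin d) ℝ :=
  Matrix.of fun i k => l / 2 * (v i * w k + w i * v k)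

lemma symM_herm {d : ℕ} (l : ℝ) (v w : Fin d → ℝ) : (symM l v w).IsHermitian := by
  ext i k; simp [symM]; ring_nf; simp

lemma symM_eq {d : ℕ} (l : ℝ) (v w : Fin d → ℝ) : symM l v w = (l / 2) • (vecMulVec v w + vecMulVec w v) := by
  ext i k; simp [symM, vecMulVec_apply]

lemma symM_quad {d : ℕ} (l : ℝ) (v w x : Fin d → ℝ) : x ⬝ᵥ symM l v w *ᵥ x = l * ((x ⬝ᵥ v) * (x ⬝ᵥ w)) := by
  rw [symM_eq, smul_mulVec, add_mulVec, dotProduct_smul, dotProduct_add, vecMulVec_mulVec, vecMulVec_mulVec]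
  simp only [op_smul_eq_smul, dotProduct_smul, smul_eq_mul]
  rw [dotProduct_comm w x, dotProduct_comm v x]; ring

lemma symM_trace {d : ℕ} (l : ℝ) (v w : Fin d → ℝ) : (symM l v w).trace = l * (v ⬝ᵥ w) := by
  simp only [Matrix.trace, symM, diag_apply, of_apply, dotProduct, Finset.mul_sum]
  exact Finset.sum_congr rfl fun i _ => by ring

lemma symM_sq {d : ℕ} (l : ℝ) (v w : Fin d → ℝ) (hv : v ⬝ᵥ v ≤ 1) (hw : w ⬝ᵥ w ≤ 1) :
    ∑ i, ∑ k, symM l v w i k ^ 2 ≤ l ^ 2 := by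
  have h1 : ∑ i, ∑ k, symM l v w i k ^ 2 ≤ ∑ i, ∑ k, l ^ 2 / 2 * (v i * v i * (w k * w k) + w i * w i * (v k * v k)) := by
    refine Finset.sum_le_sum fun i _ => Finset.sum_le_sum fun k _ => ?_
    simp only [symM, of_apply]
    nlinarith [mul_nonneg (sq_nonneg l) (sq_nonneg (v i * w k - w i * v k))]
  have h2 : ∑ i, ∑ k, l ^ 2 / 2 * (v i * v i * (w k * w k) + w i * w i * (v k * v k)) = l ^ 2 * ((v ⬝ᵥ v) * (w ⬝ᵥ w)) := by
    simp only [← Finset.mul_sum, Finset.sum_add_distrib]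
    simp only [← Finset.sum_mul, dotProduct]
    ring
  rw [h2] at h1
  refine h1.trans ?_
  have := mul_le_one₀ hv (dp_self_nonneg w) hw
  nlinarith [sq_nonneg l]

lemma symM_QB {d : ℕ} {l : ℝ} (hl : 0 ≤ l) (v w : Fin d → ℝ) (hv : v ⬝ᵥ v ≤ 1) (hw : w ⬝ᵥ w ≤ 1) : QB (symM l v w) l := by
  intro x
  rw [symM_quad, abs_mul, abs_of_nonneg hl]
  refine mul_le_mul_of_nonneg_left ?_ hl
  have h1 := dp_cs x v
  have h2 := dp_cs x w
  refine abs_le_of_sq_le_sq ?_ (dp_self_nonneg x)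
  have h0 := dp_self_nonneg x
  have h3 : (x ⬝ᵥ v) ^ 2 ≤ x ⬝ᵥ x := h1.trans (by nlinarith)
  have h4 : (x ⬝ᵥ w) ^ 2 ≤ x ⬝ᵥ x := h2.trans (by nlinarith)
  rw [mul_pow]
  calc _ ≤ (x ⬝ᵥ x) * (x ⬝ᵥ x) := mul_le_mul h3 h4 (sq_nonneg _) h0
    _ = _ := by ring

lemma symM_nq {d : ℕ} (l : ℝ) (v w x : Fin d → ℝ) : nq (symM l v w) x = l * ((nrm x ⬝ᵥ v) * (nrm x ⬝ᵥ w)) := by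
  rw [nrm_mul, nq, symM_quad]; ring

lemma QB_mono {d : ℕ} {A : Matrix (Fin d) (Fin d) ℝ} {c c' : ℝ} (h : QB A c) (hc : c ≤ c') : QB A c' := fun v =>
  (h v).trans (mul_le_mul_of_nonneg_right hc (dp_self_nonneg v))

lemma QB_smul {d : ℕ} {A : Matrix (Fin d) (Fin d) ℝ} {c : ℝ} (h : QB A c) (s : ℝ) : QB (s • A) (|s| * c) := fun v => by
  rw [smul_mulVec, dotProduct_smul, smul_eq_mul, abs_mul, mul_assoc]
  exact mul_le_mul_of_nonneg_left (h v) (abs_nonneg _)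

lemma p1 {n d : ℕ} (v w : Fin d → ℝ) (hv : v ⬝ᵥ v ≤ 1) (hw : w ⬝ᵥ w ≤ 1) {t : ℝ} (ht : 0 < t) (ht1 : t ≤ 1) :
    (gnd n d).real {x | n * (v ⬝ᵥ w + t) ≤ ∑ j, d * ((nrm (x j) ⬝ᵥ v) * (nrm (x j) ⬝ᵥ w))} ≤ Real.exp (-(n * t ^ 2 / 8)) := by
  have hl : 0 ≤ t / 4 := by positivity
  have hQ := QB_mono (symM_QB hl v w hv hw) (show t / 4 ≤ 1 / 4 by linarith)
  have h1 := mgf_nq _ (symM_herm (t / 4) v w) hQ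
  have h2 := mgf_nq_int _ hQ (by norm_num) d
  have h3 := chernoff (n := n) (fun x => d * nq (symM (t / 4) v w) x) (t / 4 * (v ⬝ᵥ w) + 2 * (t / 4) ^ 2) (t / 4 * (v ⬝ᵥ w + t)) h2
    (h1.trans (Real.exp_le_exp.2 (by
      have := symM_sq (t / 4) v w hv hw
      rw [symM_trace]; linarith)))
  have h4 : (n : ℝ) * (t / 4 * (v ⬝ᵥ w) + 2 * (t / 4) ^ 2 - t / 4 * (v ⬝ᵥ w + t)) = -(n * t ^ 2 / 8) := by ring
  rw [h4] at h3
  refine le_trans (measureReal_mono ?_) h3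
  intro x hx
  simp only [Set.mem_ofPred_eq] at hx ⊢
  have := mul_le_mul_of_nonneg_left hx hl
  rw [Finset.mul_sum] at this
  calc _ = t / 4 * (n * (v ⬝ᵥ w + t)) := by ring
    _ ≤ _ := this
    _ = _ := Finset.sum_congr rfl fun j _ => by rw [symM_nq]; ring

lemma P1 {n d : ℕ} (hn : 0 < n) {N : Finset (Fin d → ℝ)} (hN : ∀ v ∈ N, v ⬝ᵥ v ≤ 1) {t : ℝ} (ht : 0 < t) (ht1 : t ≤ 1) :
    (gnd n d).real {x | ¬ G1 N t (fun j => nrm (x j))} ≤ (N.card * N.card : ℝ) * (2 * Real.exp (-(n * t ^ 2 / 8))) := by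
  have hn' : (0 : ℝ) < n := by exact_mod_cast hn
  let S : (Fin d → ℝ) → (Fin d → ℝ) → Set (Fin n → Fin d → ℝ) := fun v w =>
    {x | n * (v ⬝ᵥ w + t) ≤ ∑ j, d * ((nrm (x j) ⬝ᵥ v) * (nrm (x j) ⬝ᵥ w))}
  have hsub : {x : Fin n → Fin d → ℝ | ¬ G1 N t (fun j => nrm (x j))} ⊆ ⋃ p ∈ N ×ˢ N, (S p.1 p.2 ∪ S (-p.1) p.2) := by
    intro x hx
    simp only [G1, Set.mem_ofPred_eq, not_forall, not_le] at hx
    obtain ⟨v, hv, w, hw, h⟩ := hx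
    simp only [Set.mem_iUnion]
    refine ⟨(v, w), Finset.mk_mem_product hv hw, ?_⟩
    have e : (d : ℝ) / n * ∑ j, (nrm (x j) ⬝ᵥ v) * (nrm (x j) ⬝ᵥ w) = (∑ j, d * ((nrm (x j) ⬝ᵥ v) * (nrm (x j) ⬝ᵥ w))) / n := by
      rw [← Finset.mul_sum]; ring
    rw [e] at h
    rcases lt_abs.1 h with h | h
    · left
      have : v ⬝ᵥ w + t ≤ (∑ j, d * ((nrm (x j) ⬝ᵥ v) * (nrm (x j) ⬝ᵥ w))) / n := by linarith
      rw [le_div_iff₀ hn'] at this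
      simp only [S, Set.mem_ofPred_eq]
      linarith
    · right
      have : (∑ j, d * ((nrm (x j) ⬝ᵥ v) * (nrm (x j) ⬝ᵥ w))) / n ≤ v ⬝ᵥ w - t := by linarith
      rw [div_le_iff₀ hn'] at this
      simp only [S, Set.mem_ofPred_eq, neg_dotProduct, dotProduct_neg, neg_mul, mul_neg, Finset.sum_neg_distrib]
      linarith
  refine (measureReal_mono hsub (measure_ne_top _ _)).trans ((measureReal_biUnion_finset_le _ _).trans ?_)
  refine (Finset.sum_le_card_nsmul _ _ (2 * Real.exp (-(n * t ^ 2 / 8))) ?_).trans ?_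
  · intro p hp
    obtain ⟨h1, h2⟩ := Finset.mem_product.1 hp
    refine (measureReal_union_le _ _).trans ?_
    have h3 := p1 (n := n) p.1 p.2 (hN _ h1) (hN _ h2) ht ht1
    have h4 := p1 (n := n) (-p.1) p.2 (by simpa using hN _ h1) (hN _ h2) ht ht1
    simp only [S]
    linarith
  · rw [Finset.card_product]; simp

lemma p2 {n d : ℕ} (w : Fin d → ℝ) (hw : w ⬝ᵥ w ≤ 1) (K e : ℝ) :
    (gnd n d).real {x | n * e ≤ ∑ j, max (d * (nrm (x j) ⬝ᵥ w) ^ 2 - K) 0} ≤ Real.exp (n * (2 * Real.exp (-K / 4) - e / 4)) := by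
  have hQ := symM_QB (show (0 : ℝ) ≤ 1 / 4 by norm_num) w w hw hw
  have h1 := mgf_nq _ (symM_herm (1 / 4) w w) hQ
  have h2 := mgf_nq_int _ hQ (by norm_num) d
  have h38 : Real.exp (3 / 8) ≤ 2 := by
    have h5 : Real.exp (3 / 8) ^ 2 ≤ 2 ^ 2 := by
      rw [← Real.exp_nat_mul]
      have : Real.exp ((2 : ℕ) * (3 / 8)) ≤ Real.exp 1 := Real.exp_le_exp.2 (by norm_num)
      have := Real.exp_one_lt_d9
      linarith
    exact (abs_le_of_sq_le_sq' h5 (by norm_num)).2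
  let h : (Fin d → ℝ) → ℝ := fun x => 1 / 4 * max (d * (nrm x ⬝ᵥ w) ^ 2 - K) 0
  have hpt : ∀ x, Real.exp (h x) ≤ 1 + Real.exp (-K / 4) * Real.exp (d * nq (symM (1 / 4) w w) x) := fun x => by
    rw [symM_nq, ← Real.exp_add]
    simp only [h]
    rcases max_cases (d * (nrm x ⬝ᵥ w) ^ 2 - K) 0 with ⟨h6, _⟩ | ⟨h6, _⟩
    · rw [h6]
      have : 1 / 4 * (d * (nrm x ⬝ᵥ w) ^ 2 - K) = -K / 4 + d * (1 / 4 * (nrm x ⬝ᵥ w * nrm x ⬝ᵥ w)) := by ring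
      rw [this]; linarith
    · rw [h6, mul_zero, Real.exp_zero]
      have := Real.exp_pos (-K / 4 + d * (1 / 4 * (nrm x ⬝ᵥ w * nrm x ⬝ᵥ w)))
      linarith
  have hm : Measurable h := by
    have : h = fun x => 1 / 4 * max (d * (4 * nq (symM (1 / 4) w w) x) - K) 0 := by
      funext x; simp only [h]; rw [symM_nq]; congr 3; ring
    rw [this]
    have := nq_measurable (symM (1 / 4) w w)
    fun_prop
  have hb : Integrable (fun x => 1 + Real.exp (-K / 4) * Real.exp (d * nq (symM (1 / 4) w w) x)) (gd d) :=
    (integrable_const _).add (h2.const_mul _)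
  have hi : Integrable (fun x => Real.exp (h x)) (gd d) :=
    hb.mono' hm.exp.aestronglyMeasurable (ae_of_all _ fun x => by
      rw [Real.norm_eq_abs, Real.abs_exp]; exact hpt x)
  have hB : ∫ x, Real.exp (h x) ∂(gd d) ≤ Real.exp (2 * Real.exp (-K / 4)) := by
    refine (integral_mono hi hb hpt).trans ?_
    rw [integral_add (integrable_const _) (h2.const_mul _), integral_const_mul]
    simp only [integral_const, probReal_univ, one_smul]
    have h7 : ∫ x, Real.exp (d * nq (symM (1 / 4) w w) x) ∂(gd d) ≤ 2 := by
      refine h1.trans (le_trans (Real.exp_le_exp.2 ?_) h38)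
      have := symM_sq (1 / 4) w w hw hw
      rw [symM_trace]; linarith
    have h8 := mul_le_mul_of_nonneg_left h7 (Real.exp_pos (-K / 4)).le
    have h9 := Real.add_one_le_exp (2 * Real.exp (-K / 4))
    linarith
  have h3 := chernoff (n := n) h _ (e / 4) hi hB
  refine le_trans (measureReal_mono ?_) h3
  intro x hx
  simp only [Set.mem_ofPred_eq, h] at hx ⊢
  rw [← Finset.mul_sum]
  linarith

lemma P2 {n d : ℕ} (hn : 0 < n) {N : Finset (Fin d → ℝ)} (hN : ∀ v ∈ N, v ⬝ᵥ v ≤ 1) (K e : ℝ) :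
    (gnd n d).real {x | ¬ G2 N K e (fun j => nrm (x j))} ≤ N.card * Real.exp (n * (2 * Real.exp (-K / 4) - e / 4)) := by
  have hn' : (0 : ℝ) < n := by exact_mod_cast hn
  have hsub : {x : Fin n → Fin d → ℝ | ¬ G2 N K e (fun j => nrm (x j))} ⊆
      ⋃ w ∈ N, {x | n * e ≤ ∑ j, max (d * (nrm (x j) ⬝ᵥ w) ^ 2 - K) 0} := by
    intro x hx
    simp only [G2, Set.mem_ofPred_eq, not_forall, not_le] at hx
    obtain ⟨w, hw, h⟩ := hx
    simp only [Set.mem_iUnion]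
    refine ⟨w, hw, ?_⟩
    rw [one_div_mul_eq_div, lt_div_iff₀ hn'] at h
    simp only [Set.mem_ofPred_eq]
    linarith
  refine (measureReal_mono hsub (measure_ne_top _ _)).trans ((measureReal_biUnion_finset_le _ _).trans ?_)
  refine (Finset.sum_le_card_nsmul _ _ _ (fun w hw => p2 w (hN w hw) K e)).trans ?_
  simp

lemma sumsq_le {d : ℕ} (E : Matrix (Fin d) (Fin d) ℝ) (hE : E.IsHermitian) (hQ : QB E 1) : ∑ i, ∑ k, E i k ^ 2 ≤ d := by
  rw [Finset.sum_comm]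
  calc ∑ k, ∑ i, E i k ^ 2 ≤ ∑ k : Fin d, (1 : ℝ) := Finset.sum_le_sum fun k _ => by
        have := QB_op E hE hQ (Pi.single k 1)
        simpa [dotProduct, sq, mulVec_single_one, Pi.single_apply] using this
    _ = d := by simp

lemma p3 {n d : ℕ} (E : Matrix (Fin d) (Fin d) ℝ) (hE : E.IsHermitian) (hE0 : E.trace = 0) (hQ : QB E 1) {e : ℝ}
    (he : 0 < e) (he1 : e ≤ 1) :
    (gnd n d).real {x | n * e ≤ ∑ j, |nrm (x j) ⬝ᵥ E *ᵥ nrm (x j)|} ≤ Real.exp (n * (Real.log 2 - d * e ^ 2 / 8)) := by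
  have hs := sumsq_le E hE hQ
  have hh : ∀ s : ℝ, |s| = e / 4 → Integrable (fun x => Real.exp (d * nq (s • E) x)) (gd d) ∧
      ∫ x, Real.exp (d * nq (s • E) x) ∂(gd d) ≤ Real.exp (d * e ^ 2 / 8) := by
    intro s hs'
    have hQ' : QB (s • E) (1 / 4) := QB_mono (QB_smul hQ s) (by rw [hs']; linarith)
    have hH : (s • E).IsHermitian := by
      unfold IsHermitian at hE ⊢
      rw [conjTranspose_smul, hE]; simp
    refine ⟨mgf_nq_int _ hQ' (by norm_num) d, (mgf_nq _ hH hQ').trans (Real.exp_le_exp.2 ?_)⟩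
    rw [trace_smul, hE0, smul_zero, zero_add]
    have h1 : ∑ i, ∑ k, (s • E) i k ^ 2 = s ^ 2 * ∑ i, ∑ k, E i k ^ 2 := by
      simp only [Matrix.smul_apply, smul_eq_mul, mul_pow, Finset.mul_sum]
    rw [h1, ← sq_abs s, hs']
    have := mul_le_mul_of_nonneg_left hs (sq_nonneg (e / 4))
    linarith
  obtain ⟨ha, hb⟩ := hh (e / 4) (abs_of_pos (by positivity))
  obtain ⟨ha', hb'⟩ := hh (-(e / 4)) (by rw [abs_neg]; exact abs_of_pos (by positivity))
  have hsm : ∀ s x, nq (s • E) x = s * nq E x := fun s x => by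
    unfold nq; rw [smul_mulVec, dotProduct_smul, smul_eq_mul]; ring
  let h : (Fin d → ℝ) → ℝ := fun x => d * (e / 4) * |nq E x|
  have hm : Measurable h := ((nq_measurable E).abs).const_mul _
  have hpt : ∀ x, Real.exp (h x) ≤ Real.exp (d * nq ((e / 4) • E) x) + Real.exp (d * nq ((-(e / 4)) • E) x) := fun x => by
    rw [hsm, hsm]
    simp only [h]
    rcases abs_cases (nq E x) with ⟨h6, _⟩ | ⟨h6, _⟩
    · rw [h6, mul_assoc]
      have := Real.exp_pos (d * (-(e / 4) * nq E x))
      linarith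
    · rw [h6, show (d : ℝ) * (e / 4) * -nq E x = d * (-(e / 4) * nq E x) by ring]
      have := Real.exp_pos (d * (e / 4 * nq E x))
      linarith
  have hi : Integrable (fun x => Real.exp (h x)) (gd d) :=
    (ha.add ha').mono' hm.exp.aestronglyMeasurable (ae_of_all _ fun x => by
      rw [Real.norm_eq_abs, Real.abs_exp]; exact hpt x)
  have hB : ∫ x, Real.exp (h x) ∂(gd d) ≤ Real.exp (Real.log 2 + d * e ^ 2 / 8) := by
    refine (integral_mono hi (ha.add ha') hpt).trans ?_
    have h10 := integral_add ha ha'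
    simp only [Pi.add_apply] at h10 ⊢
    rw [h10, Real.exp_add, Real.exp_log (by norm_num)]
    linarith
  have h3 := chernoff (n := n) h _ (d * (e / 4) * e) hi hB
  have h4 : (n : ℝ) * (Real.log 2 + d * e ^ 2 / 8 - d * (e / 4) * e) = n * (Real.log 2 - d * e ^ 2 / 8) := by ring
  rw [h4] at h3
  refine le_trans (measureReal_mono ?_) h3
  intro x hx
  simp only [Set.mem_ofPred_eq, h, nrm_quad] at hx ⊢
  rw [← Finset.mul_sum]
  have := mul_le_mul_of_nonneg_left hx (show 0 ≤ (d : ℝ) * (e / 4) by positivity)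
  linarith

lemma P3 {n d : ℕ} (hn : 0 < n) {M : Finset (Matrix (Fin d) (Fin d) ℝ)} (hM : NetM M) {e : ℝ} (he : 0 < e) (he1 : e ≤ 1) :
    (gnd n d).real {x | ¬ G3 M e (fun j => nrm (x j))} ≤ M.card * Real.exp (n * (Real.log 2 - d * e ^ 2 / 8)) := by
  have hn' : (0 : ℝ) < n := by exact_mod_cast hn
  have hsub : {x : Fin n → Fin d → ℝ | ¬ G3 M e (fun j => nrm (x j))} ⊆
      ⋃ E ∈ M, {x | n * e ≤ ∑ j, |nrm (x j) ⬝ᵥ E *ᵥ nrm (x j)|} := by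
    intro x hx
    simp only [G3, Set.mem_ofPred_eq, not_forall, not_le] at hx
    obtain ⟨w, hw, h⟩ := hx
    simp only [Set.mem_iUnion]
    refine ⟨w, hw, ?_⟩
    rw [one_div_mul_eq_div, lt_div_iff₀ hn'] at h
    simp only [Set.mem_ofPred_eq]
    linarith
  refine (measureReal_mono hsub (measure_ne_top _ _)).trans ((measureReal_biUnion_finset_le _ _).trans ?_)
  refine (Finset.sum_le_card_nsmul _ _ _ (fun E hE => p3 E (hM.1 E hE).1 (hM.1 E hE).2.1 (hM.1 E hE).2.2 he he1)).trans ?_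
  simp


noncomputable def NV (d : ℕ) : Finset (Fin d → ℝ) := (netV_exists d).choose
lemma NV_card (d : ℕ) : (NV d).card ≤ 5 ^ d := (netV_exists d).choose_spec.1
lemma NV_net (d : ℕ) : NetV (NV d) := (netV_exists d).choose_spec.2
noncomputable def NM (d : ℕ) : Finset (Matrix (Fin d) (Fin d) ℝ) := (netM_exists d).choose
lemma NM_card (d : ℕ) : (NM d).card ≤ 5 ^ (d * d) := (netM_exists d).choose_spec.1
lemma NM_net (d : ℕ) : NetM (NM d) := (netM_exists d).choose_spec.2

lemma exp_neg_nat_tendsto {b : ℝ} (hb : 0 < b) : Tendsto (fun d : ℕ => Real.exp (-(b * d))) atTop (nhds 0) :=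
  Real.tendsto_exp_neg_atTop_nhds_zero.comp (tendsto_natCast_atTop_atTop.const_mul_atTop hb)

lemma five_le : (5 : ℝ) ≤ Real.exp 2 := by
  have h := Real.exp_one_gt_d9
  have : Real.exp 2 = Real.exp 1 ^ 2 := by rw [← Real.exp_nat_mul]; norm_num
  rw [this]; nlinarith

lemma five_pow_le (k : ℕ) : (5 : ℝ) ^ k ≤ Real.exp (2 * k) := by
  rw [mul_comm, Real.exp_nat_mul]
  exact pow_le_pow_left₀ (by norm_num) five_le k

lemma ev_dn {n : ℕ → ℕ} (hn : Tendsto n atTop atTop) (hdn : Tendsto (fun d : ℕ => (d : ℝ) / (n d : ℝ)) atTop (nhds 0))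
    {a : ℝ} (ha : 0 < a) : ∀ᶠ d : ℕ in atTop, 0 < n d ∧ 0 < d ∧ (d : ℝ) ≤ a * n d ∧ Real.sqrt ((d : ℝ) / n d) ≤ a := by
  have h2 : Tendsto (fun d : ℕ => Real.sqrt ((d : ℝ) / (n d : ℝ))) atTop (nhds 0) := by
    have := (Real.continuous_sqrt.tendsto 0).comp hdn
    rw [Real.sqrt_zero] at this
    exact this
  filter_upwards [hn.eventually_gt_atTop 0, eventually_gt_atTop 0, hdn.eventually_le_const ha, h2.eventually_le_const ha] with d h1 h2 h3 h4
  have : (0 : ℝ) < n d := by exact_mod_cast h1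
  exact ⟨h1, h2, (div_le_iff₀ this).1 h3, h4⟩

lemma T1 {n : ℕ → ℕ} (hn : Tendsto n atTop atTop) (hdn : Tendsto (fun d : ℕ => (d : ℝ) / (n d : ℝ)) atTop (nhds 0)) :
    Tendsto (fun d => (gnd (n d) d).real {x | ¬ G1 (NV d) (6 * Real.sqrt ((d : ℝ) / n d)) (fun j => nrm (x j))}) atTop (nhds 0) := by
  have h0 := (exp_neg_nat_tendsto (b := 1 / 2) (by norm_num)).const_mul 2
  rw [mul_zero] at h0
  refine squeeze_zero' (Eventually.of_forall fun _ => measureReal_nonneg) ?_ h0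
  filter_upwards [ev_dn hn hdn (a := 1 / 6) (by norm_num)] with d ⟨h1, h2, h3, h4⟩
  have hd : (0 : ℝ) < d := by exact_mod_cast h2
  have hn' : (0 : ℝ) < n d := by exact_mod_cast h1
  have hs : 0 < Real.sqrt ((d : ℝ) / n d) := Real.sqrt_pos.2 (by positivity)
  refine (P1 h1 (NV_net d).1 (t := 6 * Real.sqrt ((d : ℝ) / n d)) (by positivity) (by linarith)).trans ?_
  have h5 : ((NV d).card : ℝ) ≤ Real.exp (2 * d) := le_trans (by exact_mod_cast NV_card d) (five_pow_le d)
  have h6 : (n d : ℝ) * (6 * Real.sqrt ((d : ℝ) / n d)) ^ 2 / 8 = 9 / 2 * d := by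
    rw [mul_pow, Real.sq_sqrt (by positivity)]; field_simp; norm_num
  rw [h6]
  calc ((NV d).card * (NV d).card : ℝ) * (2 * Real.exp (-(9 / 2 * d)))
      ≤ (Real.exp (2 * d) * Real.exp (2 * d)) * (2 * Real.exp (-(9 / 2 * d))) := by gcongr
    _ = 2 * Real.exp (-(1 / 2 * d)) := by
        rw [← Real.exp_add, mul_left_comm, ← Real.exp_add]; congr 2; ring

lemma T2 {n : ℕ → ℕ} (hn : Tendsto n atTop atTop) (hdn : Tendsto (fun d : ℕ => (d : ℝ) / (n d : ℝ)) atTop (nhds 0)) (K : ℝ) :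
    Tendsto (fun d => (gnd (n d) d).real {x | ¬ G2 (NV d) K (16 * Real.exp (-K / 4)) (fun j => nrm (x j))}) atTop (nhds 0) := by
  refine squeeze_zero' (Eventually.of_forall fun _ => measureReal_nonneg) ?_ (exp_neg_nat_tendsto (b := 2) (by norm_num))
  have ha := Real.exp_pos (-K / 4)
  filter_upwards [ev_dn hn hdn (a := Real.exp (-K / 4) / 2) (by positivity)] with d ⟨h1, h2, h3, h4⟩
  refine (P2 h1 (NV_net d).1 K _).trans ?_
  have h5 : ((NV d).card : ℝ) ≤ Real.exp (2 * d) := le_trans (by exact_mod_cast NV_card d) (five_pow_le d)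
  calc _ ≤ Real.exp (2 * d) * Real.exp (n d * (2 * Real.exp (-K / 4) - 16 * Real.exp (-K / 4) / 4)) := by gcongr
    _ ≤ _ := by
      rw [← Real.exp_add]
      apply Real.exp_le_exp.2
      nlinarith

lemma T3 {n : ℕ → ℕ} (hn : Tendsto n atTop atTop) (hdn : Tendsto (fun d : ℕ => (d : ℝ) / (n d : ℝ)) atTop (nhds 0)) {e : ℝ}
    (he : 0 < e) (he1 : e ≤ 1) :
    Tendsto (fun d => (gnd (n d) d).real {x | ¬ G3 (NM d) e (fun j => nrm (x j))}) atTop (nhds 0) := by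
  set b := e ^ 2 / 8 with hb
  have hb0 : 0 < b := by positivity
  refine squeeze_zero' (Eventually.of_forall fun _ => measureReal_nonneg) ?_ (exp_neg_nat_tendsto (b := b / 2) (by positivity))
  filter_upwards [ev_dn hn hdn (a := b / 8) (by positivity), tendsto_natCast_atTop_atTop.eventually_ge_atTop (4 / b)] with d ⟨h1, h2, h3, h4⟩ h5
  have hd : (0 : ℝ) < d := by exact_mod_cast h2
  have hn' : (1 : ℝ) ≤ n d := by exact_mod_cast h1
  refine (P3 h1 (NM_net d) he he1).trans ?_
  have h6 : ((NM d).card : ℝ) ≤ Real.exp (2 * (d * d : ℕ)) := le_trans (by exact_mod_cast NM_card d) (five_pow_le (d * d))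
  calc _ ≤ Real.exp (2 * (d * d : ℕ)) * Real.exp (n d * (Real.log 2 - d * e ^ 2 / 8)) := by gcongr
    _ ≤ _ := by
      rw [← Real.exp_add]
      apply Real.exp_le_exp.2
      have h7 : Real.log 2 ≤ 1 := by have := Real.log_two_lt_d9; linarith
      rw [div_le_iff₀ hb0] at h5
      have h8 : (d : ℝ) * e ^ 2 / 8 = d * b := by rw [hb]; ring
      rw [h8]
      push_cast
      have h9 : (d : ℝ) * d ≤ b / 8 * n d * d := mul_le_mul_of_nonneg_right h3 hd.le
      have h10 : 4 * (n d : ℝ) ≤ d * b * n d := mul_le_mul_of_nonneg_right h5 (by linarith)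
      have h11 : (n d : ℝ) * Real.log 2 ≤ n d := by nlinarith
      have h12 : b * d ≤ b * d * n d := by nlinarith [mul_pos hb0 hd]
      nlinarith


lemma pi_sq {Ω : Type*} [MeasurableSpace Ω] (μ : Measure Ω) [IsProbabilityMeasure μ] {n : ℕ} (f : Ω → ℝ) (hf : MemLp f 2 μ)
    (h0 : ∫ x, f x ∂μ = 0) :
    MemLp (fun x : Fin n → Ω => ∑ j, f (x j)) 2 (Measure.pi fun _ : Fin n => μ) ∧
    ∫ x : Fin n → Ω, (∑ j, f (x j)) ^ 2 ∂(Measure.pi fun _ : Fin n => μ) = n * ∫ x, f x ^ 2 ∂μ := by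
  have hj : ∀ j : Fin n, MemLp (fun x : Fin n → Ω => f (x j)) 2 (Measure.pi fun _ : Fin n => μ) := fun j =>
    hf.comp_measurePreserving (measurePreserving_eval (fun _ : Fin n => μ) j)
  have hm : MemLp (fun x : Fin n → Ω => ∑ j, f (x j)) 2 (Measure.pi fun _ : Fin n => μ) := memLp_finsetSum _ fun j _ => hj j
  refine ⟨hm, ?_⟩
  have hv := variance_sum_pi (μ := fun _ : Fin n => μ) (X := fun _ => f) fun _ => hf
  have e : (∑ i : Fin n, fun ω : Fin n → Ω => f (ω i)) = fun x : Fin n → Ω => ∑ j, f (x j) := by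
    funext x; simp
  have hz : ∫ x : Fin n → Ω, ∑ j, f (x j) ∂(Measure.pi fun _ : Fin n => μ) = 0 := by
    rw [integral_finsetSum _ fun j _ => (hj j).integrable (by norm_num)]
    refine Finset.sum_eq_zero fun j _ => ?_
    rw [integral_comp_eval (μ := fun _ : Fin n => μ) (i := j) hf.aestronglyMeasurable, h0]
  rw [e, variance_of_integral_eq_zero hm.aemeasurable hz, variance_of_integral_eq_zero hf.aemeasurable h0] at hv
  rw [hv]; simp

lemma memLp_sq_sub : MemLp (fun y : ℝ => y ^ 2 - 1) 2 (gaussianReal 0 1) := by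
  rw [memLp_two_iff_integrable_sq (by fun_prop)]
  have : (fun y : ℝ => (y ^ 2 - 1) ^ 2) = fun y => y ^ 4 - 2 * y ^ 2 + 1 := by funext y; ring
  rw [this]
  exact ((integrable_pow_g 4).sub ((integrable_pow_g 2).const_mul 2)).add (integrable_const _)

lemma dp_sub_sum {d : ℕ} (x : Fin d → ℝ) : x ⬝ᵥ x - d = ∑ i, (x i ^ 2 - 1) := by
  simp [dotProduct, sq]

lemma norm_fluct (d : ℕ) : MemLp (fun x : Fin d → ℝ => x ⬝ᵥ x - d) 2 (gd d) ∧ ∫ x : Fin d → ℝ, (x ⬝ᵥ x - d) ^ 2 ∂(gd d) = 2 * d := by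
  have g0 : gmom 0 = 1 := by simp [gmom]
  have g2 : gmom 2 = 1 := by rw [gmom_succ 1]; simp [g0]
  have g4 : gmom 4 = 3 := by rw [gmom_succ 3]; norm_num [g2]
  have i2 : ∫ y, y ^ 2 ∂(gaussianReal 0 1) = 1 := g2
  have i4 : ∫ y, y ^ 4 ∂(gaussianReal 0 1) = 3 := g4
  have h0 : ∫ y, (y ^ 2 - 1) ∂(gaussianReal 0 1) = 0 := by
    rw [integral_sub (integrable_pow_g 2) (integrable_const _), i2]; simp
  have hsq : ∫ y, (y ^ 2 - 1) ^ 2 ∂(gaussianReal 0 1) = 2 := by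
    have : (fun y : ℝ => (y ^ 2 - 1) ^ 2) = fun y => (y ^ 4 - 2 * y ^ 2) + 1 := by funext y; ring
    have hi : Integrable (fun y : ℝ => y ^ 4 - 2 * y ^ 2) (gaussianReal 0 1) :=
      (integrable_pow_g 4).sub ((integrable_pow_g 2).const_mul 2)
    rw [this, integral_add hi (integrable_const _),
      integral_sub (integrable_pow_g 4) ((integrable_pow_g 2).const_mul 2), integral_const_mul, i2, i4]
    simp; norm_num
  have := pi_sq (n := d) _ _ memLp_sq_sub h0
  simp only [dp_sub_sum]
  refine ⟨this.1, this.2.trans ?_⟩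
  rw [hsq]; ring

lemma nrm_measurable {d : ℕ} (i : Fin d) : Measurable fun x : Fin d → ℝ => nrm x i := by
  unfold nrm
  simp only [dotProduct, Pi.smul_apply, smul_eq_mul]
  fun_prop

lemma nrm_sq_le {d : ℕ} (x : Fin d → ℝ) : nrm x ⬝ᵥ nrm x ≤ 1 := by
  have := nrm_mul x
  unfold nrm
  simp only [smul_dotProduct, dotProduct_smul, smul_eq_mul]
  have h := Real.sq_sqrt (dp_self_nonneg x)
  calc _ = (x ⬝ᵥ x) * (Real.sqrt (x ⬝ᵥ x) ^ 2)⁻¹ := by ring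
    _ ≤ 1 := by rw [h]; exact mul_inv_le_one

lemma nrm_abs_le {d : ℕ} (x : Fin d → ℝ) (i : Fin d) : |nrm x i| ≤ 1 := by
  rw [← sq_le_one_iff_abs_le_one]
  refine le_trans ?_ (nrm_sq_le x)
  rw [dotProduct, sq]
  exact Finset.single_le_sum (f := fun i => nrm x i * nrm x i) (fun i _ => mul_self_nonneg _) (Finset.mem_univ i)

lemma nrm_smul {d : ℕ} {c : ℝ} (hc : 0 < c) (x : Fin d → ℝ) : nrm (c • x) = nrm x := by
  unfold nrm
  simp only [smul_dotProduct, dotProduct_smul, smul_eq_mul]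
  rw [← mul_assoc, Real.sqrt_mul (by positivity), Real.sqrt_mul_self hc.le, smul_smul]
  congr 1
  field_simp

noncomputable def gik {d : ℕ} (i k : Fin d) (y : Fin d → ℝ) : ℝ := (y ⬝ᵥ y - d) * (nrm y i * nrm y k)

lemma gik_memLp {d : ℕ} (i k : Fin d) : MemLp (gik i k) 2 (gd d) := by
  refine (norm_fluct d).1.mono ?_ (ae_of_all _ fun x => ?_)
  · have h1 := nrm_measurable i
    have h2 := nrm_measurable k
    have h3 : Measurable fun x : Fin d → ℝ => x ⬝ᵥ x - d := by simp only [dotProduct]; fun_prop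
    exact (h3.mul (h1.mul h2)).aestronglyMeasurable
  · rw [gik, norm_mul]
    refine mul_le_of_le_one_right (norm_nonneg _) ?_
    rw [Real.norm_eq_abs, abs_mul]
    exact mul_le_one₀ (nrm_abs_le x i) (abs_nonneg _) (nrm_abs_le x k)

lemma gik_mean {d : ℕ} (i k : Fin d) : ∫ y, gik i k y ∂(gd d) = 0 :=
  star (fun y => nrm y i * nrm y k) ((nrm_measurable i).mul (nrm_measurable k)) 1 (fun x => by
    rw [abs_mul]
    exact mul_le_one₀ (nrm_abs_le x i) (abs_nonneg _) (nrm_abs_le x k)) (fun c x hc => by rw [nrm_smul hc])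

lemma gik_sum {n d : ℕ} : Integrable (fun x : Fin n → Fin d → ℝ => ∑ i, ∑ k, (∑ j, gik i k (x j)) ^ 2) (gnd n d) ∧
    ∫ x : Fin n → Fin d → ℝ, ∑ i, ∑ k, (∑ j, gik i k (x j)) ^ 2 ∂(gnd n d) ≤ n * (2 * d) := by
  have h := fun i k : Fin d => pi_sq (n := n) (gd d) (gik i k) (gik_memLp i k) (gik_mean i k)
  have hi : ∀ i k : Fin d, Integrable (fun x : Fin n → Fin d → ℝ => (∑ j, gik i k (x j)) ^ 2) (gnd n d) := fun i k => (h i k).1.integrable_sq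
  have hg : ∀ i k : Fin d, Integrable (fun x => gik i k x ^ 2) (gd d) := fun i k => (gik_memLp i k).integrable_sq
  refine ⟨integrable_finsetSum _ fun i _ => integrable_finsetSum _ fun k _ => hi i k, ?_⟩
  rw [integral_finsetSum _ fun i _ => integrable_finsetSum _ fun k _ => hi i k]
  have e1 : ∀ i, ∫ x : Fin n → Fin d → ℝ, ∑ k, (∑ j, gik i k (x j)) ^ 2 ∂(gnd n d) = n * ∫ y, ∑ k, gik i k y ^ 2 ∂(gd d) := fun i => by
    rw [integral_finsetSum _ fun k _ => hi i k, integral_finsetSum _ fun k _ => hg i k, Finset.mul_sum]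
    exact Finset.sum_congr rfl fun k _ => (h i k).2
  simp only [e1]
  rw [← Finset.mul_sum, ← integral_finsetSum _ fun i _ => integrable_finsetSum _ fun k _ => hg i k, ← (norm_fluct d).2]
  refine mul_le_mul_of_nonneg_left (integral_mono (integrable_finsetSum _ fun i _ => integrable_finsetSum _ fun k _ => hg i k)
    (norm_fluct d).1.integrable_sq fun y => ?_) (by positivity)
  have h2 : ∑ i, ∑ k, gik i k y ^ 2 = (y ⬝ᵥ y - d) ^ 2 * ((nrm y ⬝ᵥ nrm y) * (nrm y ⬝ᵥ nrm y)) := by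
    simp only [gik, dotProduct]
    rw [Finset.sum_mul_sum, Finset.mul_sum]
    refine Finset.sum_congr rfl fun i _ => ?_
    rw [Finset.mul_sum]
    exact Finset.sum_congr rfl fun k _ => by ring
  show ∑ i, ∑ k, gik i k y ^ 2 ≤ (y ⬝ᵥ y - d) ^ 2
  rw [h2]
  exact mul_le_of_le_one_right (sq_nonneg _) (mul_le_one₀ (nrm_sq_le y) (dp_self_nonneg _) (nrm_sq_le y))

noncomputable def Zs {n d : ℕ} (u : Fin n → Fin d → ℝ) : Matrix (Fin d) (Fin d) ℝ :=
  Real.sqrt ((n : ℝ) / d) • (((d : ℝ) / n) • ∑ j, vecMulVec (u j) (u j) - 1)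

lemma W_sub_Zs {n : ℕ → ℕ} {d : ℕ} (hd : 0 < d) (hn : 0 < n d) (x : Fin (n d) → Fin d → ℝ) (i k : Fin d) :
    (Wr (αs n d) (βs n d) x - Zs (fun j => nrm (x j))) i k = αs n d * ∑ j, gik i k (x j) := by
  have hd' : (0 : ℝ) < d := by exact_mod_cast hd
  have hn' : (0 : ℝ) < n d := by exact_mod_cast hn
  have h1 := αs_n (n := n) hd hn
  have hβ : βs n d = Real.sqrt ((n d : ℝ) / d) := rfl
  have hx : ∀ j, x j i * x j k = (x j ⬝ᵥ x j) * (nrm (x j) i * nrm (x j) k) := fun j => by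
    have := nrm_mul (x j) (Pi.single i 1) (Pi.single k 1)
    simp only [dotProduct_single_one] at this
    rw [this]
    by_cases h : x j ⬝ᵥ x j = 0
    · have : x j = 0 := dotProduct_self_eq_zero.1 h
      simp [this]
    · field_simp
  simp only [Wr, Zs, Matrix.sub_apply, Matrix.smul_apply, Matrix.sum_apply, vecMulVec_apply, smul_eq_mul, gik]
  rw [← hβ, ← h1]
  simp only [hx, sub_mul, Finset.sum_sub_distrib, ← Finset.mul_sum]
  field_simp
  ring

lemma T4 {n : ℕ → ℕ} (hn : Tendsto n atTop atTop) {η : ℝ} (hη : 0 < η) :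
    Tendsto (fun d => (gnd (n d) d).real {x | η ≤ 1 / (d : ℝ) * ∑ i, ∑ k, (Wr (αs n d) (βs n d) x - Zs (fun j => nrm (x j))) i k ^ 2})
      atTop (nhds 0) := by
  have h0 : Tendsto (fun d : ℕ => 2 / η / (d : ℝ)) atTop (nhds 0) := tendsto_const_div_atTop_nhds_zero_nat _
  refine squeeze_zero' (Eventually.of_forall fun _ => measureReal_nonneg) ?_ h0
  filter_upwards [hn.eventually_gt_atTop 0, eventually_gt_atTop 0] with d h1 h2
  have hd' : (0 : ℝ) < d := by exact_mod_cast h2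
  have hn' : (0 : ℝ) < n d := by exact_mod_cast h1
  have e : ∀ x : Fin (n d) → Fin d → ℝ, 1 / (d : ℝ) * ∑ i, ∑ k, (Wr (αs n d) (βs n d) x - Zs (fun j => nrm (x j))) i k ^ 2 =
      1 / (d : ℝ) * αs n d ^ 2 * ∑ i, ∑ k, (∑ j, gik i k (x j)) ^ 2 := fun x => by
    simp only [W_sub_Zs h2 h1, mul_pow, ← Finset.mul_sum]
    ring
  simp only [e]
  obtain ⟨g1, g2⟩ := gik_sum (n := n d) (d := d)
  have h3 := mul_meas_ge_le_integral_of_nonneg (μ := gnd (n d) d) (ae_of_all _ fun x => by positivity)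
    (g1.const_mul (1 / (d : ℝ) * αs n d ^ 2)) η
  rw [integral_const_mul] at h3
  have hα : αs n d ^ 2 = 1 / (n d * d) := by
    rw [αs, div_pow, Real.sq_sqrt (by positivity), one_pow]
  have h4 := h3.trans (mul_le_mul_of_nonneg_left g2 (by positivity))
  rw [hα] at h4
  rw [div_div, le_div_iff₀ (by positivity)]
  have h5 : 1 / (d : ℝ) * (1 / (n d * d)) * (n d * (2 * d)) = 2 / d := by field_simp
  rw [h5, le_div_iff₀ hd'] at h4
  rw [hα]
  linarith


noncomputable def Msc (m : ℕ) : ℝ := ∫ x in (-2 : ℝ)..2, x ^ m * Real.sqrt (4 - x ^ 2)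

lemma sc_eq (m : ℕ) : ∫ x : ℝ, x ^ m * semicircleDensity x = Msc m / (2 * Real.pi) := by
  rw [Msc, intervalIntegral.integral_of_le (by norm_num), ← integral_Icc_eq_integral_Ioc, ← integral_div,
    ← integral_indicator measurableSet_Icc]
  refine integral_congr_ae (ae_of_all _ fun x => ?_)
  simp only [semicircleDensity, Set.indicator_apply]
  split_ifs <;> ring

lemma Msc_cont (m : ℕ) : Continuous fun x : ℝ => x ^ m * Real.sqrt (4 - x ^ 2) := by fun_prop

lemma Msc_zero : Msc 0 = 2 * Real.pi := by
  have h := integral_sqrt_one_sub_sq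
  have h2 := intervalIntegral.integral_comp_mul_left (a := -1) (b := 1) (fun x : ℝ => Real.sqrt (4 - x ^ 2)) (c := 2) (by norm_num)
  have h3 : ∀ x : ℝ, Real.sqrt (4 - (2 * x) ^ 2) = 2 * Real.sqrt (1 - x ^ 2) := fun x => by
    rw [show 4 - (2 * x) ^ 2 = 2 ^ 2 * (1 - x ^ 2) by ring, Real.sqrt_mul (by norm_num), Real.sqrt_sq (by norm_num)]
  simp only [h3] at h2
  rw [intervalIntegral.integral_const_mul, h] at h2
  simp only [Msc, pow_zero, one_mul]
  norm_num at h2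
  linarith

lemma Msc_one : Msc 1 = 0 := by
  have h := intervalIntegral.integral_comp_neg (a := -2) (b := 2) (fun x : ℝ => x ^ 1 * Real.sqrt (4 - x ^ 2))
  have h2 : ∀ x : ℝ, (-x) ^ 1 * Real.sqrt (4 - (-x) ^ 2) = -(x ^ 1 * Real.sqrt (4 - x ^ 2)) := fun x => by
    rw [neg_sq]; ring
  simp only [h2] at h
  rw [intervalIntegral.integral_neg, neg_neg] at h
  rw [Msc]; linarith

lemma Msc_rec (k : ℕ) : (k + 4 : ℝ) * Msc (k + 2) = 4 * (k + 1) * Msc k := by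
  have hder : ∀ x ∈ Set.Ioo (-2 : ℝ) 2, HasDerivAt (fun x : ℝ => x ^ (k + 1) * ((4 - x ^ 2) * Real.sqrt (4 - x ^ 2)))
      (4 * (k + 1) * (x ^ k * Real.sqrt (4 - x ^ 2)) - (k + 4) * (x ^ (k + 2) * Real.sqrt (4 - x ^ 2))) x := by
    intro x hx
    have hp : 0 < 4 - x ^ 2 := by nlinarith [hx.1, hx.2]
    have hs : 0 < Real.sqrt (4 - x ^ 2) := Real.sqrt_pos.2 hp
    have hss : Real.sqrt (4 - x ^ 2) ^ 2 = 4 - x ^ 2 := Real.sq_sqrt hp.le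
    have d1 : HasDerivAt (fun x : ℝ => 4 - x ^ 2) (-(2 * x)) x := by
      simpa using (hasDerivAt_pow 2 x).const_sub 4
    have d2 := d1.mul (d1.sqrt hp.ne')
    have d3 := (hasDerivAt_pow (k + 1) x).mul d2
    refine d3.congr_deriv ?_
    simp only [Pi.mul_apply]
    have e : (4 - x ^ 2) * (-(2 * x) / (2 * Real.sqrt (4 - x ^ 2))) = -x * Real.sqrt (4 - x ^ 2) := by
      rw [← hss]; field_simp; rw [Real.sqrt_sq hs.le]
    rw [e]
    push_cast
    ring
  have h := intervalIntegral.integral_eq_sub_of_hasDerivAt_of_le (a := -2) (b := 2) (by norm_num) (by fun_prop) hder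
    (Continuous.intervalIntegrable (by fun_prop) _ _)
  rw [intervalIntegral.integral_sub (Continuous.intervalIntegrable (by fun_prop) _ _) (Continuous.intervalIntegrable (by fun_prop) _ _),
    intervalIntegral.integral_const_mul, intervalIntegral.integral_const_mul] at h
  norm_num at h
  simp only [Msc]
  linarith

lemma Msc_odd (k : ℕ) : Msc (2 * k + 1) = 0 := by
  induction k with
  | zero => exact Msc_one
  | succ k ih =>
    have := Msc_rec (2 * k + 1)
    rw [ih, mul_zero] at this
    rcases mul_eq_zero.1 this with h | h
    · exfalso
      have : (0 : ℝ) < ((2 * k + 1 : ℕ) : ℝ) + 4 := by positivity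
      linarith
    · exact h

lemma Msc_even (k : ℕ) : Msc (2 * k) = 2 * Real.pi * catalan k := by
  induction k with
  | zero => simp [Msc_zero]
  | succ k ih =>
    have h := Msc_rec (2 * k)
    rw [ih] at h
    have h1 : ((k : ℝ) + 1) * catalan k = k.centralBinom := by exact_mod_cast succ_mul_catalan_eq_centralBinom k
    have h2 : ((k : ℝ) + 2) * catalan (k + 1) = (k + 1).centralBinom := by
      have := succ_mul_catalan_eq_centralBinom (k + 1)
      have h3 : (((k + 1 + 1 : ℕ) : ℝ)) * catalan (k + 1) = (k + 1).centralBinom := by exact_mod_cast this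
      rw [← h3]; push_cast; ring
    have h4 : ((k : ℝ) + 1) * (k + 1).centralBinom = 2 * (2 * k + 1) * k.centralBinom := by
      exact_mod_cast Nat.succ_mul_centralBinom_succ k
    have hk : (0 : ℝ) < (k : ℝ) + 1 := by positivity
    have h5 : ((k : ℝ) + 2) * catalan (k + 1) = 2 * (2 * k + 1) * catalan k := by
      rw [← h1, ← h2] at h4
      apply mul_left_cancel₀ hk.ne'
      linarith
    push_cast at h
    have hk2 : (0 : ℝ) < 2 * ((k : ℝ) + 2) := by positivity
    apply mul_left_cancel₀ hk2.ne'
    show 2 * ((k : ℝ) + 2) * Msc (2 * k + 2) = _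
    linear_combination h - 4 * Real.pi * h5

theorem sc_moment (m : ℕ) : (∫ x : ℝ, x ^ m * semicircleDensity x) = if Even m then (catalan (m / 2) : ℝ) else 0 := by
  rw [sc_eq]
  split_ifs with h
  · obtain ⟨k, rfl⟩ := h
    rw [← two_mul, Msc_even, Nat.mul_div_cancel_left _ (by norm_num)]
    have := Real.pi_pos
    field_simp
  · obtain ⟨k, rfl⟩ := Nat.not_even_iff_odd.1 h
    rw [Msc_odd, zero_div]


noncomputable def frob {d : ℕ} (A : Matrix (Fin d) (Fin d) ℝ) : ℝ := ∑ i, ∑ k, A i k ^ 2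

lemma frob_nonneg {d : ℕ} (A : Matrix (Fin d) (Fin d) ℝ) : 0 ≤ frob A :=
  Finset.sum_nonneg fun _ _ => Finset.sum_nonneg fun _ _ => sq_nonneg _

lemma frob_tr {d : ℕ} (A B : Matrix (Fin d) (Fin d) ℝ) : (A * B).trace ^ 2 ≤ frob A * frob B := by
  have h := Finset.sum_mul_sq_le_sq_mul_sq (Finset.univ : Finset (Fin d × Fin d)) (fun p => A p.1 p.2) (fun p => B p.2 p.1)
  have e1 : (A * B).trace = ∑ p : Fin d × Fin d, A p.1 p.2 * B p.2 p.1 := by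
    rw [Fintype.sum_prod_type]; simp [Matrix.trace, Matrix.mul_apply]
  have e2 : frob A = ∑ p : Fin d × Fin d, A p.1 p.2 ^ 2 := by rw [Fintype.sum_prod_type]; rfl
  have e3 : frob B = ∑ p : Fin d × Fin d, B p.2 p.1 ^ 2 := by
    rw [Fintype.sum_prod_type, Finset.sum_comm]; rfl
  rw [e1, e2, e3]; exact h

lemma frob_cols {d : ℕ} (A : Matrix (Fin d) (Fin d) ℝ) : frob A = ∑ k, (A *ᵥ Pi.single k 1) ⬝ᵥ (A *ᵥ Pi.single k 1) := by
  rw [frob, Finset.sum_comm]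
  simp [dotProduct, sq, mulVec_single_one]

lemma frob_mul {d : ℕ} (S A : Matrix (Fin d) (Fin d) ℝ) (hS : S.IsHermitian) {c : ℝ} (hQ : QB S c) : frob (S * A) ≤ c ^ 2 * frob A := by
  rw [frob_cols, frob_cols, Finset.mul_sum]
  refine Finset.sum_le_sum fun k _ => ?_
  rw [← mulVec_mulVec]
  exact QB_op S hS hQ _

lemma frob_pow_mul {d : ℕ} (S A : Matrix (Fin d) (Fin d) ℝ) (hS : S.IsHermitian) {c : ℝ} (hQ : QB S c) (i : ℕ) :
    frob (S ^ i * A) ≤ (c ^ i) ^ 2 * frob A := by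
  induction i with
  | zero => simp
  | succ i ih =>
    rw [pow_succ', Matrix.mul_assoc]
    refine (frob_mul S _ hS hQ).trans ?_
    calc c ^ 2 * frob (S ^ i * A) ≤ c ^ 2 * ((c ^ i) ^ 2 * frob A) := mul_le_mul_of_nonneg_left ih (sq_nonneg c)
      _ = _ := by ring

lemma frob_QB {d : ℕ} (A : Matrix (Fin d) (Fin d) ℝ) (hA : A.IsHermitian) {c : ℝ} (hQ : QB A c) : frob A ≤ c ^ 2 * d := by
  have := frob_mul A 1 hA hQ
  rw [mul_one] at this
  refine this.trans (le_of_eq ?_)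
  congr 1
  simp [frob, Matrix.one_apply]

lemma frob_sub {d : ℕ} (A B : Matrix (Fin d) (Fin d) ℝ) : frob (A - B) ≤ 2 * frob A + 2 * frob B := by
  simp only [frob, Finset.mul_sum, ← Finset.sum_add_distrib]
  refine Finset.sum_le_sum fun i _ => Finset.sum_le_sum fun k _ => ?_
  rw [Matrix.sub_apply]
  nlinarith [sq_nonneg (A i k + B i k)]

lemma frob_pow {d : ℕ} (W : Matrix (Fin d) (Fin d) ℝ) (hW : W.IsHermitian) (k : ℕ) : frob (W ^ k) = (W ^ (2 * k)).trace := by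
  rw [frob, sumsq_spec _ (hW.pow k), ← pow_add, two_mul]

lemma pow_telescope {d : ℕ} (S W : Matrix (Fin d) (Fin d) ℝ) (m : ℕ) :
    S ^ m - W ^ m = ∑ i ∈ Finset.range m, S ^ i * (S - W) * W ^ (m - 1 - i) := by
  induction m with
  | zero => simp
  | succ m ih =>
    rw [Finset.sum_range_succ]
    have : ∑ i ∈ Finset.range m, S ^ i * (S - W) * W ^ (m + 1 - 1 - i) = (∑ i ∈ Finset.range m, S ^ i * (S - W) * W ^ (m - 1 - i)) * W := by
      rw [Finset.sum_mul]
      refine Finset.sum_congr rfl fun i hi => ?_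
      rw [Finset.mem_range] at hi
      rw [Matrix.mul_assoc _ _ W, ← pow_succ]
      congr 2; omega
    rw [this, ← ih]
    simp only [Nat.add_sub_cancel, Nat.sub_self, pow_zero, mul_one]
    rw [pow_succ, pow_succ]
    noncomm_ring

lemma trace_pow_compare {d : ℕ} (hd : 0 < d) (S W : Matrix (Fin d) (Fin d) ℝ) (hS : S.IsHermitian) (hW : W.IsHermitian) {c κ : ℝ}
    (hc : 0 ≤ c) (hQ : QB S c) (hκ : 0 ≤ κ) (hΔ : 1 / (d : ℝ) * frob (S - W) ≤ κ ^ 2) (b : ℕ → ℝ)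
    (hb : ∀ k, 0 ≤ b k) (m : ℕ) (hWb : ∀ k < m, 1 / (d : ℝ) * (W ^ (2 * k)).trace ≤ b k ^ 2) :
    |1 / (d : ℝ) * (S ^ m).trace - 1 / (d : ℝ) * (W ^ m).trace| ≤ κ * ∑ i ∈ Finset.range m, c ^ i * b (m - 1 - i) := by
  have hd' : (0 : ℝ) < d := by exact_mod_cast hd
  rw [← mul_sub, ← trace_sub, pow_telescope, trace_sum, Finset.mul_sum, Finset.mul_sum]
  refine (Finset.abs_sum_le_sum_abs _ _).trans (Finset.sum_le_sum fun i hi => ?_)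
  rw [Finset.mem_range] at hi
  have hk := hWb (m - 1 - i) (by omega)
  rw [← frob_pow W hW] at hk
  set k := m - 1 - i
  have h1 := frob_tr (S ^ i * (S - W)) (W ^ k)
  have h2 := frob_pow_mul S (S - W) hS hQ i
  refine abs_le_of_sq_le_sq ?_ (by have := hb k; positivity)
  calc (1 / (d : ℝ) * (S ^ i * (S - W) * W ^ k).trace) ^ 2 = (1 / (d : ℝ)) ^ 2 * (S ^ i * (S - W) * W ^ k).trace ^ 2 := by ring
    _ ≤ (1 / (d : ℝ)) ^ 2 * (((c ^ i) ^ 2 * frob (S - W)) * frob (W ^ k)) := by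
        refine mul_le_mul_of_nonneg_left (h1.trans (mul_le_mul_of_nonneg_right h2 (frob_nonneg _))) (by positivity)
    _ = (c ^ i) ^ 2 * ((1 / (d : ℝ) * frob (S - W)) * (1 / (d : ℝ) * frob (W ^ k))) := by ring
    _ ≤ (c ^ i) ^ 2 * (κ ^ 2 * b k ^ 2) := by
        refine mul_le_mul_of_nonneg_left (mul_le_mul hΔ hk ?_ (sq_nonneg κ)) (sq_nonneg _)
        have := frob_nonneg (W ^ k)
        positivity
    _ = _ := by ring

lemma nrm_unit {d : ℕ} {x : Fin d → ℝ} (hx : x ≠ 0) : nrm x ⬝ᵥ nrm x = 1 := by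
  have h0 : x ⬝ᵥ x ≠ 0 := fun h => hx (dotProduct_self_eq_zero.1 h)
  have h := Real.sq_sqrt (dp_self_nonneg x)
  unfold nrm
  simp only [smul_dotProduct, dotProduct_smul, smul_eq_mul]
  calc _ = (x ⬝ᵥ x) * (Real.sqrt (x ⬝ᵥ x) ^ 2)⁻¹ := by ring
    _ = 1 := by rw [h]; field_simp

lemma tyler_nrm {n d : ℕ} {x : Fin n → Fin d → ℝ} (hx : ∀ j, x j ≠ 0) {T : Matrix (Fin d) (Fin d) ℝ} (hT : IsTyler x T) :
    IsTyler (fun j => nrm (x j)) T := by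
  refine ⟨hT.1, hT.2.1, hT.2.2.trans ?_⟩
  congr 1
  refine Finset.sum_congr rfl fun j _ => ?_
  have h0 : 0 < x j ⬝ᵥ x j := lt_of_le_of_ne (dp_self_nonneg _) fun h => hx j (dotProduct_self_eq_zero.1 h.symm)
  have hs : 0 < Real.sqrt (x j ⬝ᵥ x j) := Real.sqrt_pos.2 h0
  unfold nrm
  simp only [mulVec_smul, smul_dotProduct, dotProduct_smul, smul_vecMulVec, vecMulVec_smul, smul_smul, smul_eq_mul]
  simp only [MulOpposite.op_inv, mul_inv, inv_inv]
  congr 1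
  field_simp

lemma det_main {n : ℕ → ℕ} {d : ℕ} (hd : 0 < d) (hn : 0 < n d) {x : Fin (n d) → Fin d → ℝ} (hx : ∀ j, x j ≠ 0)
    {T : Matrix (Fin d) (Fin d) ℝ} (hT : IsTyler x T) {K e1 e2 ε' κ : ℝ} (hK : 0 ≤ K)
    (he0 : 0 ≤ 4 * (2 * K * e1 + e2)) (he : 4 * (2 * K * e1 + e2) ≤ ε') (hε1 : ε' ≤ 1 / 16) (hκ : 0 ≤ κ) (hεκ : ε' ≤ κ / 200)
    (hs1 : Real.sqrt ((d : ℝ) / n d) ≤ 1 / 1000) (hs2 : Real.sqrt ((d : ℝ) / n d) ≤ κ / 20000)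
    (h1 : G1 (NV d) (6 * Real.sqrt ((d : ℝ) / n d)) (fun j => nrm (x j)))
    (h2 : G2 (NV d) K e2 (fun j => nrm (x j))) (h3 : G3 (NM d) e1 (fun j => nrm (x j)))
    (h4 : 1 / (d : ℝ) * ∑ i, ∑ k, (Wr (αs n d) (βs n d) x - Zs (fun j => nrm (x j))) i k ^ 2 ≤ κ ^ 2 / 4)
    (m : ℕ) (h5 : ∀ k < m, 1 / (d : ℝ) * (Wr (αs n d) (βs n d) x ^ (2 * k)).trace ≤ Real.sqrt (cc (2 * k) + 1) ^ 2) :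
    |1 / (d : ℝ) * ((Real.sqrt ((n d : ℝ) / d) • (T - 1)) ^ m).trace - 1 / (d : ℝ) * (Wr (αs n d) (βs n d) x ^ m).trace| ≤
      κ * ∑ i ∈ Finset.range m, 48 ^ i * Real.sqrt (cc (2 * (m - 1 - i)) + 1) := by
  have hd' : (0 : ℝ) < d := by exact_mod_cast hd
  have hn' : (0 : ℝ) < n d := by exact_mod_cast hn
  have hs0 : 0 < Real.sqrt ((d : ℝ) / n d) := Real.sqrt_pos.2 (by positivity)
  have hinv : Real.sqrt ((n d : ℝ) / d) = (Real.sqrt ((d : ℝ) / n d))⁻¹ := by rw [← Real.sqrt_inv, inv_div]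
  set s := Real.sqrt ((d : ℝ) / n d)
  have hu : ∀ j, nrm (x j) ⬝ᵥ nrm (x j) = 1 := fun j => nrm_unit (hx j)
  obtain ⟨t1, t2⟩ := tyler_det (fun j => nrm (x j)) hu T (tyler_nrm hx hT) (4 * (6 * s)) (4 * (2 * K * e1 + e2))
    (by linarith) he0 (by positivity) (hZ_of_G1 (NV_net d) h1)
    (fun E δ hE hE0 hQ v => hL_of_G23 (NV_net d) (NM_net d) hK hu h2 h3 E δ hE hE0 hQ v)
  set S := Real.sqrt ((n d : ℝ) / d) • (T - 1)
  have hTh : (T - 1).IsHermitian := hT.1.1.sub isHermitian_one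
  have hsm : ∀ (r : ℝ) (A : Matrix (Fin d) (Fin d) ℝ), A.IsHermitian → (r • A).IsHermitian := fun r A hA => by
    unfold IsHermitian at hA ⊢
    rw [conjTranspose_smul, hA]; simp
  have hvv : ∀ {N : ℕ} (y : Fin N → Fin d → ℝ), (∑ j, vecMulVec (y j) (y j)).IsHermitian := fun y => by
    ext i k
    simp [Matrix.sum_apply, vecMulVec_apply, mul_comm]
  have hSh : S.IsHermitian := hsm _ _ hTh
  have hWh : (Wr (αs n d) (βs n d) x).IsHermitian := (hsm _ _ (hvv x)).sub (hsm _ _ isHermitian_one)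
  have hZh : (Zs (fun j => nrm (x j))).IsHermitian := hsm _ _ ((hsm _ _ (hvv _)).sub isHermitian_one)
  have hSQ : QB S 48 := by
    refine QB_mono (QB_smul t1 _) (le_of_eq ?_)
    rw [hinv, abs_of_pos (inv_pos.2 hs0)]; field_simp; norm_num
  have hSZ : QB (S - Zs (fun j => nrm (x j))) (κ / 2) := by
    intro v
    have ee : v ⬝ᵥ (S - Zs (fun j => nrm (x j))) *ᵥ v = s⁻¹ * (v ⬝ᵥ (T - 1) *ᵥ v - ((d : ℝ) / (n d) * ∑ j, (nrm (x j) ⬝ᵥ v) ^ 2 - v ⬝ᵥ v)) := by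
      simp only [S, Zs]
      have hb := bil_sum (fun _ => (1 : ℝ)) (fun j => nrm (x j)) v v
      simp only [one_smul, one_mul, ← sq] at hb
      rw [← hinv]
      generalize T - 1 = D
      simp only [sub_mulVec, dotProduct_sub, smul_mulVec, dotProduct_smul, hb, one_mulVec, smul_eq_mul]
      ring
    rw [ee, abs_mul, abs_of_pos (inv_pos.2 hs0), inv_mul_le_iff₀ hs0]
    refine (t2 v).trans ?_
    rw [show s * (κ / 2 * (v ⬝ᵥ v)) = s * (κ / 2) * (v ⬝ᵥ v) by ring]
    refine mul_le_mul_of_nonneg_right ?_ (dp_self_nonneg v)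
    nlinarith
  have hF1 := frob_QB _ (hSh.sub hZh) hSZ
  have hΔ : 1 / (d : ℝ) * frob (S - Wr (αs n d) (βs n d) x) ≤ κ ^ 2 := by
    have hh := frob_sub (S - Zs (fun j => nrm (x j))) (Wr (αs n d) (βs n d) x - Zs (fun j => nrm (x j)))
    rw [sub_sub_sub_cancel_right] at hh
    have h6 : 1 / (d : ℝ) * frob (S - Zs (fun j => nrm (x j))) ≤ κ ^ 2 / 4 := by
      rw [one_div_mul_eq_div, div_le_iff₀ hd']
      linarith
    have h7 := mul_le_mul_of_nonneg_left hh (show 0 ≤ 1 / (d : ℝ) by positivity)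
    have h8 : 1 / (d : ℝ) * frob (Wr (αs n d) (βs n d) x - Zs (fun j => nrm (x j))) ≤ κ ^ 2 / 4 := h4
    linarith
  exact trace_pow_compare hd S _ hSh hWh (by norm_num) hSQ hκ hΔ (fun k => Real.sqrt (cc (2 * k) + 1)) (fun k => Real.sqrt_nonneg _) m h5


lemma tu {n : ℕ → ℕ} {A B : ∀ d, Set (Fin (n d) → Fin d → ℝ)} (hA : Tendsto (fun d => (gnd (n d) d).real (A d)) atTop (nhds 0))
    (hB : Tendsto (fun d => (gnd (n d) d).real (B d)) atTop (nhds 0)) :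
    Tendsto (fun d => (gnd (n d) d).real (A d ∪ B d)) atTop (nhds 0) := by
  have := hA.add hB
  rw [add_zero] at this
  exact squeeze_zero (fun _ => measureReal_nonneg) (fun d => measureReal_union_le _ _) this

lemma tbu {n : ℕ → ℕ} (s : Finset ℕ) {A : ℕ → ∀ d, Set (Fin (n d) → Fin d → ℝ)}
    (hA : ∀ k, Tendsto (fun d => (gnd (n d) d).real (A k d)) atTop (nhds 0)) :
    Tendsto (fun d => (gnd (n d) d).real (⋃ k ∈ s, A k d)) atTop (nhds 0) := by
  have := tendsto_finsetSum s (fun k _ => hA k)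
  rw [Finset.sum_const_zero] at this
  exact squeeze_zero (fun _ => measureReal_nonneg) (fun d => measureReal_biUnion_finset_le _ _) this

lemma params {ε : ℝ} (hε : 0 < ε) : ∃ K e1 : ℝ, 0 ≤ K ∧ 0 < e1 ∧ e1 ≤ 1 ∧ 0 ≤ 4 * (2 * K * e1 + 16 * Real.exp (-K / 4)) ∧
    4 * (2 * K * e1 + 16 * Real.exp (-K / 4)) ≤ ε := by
  have h : Tendsto (fun K : ℝ => Real.exp (-K / 4)) atTop (nhds 0) := by
    refine Real.tendsto_exp_atBot.comp ?_
    have : Tendsto (fun K : ℝ => -(K / 4)) atTop atBot := tendsto_neg_atTop_atBot.comp (tendsto_id.atTop_div_const (by norm_num))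
    refine this.congr fun K => by ring
  have h2 := h.eventually (gt_mem_nhds (show (0 : ℝ) < ε / 128 by positivity))
  obtain ⟨K, hK1, hK2⟩ := (h2.and (eventually_ge_atTop 0)).exists
  have hp := Real.exp_pos (-K / 4)
  refine ⟨K, min 1 (ε / (16 * (K + 1))), hK2, by positivity, min_le_left _ _, by positivity, ?_⟩
  have h3 : min 1 (ε / (16 * (K + 1))) ≤ ε / (16 * (K + 1)) := min_le_right _ _
  rw [le_div_iff₀ (by positivity)] at h3
  have h4 : 0 < min 1 (ε / (16 * (K + 1))) := by positivity
  nlinarith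

lemma cc_nonneg (k : ℕ) : 0 ≤ cc k := by
  unfold cc; split_ifs <;> positivity

lemma law_eq {Ωs : Type*} [MeasurableSpace Ωs] (P : Measure Ωs) [IsProbabilityMeasure P] {n d : ℕ}
    (X : Fin n → Ωs → Fin d → ℝ) (hmeas : ∀ j, Measurable (X j)) (hindep : iIndepFun X P)
    (hgauss : ∀ j, Measure.map (X j) P = Measure.pi fun _ : Fin d => gaussianReal 0 1) :
    Measure.map (fun ω j => X j ω) P = gnd n d := by
  rw [(iIndepFun_iff_map_fun_eq_pi_map fun j => (hmeas j).aemeasurable).1 hindep]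
  simp only [hgauss]

lemma ae_ne_zero {Ωs : Type*} [MeasurableSpace Ωs] (P : Measure Ωs) {n d : ℕ} (hd : 0 < d)
    (X : Fin n → Ωs → Fin d → ℝ) (hmeas : ∀ j, Measurable (X j))
    (hgauss : ∀ j, Measure.map (X j) P = Measure.pi fun _ : Fin d => gaussianReal 0 1) :
    ∀ᵐ ω ∂P, ∀ j, X j ω ≠ 0 := by
  rw [ae_all_iff]
  intro j
  have h : Measure.map (X j) P {0} = 0 := by
    rw [hgauss, Measure.pi_singleton]
    refine Finset.prod_eq_zero (Finset.mem_univ (⟨0, hd⟩ : Fin d)) ?_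
    have := nullSingletonClass_gaussianReal (μ := 0) (v := 1) one_ne_zero
    exact measure_singleton _
  rw [Measure.map_apply (hmeas j) (measurableSet_singleton 0)] at h
  rw [ae_iff]
  simp only [ne_eq, not_not]
  exact h

theorem main_prob
    {Ωs : Type*} [MeasurableSpace Ωs] (P : Measure Ωs) [IsProbabilityMeasure P]
    (n : ℕ → ℕ) (hn : Tendsto n atTop atTop)
    (hdn : Tendsto (fun d : ℕ => (d : ℝ) / (n d : ℝ)) atTop (nhds 0))
    (X : ∀ d : ℕ, Fin (n d) → Ωs → Fin d → ℝ)
    (hmeas : ∀ d j, Measurable (X d j))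
    (hindep : ∀ d, iIndepFun (X d) P)
    (hgauss : ∀ d j,
      Measure.map (X d j) P = Measure.pi fun _ : Fin d => gaussianReal 0 1)
    (T : ∀ d : ℕ, Ωs → Matrix (Fin d) (Fin d) ℝ)
    (hT : ∀ d, ∀ᵐ ω ∂P, IsTyler (fun j => X d j ω) (T d ω))
    (m : ℕ) (ε : ℝ) (hε : 0 < ε) :
      Tendsto (fun d : ℕ =>
          P {ω | |(1 / (d : ℝ)) * ((Real.sqrt ((n d : ℝ) / d) • (T d ω - 1)) ^ m).trace - cc m| > ε})
        atTop (nhds 0) := by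
  set CM : ℝ := ∑ i ∈ Finset.range m, 48 ^ i * Real.sqrt (cc (2 * (m - 1 - i)) + 1) with hCM
  have hCM0 : 0 ≤ CM := Finset.sum_nonneg fun i _ => by positivity
  set κ : ℝ := ε / (2 * (CM + 1)) with hκ
  have hκ0 : 0 < κ := by positivity
  have hκC : κ * CM ≤ ε / 2 := by
    have : κ * (CM + 1) = ε / 2 := by rw [hκ]; field_simp
    nlinarith
  obtain ⟨K, e1, hK, he1, he1', hp0, hp1⟩ := params (ε := min (κ / 200) (1 / 16)) (by positivity)
  have hB := tu (tu (tu (T1 hn hdn) (T2 hn hdn K)) (tu (T3 hn hdn he1 he1') (T4 hn (η := κ ^ 2 / 4) (by positivity))))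
    (tu (tbu (Finset.range m) (fun k => G5_tendsto hn hdn (2 * k) (η := 1) one_pos)) (G5_tendsto hn hdn m (η := ε / 2) (by positivity)))
  have hB' := ENNReal.tendsto_ofReal hB
  rw [ENNReal.ofReal_zero] at hB'
  refine tendsto_of_tendsto_of_tendsto_of_le_of_le' tendsto_const_nhds hB' (Eventually.of_forall fun _ => zero_le) ?_
  filter_upwards [ev_dn hn hdn (a := min (1 / 1000) (κ / 20000)) (by positivity)] with d ⟨h1, h2, h3, h4⟩
  rw [← law_eq P (X d) (hmeas d) (hindep d) (hgauss d)]
  have hpm : IsProbabilityMeasure (Measure.map (fun ω j => X d j ω) P) :=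
    Measure.isProbabilityMeasure_map (measurable_pi_lambda _ fun j => hmeas d j).aemeasurable
  rw [ofReal_measureReal]
  refine le_trans ?_ (Measure.le_map_apply (measurable_pi_lambda _ fun j => hmeas d j).aemeasurable _)
  refine measure_mono_ae ?_
  filter_upwards [hT d, ae_ne_zero P h2 (X d) (hmeas d) (hgauss d)] with ω hTω hx hω
  by_contra hc
  have hω' : |(1 / (d : ℝ)) * ((Real.sqrt ((n d : ℝ) / d) • (T d ω - 1)) ^ m).trace - cc m| > ε := hω
  have hc' : (fun j => X d j ω) ∉ _ := hc
  simp only [Set.mem_union, Set.mem_setOf_eq, not_or, not_not, Set.mem_iUnion, not_exists, not_le, Finset.mem_range] at hc'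
  obtain ⟨⟨⟨g1, g2⟩, g3, g4⟩, g5, g6⟩ := hc'
  have hD := det_main h2 h1 hx hTω hK hp0 hp1 (min_le_right _ _) hκ0.le (min_le_left _ _) (h4.trans (min_le_left _ _))
    (h4.trans (min_le_right _ _)) g1 g2 g3 g4.le m (fun k hk => by
      rw [Real.sq_sqrt (by have := cc_nonneg (2 * k); linarith)]
      have := (abs_lt.1 (g5 k hk)).2
      linarith)
  have := abs_sub_le ((1 / (d : ℝ)) * ((Real.sqrt ((n d : ℝ) / d) • (T d ω - 1)) ^ m).trace)
    (1 / (d : ℝ) * (Wr (αs n d) (βs n d) (fun j => X d j ω) ^ m).trace) (cc m)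
  linarith

/-- **Moment convergence for Tyler's M-estimator:** for an i.i.d. standard normal sample
`N_d(0, I)` with `n(d) → ∞` and `d/n(d) → 0`, and `T*_d = √(n(d)/d)·(T_d − I)`, for
every fixed integer `m ≥ 1` the normalized trace `(1/d)·tr((T*_d)^m)` converges in
probability to the `m`-th moment `∫ x^m dw(x)` of the semicircle law; moreover this
moment equals the Catalan number `C_{m/2}` for even `m` and `0` for odd `m`. -/
theorem trace_pow_tylerStar_tendsto_semicircle_moment
    {Ωs : Type*} [MeasurableSpace Ωs] (P : Measure Ωs) [IsProbabilityMeasure P]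
    (n : ℕ → ℕ) (hn : Tendsto n atTop atTop)
    (hdn : Tendsto (fun d : ℕ => (d : ℝ) / (n d : ℝ)) atTop (nhds 0))
    (X : ∀ d : ℕ, Fin (n d) → Ωs → Fin d → ℝ)
    (hmeas : ∀ d j, Measurable (X d j))
    (hindep : ∀ d, iIndepFun (X d) P)
    (hgauss : ∀ d j,
      Measure.map (X d j) P = Measure.pi fun _ : Fin d => gaussianReal 0 1)
    (T : ∀ d : ℕ, Ωs → Matrix (Fin d) (Fin d) ℝ)
    (hT : ∀ d, ∀ᵐ ω ∂P, IsTyler (fun j => X d j ω) (T d ω))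
    (m : ℕ) (hm : 1 ≤ m) :
    (∀ ε > (0 : ℝ),
      Tendsto (fun d : ℕ =>
          P {ω | |(1 / (d : ℝ)) * ((Real.sqrt ((n d : ℝ) / d) • (T d ω - 1)) ^ m).trace -
                 ∫ x : ℝ, x ^ m * semicircleDensity x| > ε})
        atTop (nhds 0)) ∧
    (∫ x : ℝ, x ^ m * semicircleDensity x) =
      if Even m then (catalan (m / 2) : ℝ) else 0 := by
  refine ⟨fun ε hε => ?_, sc_moment m⟩
  have h : (∫ x : ℝ, x ^ m * semicircleDensity x) = cc m := sc_moment m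
  rw [h]
  exact main_prob P n hn hdn X hmeas hindep hgauss T hT m ε hε
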